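/- Let N ≥ 1 be an odd integer, let q ≥ 1 be an integer, let χ be an even primitive Dirichlet character modulo q, and let α, β > 0 satisfy α·β^N = π^{N+1}. Then for every nonzero integer m, α^{−2Nm/(N+1)}·( Σ_{r=1}^{q} Σ_{n=1}^{∞} χ(r)·e^{−(r/q)(2n)^N α} / ( n^{2Nm+1}·(1 − e^{−(2n)^N α}) ) − ζ(2Nm+1)·L(0,χ) ) = ((−1)^m · β^{−2Nm/(N+1)} · 2^{2m(N−1)} / N) · ( (q/(2 G(conj(χ)))) · L(2m+1, conj(χ)) + (−1)^{(N+3)/2} · G(χ) · Σ_{j=−(N−1)/2}^{(N−1)/2} (−1)^j · Σ_{n=1}^{∞} conj(χ)(n) / ( n^{2m+1}·( exp((2n)^{1/N} β e^{−iπ j/N}) − 1 ) ) ) + (−1)^{m+(N+3)/2} · 2^{2Nm} · Σ_{j=1}^{⌊m+(N+1)/(2N)⌋} ((−1)^{j+1}/q^{2j−1}) · (L(1−2j, χ)/(2j−1)!) · (B_{2N(m−j)+N+1}/(2N(m−j)+N+1)!) · α^{2j/(N+1)} · β^{N + 2N²(m−j)/(N+1)} + R, where R = (−1)^{m+(N+3)/2}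 · 2^{2Nm} · (B_{2Nm+N+1}/(2Nm+N+1)!) · β^{N + 2N² m/(N+1)} if q = 1, and R = 0 if q > 1. -/

import Mathlib

/-- The Gauss sum `G(χ) = ∑_{r=1}^{q} χ(r) e^{2πi r/q}`. -/
noncomputable def gaussSum' {q : ℕ} (χ : DirichletCharacter ℂ q) : ℂ :=
  ∑ r ∈ Finset.Icc 1 q, χ (r : ZMod q) * Complex.exp (2 * Real.pi * Complex.I * r / q)

/-- The complex conjugate of a Dirichlet character. -/
noncomputable def conjChar {q : ℕ} (χ : DirichletCharacter ℂ q) : DirichletCharacter ℂ q :=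
  χ.ringHomComp (starRingEnd ℂ)

/-- `B_k / k!` where `B_k` is the `k`-th Bernoulli number, interpreted as `0` for `k < 0`. -/
noncomputable def bernOverFact (k : ℤ) : ℚ :=
  if 0 ≤ k then bernoulli k.toNat / (Nat.factorial k.toNat) else 0

section

open Real Set Filter Topology

lemma hasSum_congr_fun {ι E : Type*} [AddCommMonoid E] [TopologicalSpace E] {f g : ι → E} {a : E}
    (h : ∀ i, f i = g i) : HasSum f a ↔ HasSum g a := by
  rw [funext h]

/-- The kernel `(e^{-ux} + e^{-(1-u)x}) / (1 - e^{-x})`. -/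
noncomputable def symKer (x u : ℝ) : ℝ :=
  (rexp (-(u * x)) + rexp (-((1 - u) * x))) / (1 - rexp (-x))

lemma one_sub_exp_neg_pos {x : ℝ} (hx : 0 < x) : 0 < 1 - rexp (-x) := by
  have : rexp (-x) < 1 := by rw [Real.exp_lt_one_iff]; linarith
  linarith

lemma symKer_one (x : ℝ) : symKer x 1 = symKer x 0 := by
  simp [symKer, add_comm]

lemma fourierCoeffOn_symKer {x : ℝ} (hx : 0 < x) (n : ℤ) :
    fourierCoeffOn zero_lt_one (fun u : ℝ => (symKer x u : ℂ)) n
      = 2 * x / (x ^ 2 + (2 * π * n) ^ 2) := by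
  have hre1 : (-(x : ℂ) - 2 * π * Complex.I * n) ≠ 0 := by
    intro h
    have := congrArg Complex.re h
    simp at this; linarith
  have hre2 : ((x : ℂ) - 2 * π * Complex.I * n) ≠ 0 := by
    intro h
    have := congrArg Complex.re h
    simp at this; linarith
  have hre3 : ((x : ℂ) + 2 * π * Complex.I * n) ≠ 0 := by
    intro h
    have := congrArg Complex.re h
    simp at this; linarith
  have hd : (1 - Complex.exp (-x) : ℂ) ≠ 0 := by
    have := (one_sub_exp_neg_pos hx).ne'
    exact_mod_cast this
  have hden : (x ^ 2 + (2 * π * n) ^ 2 : ℂ) ≠ 0 := by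
    have : (x ^ 2 + (2 * π * n) ^ 2 : ℝ) ≠ 0 := by positivity
    exact_mod_cast this
  have hn : Complex.exp (-(2 * π * Complex.I * n)) = 1 := by
    rw [Complex.exp_eq_one_iff]
    exact ⟨-n, by push_cast; ring⟩
  rw [fourierCoeffOn_eq_integral]
  have key : ∀ u : ℝ, fourier (-n) (u : AddCircle (1 - 0 : ℝ)) • (symKer x u : ℂ)
      = (1 - Complex.exp (-x))⁻¹ * Complex.exp ((-(x : ℂ) - 2 * π * Complex.I * n) * u) +
        (1 - Complex.exp (-x))⁻¹ * Complex.exp (-x) *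
          Complex.exp (((x : ℂ) - 2 * π * Complex.I * n) * u) := by
    intro u
    rw [fourier_coe_apply, symKer]
    push_cast
    have k1 : Complex.exp (2 * π * Complex.I * ((-n : ℤ) : ℂ) * u / ((1 - 0 : ℝ) : ℂ)) *
        Complex.exp (-(u * x)) = Complex.exp ((-(x : ℂ) - 2 * π * Complex.I * n) * u) := by
      rw [← Complex.exp_add]; congr 1; push_cast; ring
    have k2 : Complex.exp (2 * π * Complex.I * ((-n : ℤ) : ℂ) * u / ((1 - 0 : ℝ) : ℂ)) *
        Complex.exp (-((1 - u) * x)) = Complex.exp (-x) *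
          Complex.exp (((x : ℂ) - 2 * π * Complex.I * n) * u) := by
      rw [← Complex.exp_add, ← Complex.exp_add]; congr 1; push_cast; ring
    push_cast at k1 k2
    rw [smul_eq_mul, mul_assoc (1 - Complex.exp (-(x : ℂ)))⁻¹, ← k1, ← k2]
    ring
  simp_rw [key]
  rw [intervalIntegral.integral_add (Continuous.intervalIntegrable (by fun_prop) _ _)
    (Continuous.intervalIntegrable (by fun_prop) _ _), intervalIntegral.integral_const_mul,
    intervalIntegral.integral_const_mul, integral_exp_mul_complex hre1,
    integral_exp_mul_complex hre2]
  have e1 : Complex.exp ((-(x : ℂ) - 2 * π * Complex.I * n) * (1 : ℝ)) = Complex.exp (-x) := by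
    rw [Complex.ofReal_one, mul_one, sub_eq_add_neg, Complex.exp_add, hn, mul_one]
  have e2 : Complex.exp (((x : ℂ) - 2 * π * Complex.I * n) * (1 : ℝ)) = Complex.exp x := by
    rw [Complex.ofReal_one, mul_one, sub_eq_add_neg, Complex.exp_add, hn, mul_one]
  have e3 : Complex.exp (-x : ℂ) * Complex.exp x = 1 := by
    rw [← Complex.exp_add]; simp
  rw [e1, e2]
  simp only [Complex.ofReal_zero, mul_zero, Complex.exp_zero]
  have : (1 - Complex.exp (-x))⁻¹ * ((Complex.exp (-x) - 1) /
      (-(x : ℂ) - 2 * π * Complex.I * n)) +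
      (1 - Complex.exp (-x))⁻¹ * Complex.exp (-x) * ((Complex.exp x - 1) /
      ((x : ℂ) - 2 * π * Complex.I * n)) =
      1 / ((x : ℂ) + 2 * π * Complex.I * n) + 1 / ((x : ℂ) - 2 * π * Complex.I * n) := by
    have e4 : Complex.exp (-x : ℂ) * (Complex.exp x - 1) = 1 - Complex.exp (-x) := by
      rw [mul_sub, e3, mul_one]
    rw [mul_assoc _ (Complex.exp (-x : ℂ)), ← mul_div_assoc (Complex.exp (-x : ℂ)), e4,
      show (-(x : ℂ) - 2 * π * Complex.I * n) = -((x : ℂ) + 2 * π * Complex.I * n) by ring]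
    field_simp
    ring
  rw [this]
  simp only [sub_zero, div_one, one_smul]
  rw [div_add_div _ _ hre3 hre2, div_eq_div_iff (mul_ne_zero hre3 hre2) hden]
  linear_combination (2 * x * (2 * π * n) ^ 2 : ℂ) * Complex.I_sq

lemma hasSum_int_symKer {x : ℝ} (hx : 0 < x) {u : ℝ} (hu : u ∈ Ico (0 : ℝ) 1) :
    HasSum (fun n : ℤ => (2 * x / (x ^ 2 + (2 * π * n) ^ 2) : ℂ) *
      Complex.exp (2 * π * Complex.I * n * u)) (symKer x u : ℂ) := by
  let B : C(UnitAddCircle, ℂ) :=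
    ContinuousMap.mk (AddCircle.liftIco 1 0 (fun u : ℝ => (symKer x u : ℂ)))
      (AddCircle.liftIco_zero_continuous (by simp [symKer, add_comm])
        (by
          apply Continuous.continuousOn
          unfold symKer
          fun_prop))
  have hc : fourierCoeff B = fun n : ℤ => (2 * x / (x ^ 2 + (2 * π * n) ^ 2) : ℂ) := by
    ext n
    have := fourierCoeff_liftIco_eq (T := 1) (a := 0) (fun u : ℝ => (symKer x u : ℂ)) n
    have h2 := fourierCoeffOn_symKer hx n
    rw [← h2]
    refine this.trans ?_
    congr 1
    simp
  have hs : Summable (fourierCoeff B) := by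
    rw [hc]
    have h0 : Summable fun n : ℤ => (2 * x) * (1 / (n : ℝ) ^ 2) :=
      (Real.summable_one_div_int_pow.mpr (by norm_num)).mul_left _
    refine Summable.of_norm_bounded_eventually h0 ?_
    rw [Filter.eventually_cofinite]
    refine (Set.finite_singleton (0 : ℤ)).subset fun n hn => ?_
    by_contra h
    simp only [mem_singleton_iff] at h
    apply hn
    have hnorm : ‖(2 * x / (x ^ 2 + (2 * π * n) ^ 2) : ℂ)‖ =
        2 * x / (x ^ 2 + (2 * π * n) ^ 2) := by
      rw [show (2 * x / (x ^ 2 + (2 * π * n) ^ 2) : ℂ) =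
        ((2 * x / (x ^ 2 + (2 * π * n) ^ 2) : ℝ) : ℂ) by push_cast; ring, Complex.norm_real,
        Real.norm_of_nonneg (by positivity)]
    rw [hnorm, div_eq_mul_one_div]
    have hn0 : (0 : ℝ) < (n : ℝ) ^ 2 := by positivity
    gcongr
    have : 1 ≤ (2 * π) ^ 2 := by nlinarith [Real.pi_gt_three]
    nlinarith [sq_nonneg x]
  have := has_pointwise_sum_fourier_series_of_summable hs (u : UnitAddCircle)
  rw [hc] at this
  convert this using 1
  · ext n
    rw [fourier_coe_apply, smul_eq_mul]
    simp
  · exact (AddCircle.liftIco_zero_coe_apply (f := fun u : ℝ => (symKer x u : ℂ)) hu).symm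

lemma hasSum_symKer_of_lt {x : ℝ} (hx : 0 < x) {u : ℝ} (hu : u ∈ Ico (0 : ℝ) 1) :
    HasSum (fun k : ℕ => 4 * x * cos (2 * π * (k + 1) * u) / (x ^ 2 + (2 * π * (k + 1)) ^ 2))
      (symKer x u - 2 / x) := by
  have h := (hasSum_int_symKer hx hu).nat_add_neg
  rw [← hasSum_nat_add_iff' 1] at h
  rw [← Complex.hasSum_ofReal]
  have hx0 : (x : ℂ) ≠ 0 := by exact_mod_cast hx.ne'
  have hv : ((symKer x u - 2 / x : ℝ) : ℂ) = (symKer x u : ℂ) +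
      2 * x / (x ^ 2 + (2 * π * ((0 : ℤ) : ℂ)) ^ 2) *
        Complex.exp (2 * π * Complex.I * ((0 : ℤ) : ℂ) * u) -
      ∑ i ∈ Finset.range 1, ((2 * x / (x ^ 2 + (2 * π * ((i : ℤ) : ℂ)) ^ 2) *
        Complex.exp (2 * π * Complex.I * ((i : ℤ) : ℂ) * u)) +
        (2 * x / (x ^ 2 + (2 * π * ((-(i : ℤ) : ℤ) : ℂ)) ^ 2) *
        Complex.exp (2 * π * Complex.I * ((-(i : ℤ) : ℤ) : ℂ) * u))) := by
    simp
    field_simp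
  rw [hv]
  refine (hasSum_congr_fun fun k => ?_).mpr h
  have hc : Complex.cos (2 * π * (k + 1) * u) =
      (Complex.exp (2 * π * Complex.I * (k + 1) * u) +
        Complex.exp (-(2 * π * Complex.I * (k + 1) * u))) / 2 := by
    rw [Complex.cos]
    ring_nf
  push_cast
  rw [hc, show 2 * π * Complex.I * -((k : ℂ) + 1) * u = -(2 * π * Complex.I * (k + 1) * u) by ring]
  ring_nf

/-- Partial fraction expansion of `symKer`. -/
lemma hasSum_symKer {x : ℝ} (hx : 0 < x) {u : ℝ} (hu : u ∈ Icc (0 : ℝ) 1) :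
    HasSum (fun k : ℕ => 4 * x * cos (2 * π * (k + 1) * u) / (x ^ 2 + (2 * π * (k + 1)) ^ 2))
      (symKer x u - 2 / x) := by
  rcases eq_or_lt_of_le hu.2 with rfl | h1
  · have h0 := hasSum_symKer_of_lt hx (u := 0) (by simp)
    rw [symKer_one]
    refine (hasSum_congr_fun fun k => ?_).mpr h0
    have : cos (2 * π * (k + 1) * 1) = 1 := by
      rw [show 2 * π * ((k : ℝ) + 1) * 1 = ((k + 1 : ℕ) : ℝ) * (2 * π) by push_cast; ring]
      exact Real.cos_nat_mul_two_pi _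
    rw [this]; simp
  · exact hasSum_symKer_of_lt hx ⟨hu.1, h1⟩

/-- The unit complex number `e^{-πij/(2H+1)}`. -/
noncomputable def rot (H : ℕ) (j : ℤ) : ℂ :=
  Complex.exp (-(π * Complex.I * j) / ((2 * H + 1 : ℕ) : ℂ))

/-- The alternating sum of `1 / (e^{2πb ω} - 1)` over the unit complex numbers `ω = rot H j`. -/
noncomputable def planckSum (H : ℕ) (b : ℝ) : ℂ :=
  ∑ j ∈ Finset.Icc (-(H : ℤ)) H, (-1 : ℂ) ^ j / (Complex.exp (2 * π * b * rot H j) - 1)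

lemma rot_ne_zero (H : ℕ) (j : ℤ) : rot H j ≠ 0 := Complex.exp_ne_zero _

lemma rot_eq_zpow (H : ℕ) (j : ℤ) : rot H j = rot H 1 ^ j := by
  rw [rot, rot, ← Complex.exp_int_mul]
  congr 1
  push_cast
  ring

lemma rot_one_pow (H : ℕ) : rot H 1 ^ (2 * H + 1) = -1 := by
  rw [rot, ← Complex.exp_nat_mul, mul_div_cancel₀ _ (by exact_mod_cast (by omega : 2 * H + 1 ≠ 0))]
  rw [Complex.exp_neg, Int.cast_one, mul_one, Complex.exp_pi_mul_I]
  norm_num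

lemma cos_le_re_rot {H : ℕ} {j : ℤ} (hj : j ∈ Finset.Icc (-(H : ℤ)) H) :
    cos (π * H / (2 * H + 1)) ≤ (rot H j).re := by
  rw [Finset.mem_Icc] at hj
  have h1 : (rot H j).re = cos (π * j / (2 * H + 1)) := by
    rw [rot, ← Real.cos_neg]
    have : (-(π * Complex.I * j) / ((2 * H + 1 : ℕ) : ℂ)) =
      ((-(π * j / (2 * H + 1)) : ℝ) : ℂ) * Complex.I := by
      push_cast; ring
    rw [this, Complex.exp_ofReal_mul_I_re]
  rw [h1, ← Real.cos_abs (π * j / (2 * H + 1))]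
  have hH : |(j : ℝ)| ≤ H := by
    rw [abs_le]; exact ⟨by exact_mod_cast hj.1, by exact_mod_cast hj.2⟩
  apply Real.cos_le_cos_of_nonneg_of_le_pi (abs_nonneg _)
  · rw [div_le_iff₀ (by positivity)]
    nlinarith [Real.pi_pos, (Nat.cast_nonneg H : (0 : ℝ) ≤ H)]
  · rw [abs_div, abs_mul, abs_of_pos Real.pi_pos, abs_of_pos (by positivity : (0:ℝ) < 2 * H + 1)]
    gcongr

lemma cos_rot_pos (H : ℕ) : 0 < cos (π * H / (2 * H + 1)) := by
  apply Real.cos_pos_of_mem_Ioo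
  constructor
  · have : 0 ≤ π * H / (2 * H + 1) := by positivity
    linarith [Real.pi_pos]
  · rw [div_lt_iff₀ (by positivity)]
    nlinarith [Real.pi_pos]

lemma re_rot_pos {H : ℕ} {j : ℤ} (hj : j ∈ Finset.Icc (-(H : ℤ)) H) : 0 < (rot H j).re :=
  (cos_rot_pos H).trans_le (cos_le_re_rot hj)

lemma sum_Icc_neg_eq_sum_range {E : Type*} [AddCommMonoid E] (H : ℕ) (f : ℤ → E) :
    ∑ j ∈ Finset.Icc (-(H : ℤ)) H, f j = ∑ k ∈ Finset.range (2 * H + 1), f (k - H) := by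
  symm
  refine Finset.sum_bij (fun k _ => (k : ℤ) - H) ?_ ?_ ?_ ?_
  · intro k hk
    rw [Finset.mem_range] at hk
    rw [Finset.mem_Icc]
    omega
  · intro a _ b _ h
    simpa using h
  · intro j hj
    rw [Finset.mem_Icc] at hj
    exact ⟨(j + H).toNat, by rw [Finset.mem_range]; omega, by omega⟩
  · intros; rfl

lemma sum_Icc_zpow_eq_zero {H : ℕ} {ξ : ℂ} (h : ξ ^ (2 * H + 1) = 1) (h1 : ξ ≠ 1) :
    ∑ j ∈ Finset.Icc (-(H : ℤ)) H, ξ ^ j = 0 := by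
  have h0 : ξ ≠ 0 := by rintro rfl; simp at h
  rw [sum_Icc_neg_eq_sum_range]
  simp_rw [zpow_sub₀ h0, zpow_natCast, ← Finset.sum_div]
  rw [geom_sum_eq h1, h]
  simp

lemma card_Icc_neg (H : ℕ) : (Finset.Icc (-(H : ℤ)) H).card = 2 * H + 1 := by
  rw [Int.card_Icc]; omega

lemma sum_Icc_neg_one_zpow (H : ℕ) :
    ∑ j ∈ Finset.Icc (-(H : ℤ)) H, (-1 : ℂ) ^ j = (-1) ^ H := by
  rw [sum_Icc_neg_eq_sum_range]
  have h0 : (-1 : ℂ) ≠ 0 := by norm_num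
  simp_rw [zpow_sub₀ h0, zpow_natCast, ← Finset.sum_div]
  rw [geom_sum_eq (by norm_num)]
  have : (-1 : ℂ) ^ (2 * H + 1) = -1 := by rw [pow_succ, pow_mul]; simp
  rw [this]
  rcases neg_one_pow_eq_or ℂ H with h | h <;> rw [h] <;> norm_num

lemma neg_one_zpow_mul_rot (H : ℕ) (j : ℤ) :
    (-1 : ℂ) ^ j * rot H j = ((rot H 1 ^ 2) ^ (H + 1)) ^ j := by
  rw [rot_eq_zpow H j, ← rot_one_pow H, ← mul_zpow, ← pow_succ, ← pow_mul]
  congr 2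

lemma rot_sq_pow (H : ℕ) : (rot H 1 ^ 2) ^ (2 * H + 1) = 1 := by
  rw [← pow_mul, mul_comm, pow_mul, rot_one_pow]; norm_num

lemma rot_sq_pow_eq_one_iff (H d : ℕ) : (rot H 1 ^ 2) ^ d = 1 ↔ 2 * H + 1 ∣ d := by
  have hp : IsPrimitiveRoot (rot H 1 ^ 2) (2 * H + 1) := by
    have := (Complex.isPrimitiveRoot_exp (2 * H + 1) (by omega)).inv
    have e : rot H 1 ^ 2 = (Complex.exp (2 * π * Complex.I / ((2 * H + 1 : ℕ) : ℂ)))⁻¹ := by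
      rw [rot, ← Complex.exp_nat_mul, ← Complex.exp_neg]
      congr 1
      push_cast
      ring
    rw [e]
    exact this
  exact hp.pow_eq_one_iff_dvd d

lemma sum_neg_one_zpow_div_rot (H : ℕ) :
    ∑ j ∈ Finset.Icc (-(H : ℤ)) H, (-1 : ℂ) ^ j / rot H j = if H = 0 then 1 else 0 := by
  have key : ∀ j : ℤ, (-1 : ℂ) ^ j / rot H j = ((rot H 1 ^ 2) ^ H) ^ j := by
    intro j
    rw [div_eq_iff (rot_ne_zero H j), rot_eq_zpow H j, ← rot_one_pow H, ← mul_zpow]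
    congr 1
    rw [← pow_mul, pow_succ]
  simp_rw [key]
  split_ifs with h
  · subst h; simp
  · apply sum_Icc_zpow_eq_zero
    · rw [← pow_mul, mul_comm, pow_mul, rot_sq_pow, one_pow]
    · rw [Ne, rot_sq_pow_eq_one_iff]
      intro hd
      have := Nat.le_of_dvd (by omega) hd
      omega

/-- Partial fractions of `X^H / (X^(2H+1) + Y^(2H+1))` in `X`. -/
lemma sum_rot_div {H : ℕ} {X b : ℝ} (hX : 0 < X) (hb : 0 < b)
    (hne : ∀ j ∈ Finset.Icc (-(H : ℤ)) H, (X : ℂ) + (b * rot H j) ^ 2 ≠ 0) :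
    ∑ j ∈ Finset.Icc (-(H : ℤ)) H, (-1 : ℂ) ^ j * rot H j / (X + (b * rot H j) ^ 2) =
      (-1) ^ H * (2 * H + 1) * b ^ (2 * H) * X ^ H / (X ^ (2 * H + 1) + (b ^ 2) ^ (2 * H + 1)) := by
  have hD : ((X : ℂ) ^ (2 * H + 1) + ((b : ℂ) ^ 2) ^ (2 * H + 1)) ≠ 0 := by
    have : X ^ (2 * H + 1) + (b ^ 2) ^ (2 * H + 1) ≠ 0 := by positivity
    exact_mod_cast this
  have hodd : Odd (2 * H + 1) := ⟨H, rfl⟩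
  have h1 : ∀ j ∈ Finset.Icc (-(H : ℤ)) H,
      (-1 : ℂ) ^ j * rot H j / (X + (b * rot H j) ^ 2) =
      ∑ i ∈ Finset.range (2 * H + 1), (X ^ i * (-(b : ℂ) ^ 2) ^ (2 * H - i)) *
        ((rot H 1 ^ 2) ^ (H + 1 + (2 * H - i))) ^ j /
        (X ^ (2 * H + 1) + ((b : ℂ) ^ 2) ^ (2 * H + 1)) := by
    intro j hj
    have hg := Commute.geom_sum₂_mul (Commute.all (X : ℂ) (-(b * rot H j) ^ 2)) (2 * H + 1)
    have hr : ((rot H j) ^ 2) ^ (2 * H + 1) = 1 := by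
      rw [← pow_mul, mul_comm, pow_mul, rot_eq_zpow, ← zpow_natCast (rot H 1 ^ j), ← zpow_mul,
        mul_comm, zpow_mul, zpow_natCast, rot_one_pow]
      rcases Int.even_or_odd j with h | h
      · rw [h.neg_one_zpow]; norm_num
      · rw [h.neg_one_zpow]; norm_num
    have hh : (X : ℂ) ^ (2 * H + 1) - (-(b * rot H j) ^ 2) ^ (2 * H + 1) =
        X ^ (2 * H + 1) + (b ^ 2) ^ (2 * H + 1) := by
      rw [hodd.neg_pow, mul_pow, mul_pow, hr]; ring
    rw [hh, sub_neg_eq_add] at hg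
    rw [← Finset.sum_div, div_eq_div_iff (hne j hj) hD, ← hg, ← mul_assoc]
    congr 1
    rw [Finset.mul_sum]
    refine Finset.sum_congr rfl fun i hi => ?_
    rw [neg_one_zpow_mul_rot, pow_add _ (H + 1), mul_zpow, mul_pow, ← neg_mul, mul_pow]
    have : ((rot H j) ^ 2) ^ (2 * H + 1 - 1 - i) = ((rot H 1 ^ 2) ^ (2 * H - i)) ^ j := by
      rw [rot_eq_zpow, ← pow_mul, ← pow_mul, ← zpow_natCast, ← zpow_natCast, ← zpow_mul,
        ← zpow_mul, mul_comm]
      rfl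
    rw [this]
    simp only [Nat.add_sub_cancel]
    generalize ((rot H 1 ^ 2) ^ (H + 1)) ^ j = A
    generalize ((rot H 1 ^ 2) ^ (2 * H - i)) ^ j = B
    ring
  rw [Finset.sum_congr rfl h1, Finset.sum_comm]
  simp_rw [← Finset.sum_div, ← Finset.mul_sum]
  congr 1
  rw [Finset.sum_eq_single H]
  · have : (rot H 1 ^ 2) ^ (H + 1 + (2 * H - H)) = 1 := by
      rw [rot_sq_pow_eq_one_iff]; exact ⟨1, by omega⟩
    rw [this]
    simp only [one_zpow, Finset.sum_const, card_Icc_neg, nsmul_eq_mul, mul_one]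
    rw [show 2 * H - H = H by omega, neg_pow, ← pow_mul]
    push_cast
    ring
  · intro i hi hiH
    rw [sum_Icc_zpow_eq_zero, mul_zero]
    · rw [← pow_mul, mul_comm, pow_mul, rot_sq_pow, one_pow]
    · rw [Ne, rot_sq_pow_eq_one_iff]
      rw [Finset.mem_range] at hi
      rintro ⟨c, hc⟩
      have : c < 2 := by
        by_contra hc2
        push Not at hc2
        have := Nat.mul_le_mul_left (2 * H + 1) hc2
        omega
      interval_cases c <;> omega
  · intro h; simp at h; omega

lemma exp_two_pi_mul_ne_one {z : ℂ} (hz : 0 < z.re) : Complex.exp (2 * π * z) ≠ 1 := by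
  intro h
  have := congrArg norm h
  rw [Complex.norm_exp] at this
  simp at this
  exact hz.ne' this

/-- Mittag-Leffler expansion of the hyperbolic cotangent. -/
lemma hasSum_div_sq_add_sq {z : ℂ} (hz : 0 < z.re) :
    HasSum (fun n : ℕ => z / ((n + 1) ^ 2 + z ^ 2))
      (π / 2 + π / (Complex.exp (2 * π * z) - 1) - 1 / (2 * z)) := by
  have hz0 : z ≠ 0 := by rintro rfl; simp at hz
  have hx : Complex.I * z ∈ Complex.integerComplement := by
    rintro ⟨n, hn⟩
    have := congrArg Complex.im hn
    simp at this
    exact hz.ne this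
  have hs := (summable_cotTerm hx).hasSum
  have h1 : ∑' n : ℕ, cotTerm (Complex.I * z) n = _ := (cot_series_rep' hx).symm
  rw [h1] at hs
  have h2 := hs.mul_left (Complex.I / 2)
  have hE := exp_two_pi_mul_ne_one hz
  have hE0 := Complex.exp_ne_zero (2 * π * z)
  have he : Complex.exp (2 * π * Complex.I * (Complex.I * z)) = (Complex.exp (2 * π * z))⁻¹ := by
    rw [← Complex.exp_neg]; congr 1; linear_combination (2 * π * z) * Complex.I_sq
  have hI := Complex.I_sq
  have hE' : Complex.exp (2 * π * z) - 1 ≠ 0 := sub_ne_zero.mpr hE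
  have hv : Complex.I / 2 * (π * Complex.cot (π * (Complex.I * z)) - 1 / (Complex.I * z)) =
      π / 2 + π / (Complex.exp (2 * π * z) - 1) - 1 / (2 * z) := by
    rw [Complex.cot_pi_eq_exp_ratio, he]
    have hE'' : 1 - (Complex.exp (2 * π * z))⁻¹ ≠ 0 := by
      field_simp; exact div_ne_zero hE' hE0
    field_simp
    ring
  rw [hv] at h2
  refine (hasSum_congr_fun fun n => ?_).mpr h2
  rw [cotTerm_identity hx]
  have hn : ((n : ℂ) + 1) ^ 2 + z ^ 2 ≠ 0 := by
    have h1 := Complex.integerComplement_pow_two_ne_pow_two hx (n + 1 : ℤ)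
    intro h
    apply h1
    push_cast
    linear_combination z ^ 2 * hI - h
  have : (Complex.I * z + (n + 1)) * (Complex.I * z - (n + 1)) = -(((n : ℂ) + 1) ^ 2 + z ^ 2) := by
    linear_combination z ^ 2 * hI
  rw [this, one_div, inv_neg]
  field_simp
  linear_combination hI

/-- Closed form of `∑ n^{N-1} / (n^{2N} + b^{2N})` for odd `N = 2H+1`. -/
lemma hasSum_pow_div_pow_add_pow (H : ℕ) {b : ℝ} (hb : 0 < b) :
    HasSum (fun n : ℕ => ((((n : ℝ) + 1) ^ (2 * H) /
        ((((n : ℝ) + 1) ^ (2 * H + 1)) ^ 2 + (b ^ (2 * H + 1)) ^ 2) : ℝ) : ℂ))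
      (π / (2 * H + 1) / b ^ (2 * H + 1) * (1 / 2 + (-1) ^ H * planckSum H b)
        - if H = 0 then 1 / (2 * (b : ℂ) ^ 2) else 0) := by
  have hb0 : (b : ℂ) ≠ 0 := by exact_mod_cast hb.ne'
  have hN0 : (2 * (H : ℂ) + 1) ≠ 0 := by exact_mod_cast (by omega : 2 * H + 1 ≠ 0)
  have hre : ∀ j ∈ Finset.Icc (-(H : ℤ)) H, 0 < ((b : ℂ) * rot H j).re := by
    intro j hj
    rw [Complex.re_ofReal_mul]
    exact mul_pos hb (re_rot_pos hj)
  have h1 := hasSum_sum (s := Finset.Icc (-(H : ℤ)) H)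
    (fun j hj => (hasSum_div_sq_add_sq (hre j hj)).mul_left ((-1 : ℂ) ^ j))
  have h2 := h1.mul_left ((-1 : ℂ) ^ H / ((2 * H + 1) * b ^ (2 * H + 1)))
  have hsq : ((-1 : ℂ) ^ H) * (-1) ^ H = 1 := by rw [← mul_pow]; simp
  have hv : (-1 : ℂ) ^ H / ((2 * H + 1) * b ^ (2 * H + 1)) *
      ∑ j ∈ Finset.Icc (-(H : ℤ)) H, (-1 : ℂ) ^ j * (π / 2 + π /
        (Complex.exp (2 * π * (b * rot H j)) - 1) - 1 / (2 * (b * rot H j))) =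
      π / (2 * H + 1) / b ^ (2 * H + 1) * (1 / 2 + (-1) ^ H * planckSum H b)
        - if H = 0 then 1 / (2 * (b : ℂ) ^ 2) else 0 := by
    have e1 : ∑ j ∈ Finset.Icc (-(H : ℤ)) H, (-1 : ℂ) ^ j * (π / 2 + π /
        (Complex.exp (2 * π * (b * rot H j)) - 1) - 1 / (2 * (b * rot H j))) =
        π / 2 * (-1) ^ H + π * planckSum H b - 1 / (2 * b) * if H = 0 then 1 else 0 := by
      rw [← sum_neg_one_zpow_div_rot, planckSum, ← sum_Icc_neg_one_zpow, Finset.mul_sum,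
        Finset.mul_sum, Finset.mul_sum, ← Finset.sum_add_distrib, ← Finset.sum_sub_distrib]
      refine Finset.sum_congr rfl fun j _ => ?_
      rw [mul_assoc (2 * (π : ℂ))]
      have := rot_ne_zero H j
      generalize Complex.exp (2 * π * (b * rot H j)) - 1 = D
      field_simp
    rw [e1]
    split_ifs with h
    · subst h
      simp
      field_simp
    · field_simp
      linear_combination (π * b : ℂ) * hsq
  rw [hv] at h2
  refine (hasSum_congr_fun fun n => ?_).mpr h2
  have hX : (0 : ℝ) < ((n : ℝ) + 1) ^ 2 := by positivity
  have hne : ∀ j ∈ Finset.Icc (-(H : ℤ)) H,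
      ((((n : ℝ) + 1) ^ 2 : ℝ) : ℂ) + (b * rot H j) ^ 2 ≠ 0 := by
    intro j hj h
    have h3 : (b * rot H j) ^ 2 = (Complex.I * (n + 1)) ^ 2 := by
      push_cast at h
      linear_combination h - ((n : ℂ) + 1) ^ 2 * Complex.I_sq
    have h4 := hre j hj
    rcases sq_eq_sq_iff_eq_or_eq_neg.mp h3 with h5 | h5 <;> rw [h5] at h4 <;> simp at h4
  have h3 := sum_rot_div hX hb hne
  have h4 : ∑ j ∈ Finset.Icc (-(H : ℤ)) H,
      (-1 : ℂ) ^ j * (b * rot H j / (((n : ℂ) + 1) ^ 2 + (b * rot H j) ^ 2)) =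
      b * ∑ j ∈ Finset.Icc (-(H : ℤ)) H, (-1 : ℂ) ^ j * rot H j /
        (((((n : ℝ) + 1) ^ 2 : ℝ) : ℂ) + (b * rot H j) ^ 2) := by
    rw [Finset.mul_sum]
    refine Finset.sum_congr rfl fun j _ => ?_
    push_cast
    ring
  rw [h4, h3]
  push_cast
  rw [← pow_mul, ← pow_mul, ← pow_mul, ← pow_mul, ← pow_mul, mul_comm 2 (2 * H + 1), pow_succ (b : ℂ) (2 * H)]
  generalize ((n : ℂ) + 1) ^ ((2 * H + 1) * 2) + (b : ℂ) ^ ((2 * H + 1) * 2) = D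
  field_simp
  linear_combination (-D⁻¹) * hsq

lemma norm_inv_exp_sub_one_le {z : ℂ} (hz : 0 < z.re) {p : ℕ} (hp : p ≠ 0) :
    ‖(Complex.exp z - 1)⁻¹‖ ≤ p.factorial / z.re ^ p := by
  have h1 : z.re ^ p / p.factorial ≤ rexp z.re - 1 := by
    have := Real.sum_le_exp_of_nonneg hz.le (p + 1)
    rw [Finset.sum_range_succ] at this
    have h2 : (1 : ℝ) ≤ ∑ i ∈ Finset.range p, z.re ^ i / i.factorial := by
      rw [← Nat.sub_add_cancel (Nat.one_le_iff_ne_zero.mpr hp), Finset.sum_range_succ']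
      simp only [pow_zero, Nat.factorial_zero, Nat.cast_one, div_one, le_add_iff_nonneg_left]
      positivity
    linarith
  have h3 : rexp z.re - 1 ≤ ‖Complex.exp z - 1‖ := by
    have := norm_sub_norm_le (Complex.exp z) 1
    rwa [Complex.norm_exp, norm_one] at this
  rw [norm_inv, ← inv_div]
  gcongr
  exact h1.trans h3

lemma norm_planckSum_le (H : ℕ) {p : ℕ} (hp : p ≠ 0) :
    ∃ C : ℝ, 0 ≤ C ∧ ∀ b : ℝ, 0 < b → ‖planckSum H b‖ ≤ C / b ^ p := by
  have hc := cos_rot_pos H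
  set c := cos (π * H / (2 * H + 1))
  refine ⟨(2 * H + 1) * (p.factorial / (2 * π * c) ^ p), by positivity, fun b hb => ?_⟩
  have : ∀ j ∈ Finset.Icc (-(H : ℤ)) H,
      ‖(-1 : ℂ) ^ j / (Complex.exp (2 * π * b * rot H j) - 1)‖ ≤
        p.factorial / (2 * π * c * b) ^ p := by
    intro j hj
    have hre : (2 * π * b * rot H j : ℂ).re = 2 * π * (rot H j).re * b := by
      rw [show (2 * π * b : ℂ) = ((2 * π * b : ℝ) : ℂ) by push_cast; ring,
        Complex.re_ofReal_mul]
      ring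
    have hle : 2 * π * c * b ≤ (2 * π * b * rot H j : ℂ).re := by
      rw [hre]
      have := cos_le_re_rot hj
      gcongr
    have hpos : 0 < 2 * π * c * b := by positivity
    rw [div_eq_mul_inv, norm_mul, norm_zpow, norm_neg, norm_one, one_zpow, one_mul]
    refine (norm_inv_exp_sub_one_le (hpos.trans_le hle) hp).trans ?_
    gcongr
  refine (norm_sum_le_of_le _ this).trans ?_
  rw [Finset.sum_const, card_Icc_neg, nsmul_eq_mul, mul_pow _ b]
  push_cast
  rw [← mul_div_assoc, ← mul_div_assoc, div_div]

/-- The positive real `b` with `b^(2H+1) = 2π(k+1)/A`. -/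
noncomputable def node (H : ℕ) (A : ℝ) (k : ℕ) : ℝ :=
  (2 * π * (k + 1) / A) ^ ((1 : ℝ) / (2 * H + 1 : ℕ))

lemma node_pos (H : ℕ) {A : ℝ} (hA : 0 < A) (k : ℕ) : 0 < node H A k := by
  unfold node; positivity

lemma node_pow (H : ℕ) {A : ℝ} (hA : 0 < A) (k : ℕ) :
    node H A k ^ (2 * H + 1) = 2 * π * (k + 1) / A := by
  rw [node, one_div, Real.rpow_inv_natCast_pow (by positivity) (by omega)]

lemma summable_one_div_succ_sq : Summable fun k : ℕ => 1 / ((k : ℝ) + 1) ^ 2 := by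
  have := (summable_nat_add_iff 1).mpr (Real.summable_one_div_nat_pow.mpr one_lt_two)
  exact_mod_cast this

lemma exists_planckSum_node_bound (H : ℕ) {A : ℝ} (hA : 0 < A) (e : ℤ) :
    ∃ C : ℝ, ∀ k : ℕ, ‖((k : ℂ) + 1) ^ e * planckSum H (node H A k)‖ ≤
      C * (1 / ((k : ℝ) + 1) ^ 2) := by
  obtain ⟨C, hC, h⟩ := norm_planckSum_le H (p := (2 * H + 1) * (e.natAbs + 2)) (by positivity)
  refine ⟨C * (A / (2 * π)) ^ (e.natAbs + 2), fun k => ?_⟩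
  have hk : (1 : ℝ) ≤ (k : ℝ) + 1 := by linarith [(Nat.cast_nonneg k : (0 : ℝ) ≤ k)]
  have h1 := h _ (node_pos H hA k)
  rw [pow_mul, node_pow H hA] at h1
  have h2 : ‖((k : ℂ) + 1) ^ e‖ ≤ ((k : ℝ) + 1) ^ e.natAbs := by
    rw [norm_zpow, show ((k : ℂ) + 1) = ((k + 1 : ℝ) : ℂ) by push_cast; ring, Complex.norm_real,
      Real.norm_of_nonneg (by positivity), ← zpow_natCast]
    exact zpow_le_zpow_right₀ hk (Int.le_natAbs)
  rw [norm_mul]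
  calc _ ≤ ((k : ℝ) + 1) ^ e.natAbs * (C / (2 * π * (k + 1) / A) ^ (e.natAbs + 2)) := by gcongr
    _ = _ := by
      rw [div_pow, mul_pow, div_pow, pow_add ((k : ℝ) + 1)]
      field_simp

lemma summable_planckSum_node (H : ℕ) {A : ℝ} (hA : 0 < A) (e : ℤ) :
    Summable fun k : ℕ => ((k : ℂ) + 1) ^ e * planckSum H (node H A k) := by
  obtain ⟨C, h⟩ := exists_planckSum_node_bound H hA e
  exact Summable.of_norm_bounded (summable_one_div_succ_sq.mul_left C) h

/-- The function of `u` with Fourier series `∑ cos(2πku)/k^{2m+1}`, continued to all integers. -/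
noncomputable def oddCosZeta (m : ℤ) (u : ℝ) : ℂ :=
  if m = 0 then -(Real.log (2 * sin (π * u)) : ℂ) else HurwitzZeta.cosZeta (u : UnitAddCircle) (2 * m + 1)

/-- The side of the transformation formula summed over `n`. -/
noncomputable def kerSum (H : ℕ) (A : ℝ) (m : ℤ) (u : ℝ) : ℝ :=
  ∑' n : ℕ, ((n : ℝ) + 1) ^ (-(2 * (2 * H + 1) * m + 1)) * symKer (A * ((n : ℝ) + 1) ^ (2 * H + 1)) u

/-- The cosine series with coefficients `planckSum`. -/
noncomputable def planckCos (H : ℕ) (A : ℝ) (m : ℤ) (u : ℝ) : ℂ :=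
  ∑' k : ℕ, (cos (2 * π * (k + 1) * u) : ℂ) *
    (((k : ℂ) + 1) ^ (-(2 * m + 1)) * planckSum H (node H A k))

/-- The finitely many residual terms of the transformation formula. -/
noncomputable def residualSum (H : ℕ) (A : ℝ) (m : ℤ) (K : ℕ) (u : ℝ) : ℂ :=
  ∑ j ∈ Finset.range K, 4 * (-1) ^ (j + 1) * (A : ℂ) ^ (2 * (j : ℤ) - 1) / (2 * π) ^ (2 * j) *
    riemannZeta (2 * (2 * H + 1) * (m - j) + (2 * H + 1) + 1) *
    HurwitzZeta.cosZeta (u : UnitAddCircle) (2 * j)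

/-- The transformation formula for `kerSum`. -/
def CoreIdentity (H : ℕ) (A : ℝ) (m : ℤ) (K : ℕ) (u : ℝ) : Prop :=
  (kerSum H A m u : ℂ) = 2 * (-1) ^ m / (2 * H + 1) * (A / (2 * π)) ^ (2 * m) *
    (1 / 2 * oddCosZeta m u + (-1) ^ H * planckCos H A m u) + residualSum H A m K u

lemma hasSum_cosZeta (u : ℝ) {s : ℕ} (hs : 2 ≤ s) :
    HasSum (fun k : ℕ => (cos (2 * π * (k + 1) * u) : ℂ) / ((k : ℂ) + 1) ^ s)
      (HurwitzZeta.cosZeta (u : UnitAddCircle) s) := by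
  have h := HurwitzZeta.hasSum_nat_cosZeta u (s := s) (by
    simp; omega)
  rw [← hasSum_nat_add_iff' 1] at h
  have hs0 : (s : ℂ) ≠ 0 := by exact_mod_cast (by omega : s ≠ 0)
  simp only [Finset.sum_range_one, Nat.cast_zero, Complex.zero_cpow hs0, div_zero, sub_zero] at h
  refine (hasSum_congr_fun fun n => ?_).mpr h
  rw [Complex.cpow_natCast]
  push_cast
  ring_nf

lemma hasSum_zeta {s : ℕ} (hs : 2 ≤ s) :
    HasSum (fun k : ℕ => 1 / ((k : ℂ) + 1) ^ s) (riemannZeta s) := by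
  have h := hasSum_cosZeta 0 hs
  rw [QuotientAddGroup.mk_zero, HurwitzZeta.cosZeta_zero] at h
  simpa using h

lemma partial_fraction_succ_pow {A t κ : ℝ} (hA : 0 < A) (ht : 0 < t) (hκ : 0 < κ) (H m : ℕ) :
    1 / t ^ (2 * (2 * H + 1) * m + 1) *
        (4 * (A * t ^ (2 * H + 1)) / ((A * t ^ (2 * H + 1)) ^ 2 + κ ^ 2)) =
      ∑ j ∈ Finset.range m, (-1) ^ j * 4 * A ^ (2 * j + 1) / κ ^ (2 * (j + 1)) *
          (1 / t ^ (2 * (2 * H + 1) * (m - 1 - j) + (2 * H + 1) + 1)) +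
        (-1) ^ m * (A / κ) ^ (2 * m) * (4 / A) *
          (t ^ (2 * H) / ((t ^ (2 * H + 1)) ^ 2 + (κ / A) ^ 2)) := by
  induction m with
  | zero =>
    simp only [mul_zero, zero_add, pow_one, Finset.range_zero, Finset.sum_empty, pow_zero, one_mul]
    rw [pow_succ t (2 * H)]
    field_simp
  | succ m ih =>
    have e1 : ∀ X : ℝ, 1 / t ^ (2 * (2 * H + 1) * (m + 1) + 1) * X =
        (t ^ (2 * (2 * H + 1)))⁻¹ * (1 / t ^ (2 * (2 * H + 1) * m + 1) * X) := by
      intro X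
      rw [show 2 * (2 * H + 1) * (m + 1) + 1 = 2 * (2 * H + 1) + (2 * (2 * H + 1) * m + 1) by ring,
        pow_add]
      field_simp
    rw [e1, ih, mul_add, Finset.mul_sum, Finset.sum_range_succ, add_assoc]
    congr 1
    · refine Finset.sum_congr rfl fun j hj => ?_
      rw [Finset.mem_range] at hj
      obtain ⟨d, rfl⟩ : ∃ d, m = j + 1 + d := ⟨m - j - 1, by omega⟩
      rw [show j + 1 + d - 1 - j = d by omega, show j + 1 + d + 1 - 1 - j = d + 1 by omega,
        show 2 * (2 * H + 1) * (d + 1) + (2 * H + 1) + 1 =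
          2 * (2 * H + 1) + (2 * (2 * H + 1) * d + (2 * H + 1) + 1) by ring,
        pow_add t (2 * (2 * H + 1))]
      field_simp
    · rw [show m + 1 - 1 - m = 0 by omega, mul_zero, zero_add,
        show 2 * (2 * H + 1) = 2 * H + 2 * H + 2 by ring,
        show 2 * (m + 1) = 2 * m + 2 by ring]
      simp only [pow_add, pow_succ, div_pow]
      have hT : 0 < t ^ (2 * H) := by positivity
      generalize t ^ (2 * H) = T at hT
      field_simp
      ring

lemma summable_double_series {A : ℝ} (hA : 0 < A) (H m : ℕ) (hm : 1 ≤ m) (u : ℝ) :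
    Summable fun p : ℕ × ℕ => cos (2 * π * (p.2 + 1) * u) *
      (1 / ((p.1 : ℝ) + 1) ^ (2 * (2 * H + 1) * m + 1) *
        (4 * (A * ((p.1 : ℝ) + 1) ^ (2 * H + 1)) /
          ((A * ((p.1 : ℝ) + 1) ^ (2 * H + 1)) ^ 2 + (2 * π * (p.2 + 1)) ^ 2))) := by
  have hs := (summable_one_div_succ_sq.mul_of_nonneg summable_one_div_succ_sq
    (fun _ => by positivity) (fun _ => by positivity)).mul_left (4 * A)
  refine Summable.of_norm_bounded hs fun p => ?_
  obtain ⟨n, k⟩ := p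
  have hn : (1 : ℝ) ≤ (n : ℝ) + 1 := by linarith [(Nat.cast_nonneg n : (0 : ℝ) ≤ n)]
  rw [norm_mul]
  have hpos : 0 ≤ (1 / ((n : ℝ) + 1) ^ (2 * (2 * H + 1) * m + 1) *
        (4 * (A * ((n : ℝ) + 1) ^ (2 * H + 1)) /
          ((A * ((n : ℝ) + 1) ^ (2 * H + 1)) ^ 2 + (2 * π * (k + 1)) ^ 2))) := by positivity
  rw [Real.norm_of_nonneg hpos, Real.norm_eq_abs]
  refine (mul_le_of_le_one_left hpos (Real.abs_cos_le_one _)).trans ?_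
  have h1 : 4 * (A * ((n : ℝ) + 1) ^ (2 * H + 1)) /
      ((A * ((n : ℝ) + 1) ^ (2 * H + 1)) ^ 2 + (2 * π * (k + 1)) ^ 2) ≤
      4 * (A * ((n : ℝ) + 1) ^ (2 * H + 1)) / ((k : ℝ) + 1) ^ 2 := by
    gcongr
    have : (1 : ℝ) ≤ (2 * π) ^ 2 := by nlinarith [Real.pi_gt_three]
    have h3 : 0 ≤ ((k : ℝ) + 1) ^ 2 := by positivity
    rw [mul_pow]
    nlinarith [sq_nonneg (A * ((n : ℝ) + 1) ^ (2 * H + 1))]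
  have h2 : 1 / ((n : ℝ) + 1) ^ (2 * (2 * H + 1) * m + 1) ≤
      1 / (((n : ℝ) + 1) ^ 2 * ((n : ℝ) + 1) ^ (2 * H + 1)) := by
    rw [← pow_add]
    apply one_div_le_one_div_of_le (by positivity)
    apply pow_le_pow_right₀ hn
    nlinarith
  calc _ ≤ 1 / (((n : ℝ) + 1) ^ 2 * ((n : ℝ) + 1) ^ (2 * H + 1)) *
        (4 * (A * ((n : ℝ) + 1) ^ (2 * H + 1)) / ((k : ℝ) + 1) ^ 2) := by gcongr
    _ = _ := by field_simp

/-- The coefficient of `cos (2π(k+1)u)` in the transformation formula. -/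
lemma hasSum_column {A : ℝ} (hA : 0 < A) (H m k : ℕ) :
    HasSum (fun n : ℕ => (((1 / ((n : ℝ) + 1) ^ (2 * (2 * H + 1) * m + 1) *
        (4 * (A * ((n : ℝ) + 1) ^ (2 * H + 1)) /
          ((A * ((n : ℝ) + 1) ^ (2 * H + 1)) ^ 2 + (2 * π * (k + 1)) ^ 2)) : ℝ) : ℂ)))
      (∑ j ∈ Finset.range m, (-1) ^ j * 4 * (A : ℂ) ^ (2 * j + 1) /
          (2 * π * (k + 1)) ^ (2 * (j + 1)) *
          riemannZeta ((2 * (2 * H + 1) * (m - 1 - j) + (2 * H + 1) + 1 : ℕ) : ℂ) +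
        (-1) ^ m * (A / (2 * π * (k + 1))) ^ (2 * m) * (4 / A) *
        (π / (2 * H + 1) / (2 * π * (k + 1) / A) * (1 / 2 + (-1) ^ H * planckSum H (node H A k))
          - if H = 0 then 1 / (2 * (2 * π * (k + 1) / A : ℂ) ^ 2) else 0)) := by
  have h1 := hasSum_sum (s := Finset.range m) (fun j _ =>
    (hasSum_zeta (s := 2 * (2 * H + 1) * (m - 1 - j) + (2 * H + 1) + 1) (by omega)).mul_left
      ((-1) ^ j * 4 * (A : ℂ) ^ (2 * j + 1) / (2 * π * (k + 1)) ^ (2 * (j + 1))))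
  have h2 := (hasSum_pow_div_pow_add_pow H (node_pos H hA k)).mul_left
    ((-1) ^ m * (A / (2 * π * (k + 1))) ^ (2 * m) * (4 / (A : ℂ)))
  have hc : ((node H A k : ℂ)) ^ (2 * H + 1) = 2 * π * (k + 1) / A := by
    exact_mod_cast node_pow H hA k
  have hif : (if H = 0 then 1 / (2 * (node H A k : ℂ) ^ 2) else 0) =
      if H = 0 then 1 / (2 * (2 * π * (k + 1) / A : ℂ) ^ 2) else 0 := by
    split_ifs with h
    · rw [← hc, h]; simp
    · rfl
  rw [hc, hif] at h2
  refine (hasSum_congr_fun fun n => ?_).mpr (h1.add h2)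
  rw [partial_fraction_succ_pow hA (by positivity) (by positivity), node_pow H hA]
  push_cast
  rfl

lemma riemannZeta_neg_two_mul (H : ℕ) :
    riemannZeta (-(2 * H)) = if H = 0 then -1 / 2 else 0 := by
  split_ifs with h
  · subst h; simp [riemannZeta_zero]
  · obtain ⟨n, rfl⟩ := Nat.exists_eq_succ_of_ne_zero h
    have := riemannZeta_neg_two_mul_nat_add_one n
    rw [← this]
    congr 1
    push_cast
    ring

lemma riemannZeta_residual_eq_zero (H : ℕ) {m : ℤ} {j : ℕ} (hj : m + 2 ≤ j) :
    riemannZeta (2 * (2 * H + 1) * (m - j) + (2 * H + 1) + 1) = 0 := by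
  obtain ⟨d, hd⟩ : ∃ d : ℕ, (j : ℤ) = m + 2 + d := ⟨(j - m - 2).toNat, by omega⟩
  have hd' : (j : ℂ) = m + 2 + d := by exact_mod_cast hd
  have := riemannZeta_neg_two_mul_nat_add_one ((2 * H + 1) * (d + 1) + H - 1 + 0)
  rw [← this, hd']
  congr 1
  have h1 : 1 ≤ (2 * H + 1) * (d + 1) + H := by nlinarith
  push_cast [h1]
  ring

lemma residualSum_eq_of_le (H : ℕ) (A : ℝ) {m : ℤ} {K L : ℕ} (hK : m + 2 ≤ K) (hL : m + 2 ≤ L)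
    (u : ℝ) : residualSum H A m K u = residualSum H A m L u := by
  wlog h : K ≤ L generalizing K L
  · exact (this hL hK (by omega)).symm
  unfold residualSum
  refine Finset.sum_subset (by simpa using h) fun j _ hj => ?_
  rw [Finset.mem_range, not_lt] at hj
  rw [riemannZeta_residual_eq_zero H (by omega)]
  ring

lemma hasSum_planckCos (H : ℕ) {A : ℝ} (hA : 0 < A) (m : ℤ) (u : ℝ) :
    HasSum (fun k : ℕ => (cos (2 * π * (k + 1) * u) : ℂ) *
      (((k : ℂ) + 1) ^ (-(2 * m + 1)) * planckSum H (node H A k))) (planckCos H A m u) := by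
  apply Summable.hasSum
  refine Summable.of_norm_bounded (summable_planckSum_node H hA (-(2 * m + 1))).norm fun k => ?_
  rw [norm_mul, Complex.norm_real, Real.norm_eq_abs]
  exact mul_le_of_le_one_left (norm_nonneg _) (Real.abs_cos_le_one _)

lemma coreIdentity_of_pos {H : ℕ} {A : ℝ} (hA : 0 < A) {m : ℕ} (hm : 1 ≤ m) {K : ℕ}
    (hK : m + 2 ≤ K) {u : ℝ} (hu : u ∈ Icc (0 : ℝ) 1) : CoreIdentity H A m K u := by
  have hA0 : (A : ℂ) ≠ 0 := by exact_mod_cast hA.ne'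
  have hN0 : (2 * (H : ℂ) + 1) ≠ 0 := by exact_mod_cast (by omega : 2 * H + 1 ≠ 0)
  have hpi : (π : ℂ) ≠ 0 := by exact_mod_cast Real.pi_ne_zero
  rw [CoreIdentity, residualSum_eq_of_le H A (K := K) (L := m + 2) (by exact_mod_cast hK)
    (by push_cast; rfl)]
  have hS := summable_double_series hA H m hm u
  set F : ℕ × ℕ → ℝ := fun p : ℕ × ℕ => cos (2 * π * (p.2 + 1) * u) *
      (1 / ((p.1 : ℝ) + 1) ^ (2 * (2 * H + 1) * m + 1) *
        (4 * (A * ((p.1 : ℝ) + 1) ^ (2 * H + 1)) /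
          ((A * ((p.1 : ℝ) + 1) ^ (2 * H + 1)) ^ 2 + (2 * π * (p.2 + 1)) ^ 2))) with hF
  have hrow : HasSum (fun n : ℕ => 1 / ((n : ℝ) + 1) ^ (2 * (2 * H + 1) * m + 1) *
      (symKer (A * ((n : ℝ) + 1) ^ (2 * H + 1)) u - 2 / (A * ((n : ℝ) + 1) ^ (2 * H + 1))))
      (∑' p, F p) := by
    refine hS.hasSum.prod_fiberwise fun n => ?_
    have := (hasSum_symKer (x := A * ((n : ℝ) + 1) ^ (2 * H + 1)) (by positivity) hu).mul_left
      (1 / ((n : ℝ) + 1) ^ (2 * (2 * H + 1) * m + 1))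
    refine (hasSum_congr_fun fun k => ?_).mpr this
    simp only [hF]
    ring
  have hSc : HasSum (fun p : ℕ × ℕ => ((F p.swap : ℝ) : ℂ)) ((∑' p, F p : ℝ) : ℂ) := by
    rw [Complex.hasSum_ofReal]
    exact (Equiv.prodComm ℕ ℕ).hasSum_iff.mpr hS.hasSum
  have hcol := hSc.prod_fiberwise fun k => by
    have := (hasSum_column hA H m k).mul_left ((cos (2 * π * (k + 1) * u) : ℝ) : ℂ)
    refine (hasSum_congr_fun fun n => ?_).mpr this
    simp only [hF, Prod.swap]
    push_cast
    rfl
  have hJ := hasSum_sum (s := Finset.range m) (fun j _ =>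
    (hasSum_cosZeta u (s := 2 * (j + 1)) (by omega)).mul_left
      ((-1) ^ j * 4 * (A : ℂ) ^ (2 * j + 1) / (2 * π) ^ (2 * (j + 1)) *
        riemannZeta ((2 * (2 * H + 1) * (m - 1 - j) + (2 * H + 1) + 1 : ℕ) : ℂ)))
  have hZ := (hasSum_cosZeta u (s := 2 * m + 1) (by omega)).mul_left (1 / 2 : ℂ)
  have hE := (hasSum_planckCos H hA m u).mul_left ((-1 : ℂ) ^ H)
  have hD := (hasSum_cosZeta u (s := 2 * (m + 1)) (by omega)).mul_left
    (4 * (-1 : ℂ) ^ m * A ^ (2 * m + 1) / (2 * π) ^ (2 * (m + 1)) * riemannZeta (-(2 * H)))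
  have htot := (hJ.add ((hZ.add hE).mul_left
    (2 * (-1 : ℂ) ^ m / (2 * H + 1) * (A / (2 * π)) ^ (2 * m)))).add hD
  have hval := hcol.unique ((hasSum_congr_fun fun k => ?_).mpr htot)
  · have h0 := (Complex.hasSum_ofReal.mpr hrow).add
      ((hasSum_zeta (s := 2 * (2 * H + 1) * m + (2 * H + 1) + 1) (by omega)).mul_left
        (2 / (A : ℂ)))
    rw [hval] at h0
    have hk : (kerSum H A m u : ℂ) = ∑' n : ℕ,
        (((1 / ((n : ℝ) + 1) ^ (2 * (2 * H + 1) * m + 1) *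
          (symKer (A * ((n : ℝ) + 1) ^ (2 * H + 1)) u - 2 / (A * ((n : ℝ) + 1) ^ (2 * H + 1))) : ℝ) :
          ℂ) + 2 / A * (1 / ((n : ℂ) + 1) ^ (2 * (2 * H + 1) * m + (2 * H + 1) + 1))) := by
      rw [kerSum, Complex.ofReal_tsum]
      refine tsum_congr fun n => ?_
      have hn : (n : ℂ) + 1 ≠ 0 := by exact_mod_cast (by omega : n + 1 ≠ 0)
      push_cast
      rw [zpow_neg, show (2 * (2 * (H : ℤ) + 1) * m + 1) = ((2 * (2 * H + 1) * m + 1 : ℕ) : ℤ) by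
        push_cast; ring, zpow_natCast, add_assoc _ (2 * H + 1) 1, add_comm (2 * H + 1) 1,
        ← add_assoc, pow_add _ (2 * (2 * H + 1) * m + 1)]
      field_simp
      ring
    rw [hk, h0.tsum_eq, residualSum, Finset.sum_range_succ, Finset.sum_range_succ', oddCosZeta,
      if_neg (by exact_mod_cast (by omega : m ≠ 0))]
    have e0 : 4 * (-1) ^ (0 + 1) * (A : ℂ) ^ (2 * ((0 : ℕ) : ℤ) - 1) / (2 * π) ^ (2 * 0) *
        riemannZeta (2 * (2 * H + 1) * ((m : ℤ) - (0 : ℕ)) + (2 * H + 1) + 1) *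
        HurwitzZeta.cosZeta (u : UnitAddCircle) (2 * (0 : ℕ)) =
        2 / (A : ℂ) * riemannZeta ((2 * (2 * H + 1) * m + (2 * H + 1) + 1 : ℕ) : ℂ) := by
      simp only [Nat.cast_zero, mul_zero, HurwitzZeta.cosZeta_apply_zero]
      push_cast
      simp
      field_simp
      ring
    have e1 : ∀ j ∈ Finset.range m,
        4 * (-1) ^ (j + 1 + 1) * (A : ℂ) ^ (2 * ((j + 1 : ℕ) : ℤ) - 1) / (2 * π) ^ (2 * (j + 1)) *
        riemannZeta (2 * (2 * H + 1) * ((m : ℤ) - (j + 1 : ℕ)) + (2 * H + 1) + 1) *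
        HurwitzZeta.cosZeta (u : UnitAddCircle) (2 * (j + 1 : ℕ)) =
        (-1) ^ j * 4 * (A : ℂ) ^ (2 * j + 1) / (2 * π) ^ (2 * (j + 1)) *
        riemannZeta ((2 * (2 * H + 1) * (m - 1 - j) + (2 * H + 1) + 1 : ℕ) : ℂ) *
        HurwitzZeta.cosZeta (u : UnitAddCircle) ((2 * (j + 1) : ℕ) : ℂ) := by
      intro j hj
      rw [Finset.mem_range] at hj
      obtain ⟨d, rfl⟩ : ∃ d, m = j + 1 + d := ⟨m - j - 1, by omega⟩
      rw [show j + 1 + d - 1 - j = d by omega,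
        show (2 * ((j + 1 : ℕ) : ℤ) - 1) = ((2 * j + 1 : ℕ) : ℤ) by push_cast; ring, zpow_natCast]
      push_cast
      ring_nf
    have e2 : 4 * (-1) ^ (m + 1 + 1) * (A : ℂ) ^ (2 * ((m + 1 : ℕ) : ℤ) - 1) /
        (2 * π) ^ (2 * (m + 1)) *
        riemannZeta (2 * (2 * H + 1) * ((m : ℤ) - (m + 1 : ℕ)) + (2 * H + 1) + 1) *
        HurwitzZeta.cosZeta (u : UnitAddCircle) (2 * (m + 1 : ℕ)) =
        4 * (-1 : ℂ) ^ m * A ^ (2 * m + 1) / (2 * π) ^ (2 * (m + 1)) * riemannZeta (-(2 * H)) *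
        HurwitzZeta.cosZeta (u : UnitAddCircle) ((2 * (m + 1) : ℕ) : ℂ) := by
      rw [show (2 * ((m + 1 : ℕ) : ℤ) - 1) = ((2 * m + 1 : ℕ) : ℤ) by push_cast; ring, zpow_natCast]
      push_cast
      ring_nf
    rw [Finset.sum_congr rfl e1, e2, e0]
    rw [zpow_natCast, show (2 * (m : ℤ)) = ((2 * m : ℕ) : ℤ) by push_cast; ring, zpow_natCast]
    push_cast
    ring
  · rw [riemannZeta_neg_two_mul]
    have hk : (k : ℂ) + 1 ≠ 0 := by exact_mod_cast (by omega : k + 1 ≠ 0)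
    rw [mul_add, Finset.mul_sum, add_assoc]
    congr 1
    · refine Finset.sum_congr rfl fun j _ => ?_
      rw [mul_pow]
      field_simp
      try ring
    · rw [zpow_neg, show (2 * (m : ℤ) + 1) = ((2 * m + 1 : ℕ) : ℤ) by push_cast; ring, zpow_natCast]
      rw [show 2 * (m + 1) = 2 * m + 2 by ring]
      simp only [div_pow, mul_pow, pow_add, pow_one]
      split_ifs with h
      · subst h
        push_cast
        field_simp
        ring
      · push_cast
        field_simp
        ring

/-- `f` is twice differentiable on `(0, 1)` with second derivative `g`. -/
def HasSecondDeriv (f g : ℝ → ℂ) : Prop :=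
  ∃ f' : ℝ → ℂ, ∀ u ∈ Ioo (0 : ℝ) 1, HasDerivAt f (f' u) u ∧ HasDerivAt f' (g u) u

lemma HasSecondDeriv.add {f g f₁ g₁ : ℝ → ℂ} (h : HasSecondDeriv f g) (h₁ : HasSecondDeriv f₁ g₁) :
    HasSecondDeriv (fun u => f u + f₁ u) (fun u => g u + g₁ u) := by
  obtain ⟨f', h⟩ := h
  obtain ⟨f₁', h₁⟩ := h₁
  exact ⟨fun u => f' u + f₁' u, fun u hu =>
    ⟨(h u hu).1.add (h₁ u hu).1, (h u hu).2.add (h₁ u hu).2⟩⟩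

lemma HasSecondDeriv.const_mul {f g : ℝ → ℂ} (c : ℂ) (h : HasSecondDeriv f g) :
    HasSecondDeriv (fun u => c * f u) (fun u => c * g u) := by
  obtain ⟨f', h⟩ := h
  exact ⟨fun u => c * f' u, fun u hu => ⟨(h u hu).1.const_mul c, (h u hu).2.const_mul c⟩⟩

lemma HasSecondDeriv.sum {ι : Type*} {s : Finset ι} {f g : ι → ℝ → ℂ}
    (h : ∀ i ∈ s, HasSecondDeriv (f i) (g i)) :
    HasSecondDeriv (fun u => ∑ i ∈ s, f i u) (fun u => ∑ i ∈ s, g i u) := by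
  induction s using Finset.cons_induction with
  | empty => exact ⟨fun _ => 0, fun u _ => by simpa using hasDerivAt_const u (0 : ℂ)⟩
  | cons a s ha ih =>
    simp_rw [Finset.sum_cons]
    exact (h a (Finset.mem_cons_self a s)).add (ih fun i hi => h i (Finset.mem_cons_of_mem hi))

lemma HasSecondDeriv.congr {f g f₁ g₁ : ℝ → ℂ} (h : HasSecondDeriv f g)
    (hf : ∀ u ∈ Ioo (0 : ℝ) 1, f₁ u = f u) (hg : ∀ u ∈ Ioo (0 : ℝ) 1, g₁ u = g u) :
    HasSecondDeriv f₁ g₁ := by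
  obtain ⟨f', h⟩ := h
  refine ⟨f', fun u hu => ⟨?_, ?_⟩⟩
  · refine (h u hu).1.congr_of_eventuallyEq ?_
    filter_upwards [isOpen_Ioo.mem_nhds hu] with v hv using hf v hv
  · rw [hg u hu]; exact (h u hu).2

lemma HasSecondDeriv.unique {f g g₁ : ℝ → ℂ} (h : HasSecondDeriv f g) (h₁ : HasSecondDeriv f g₁)
    {u : ℝ} (hu : u ∈ Ioo (0 : ℝ) 1) : g u = g₁ u := by
  obtain ⟨f', h⟩ := h
  obtain ⟨f₁', h₁⟩ := h₁
  have heq : f' =ᶠ[𝓝 u] f₁' := by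
    filter_upwards [isOpen_Ioo.mem_nhds hu] with v hv using (h v hv).1.unique (h₁ v hv).1
  exact (h u hu).2.unique ((h₁ u hu).2.congr_of_eventuallyEq heq)

/-- Termwise second derivative, under uniform bounds on compact subintervals. -/
lemma hasSecondDeriv_tsum {ι : Type*} {f f' g : ι → ℝ → ℂ}
    (hf : ∀ i, ∀ u ∈ Ioo (0 : ℝ) 1, HasDerivAt (f i) (f' i u) u)
    (hf' : ∀ i, ∀ u ∈ Ioo (0 : ℝ) 1, HasDerivAt (f' i) (g i u) u)
    (hs : ∀ u ∈ Ioo (0 : ℝ) 1, Summable fun i => f i u)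
    (hb' : ∀ δ > 0, ∃ v : ι → ℝ, Summable v ∧ ∀ i, ∀ u ∈ Ioo δ (1 - δ), ‖f' i u‖ ≤ v i)
    (hb : ∀ δ > 0, ∃ v : ι → ℝ, Summable v ∧ ∀ i, ∀ u ∈ Ioo δ (1 - δ), ‖g i u‖ ≤ v i) :
    HasSecondDeriv (fun u => ∑' i, f i u) (fun u => ∑' i, g i u) := by
  refine ⟨fun u => ∑' i, f' i u, fun u hu => ?_⟩
  obtain ⟨δ, hδ, hδu⟩ : ∃ δ > 0, u ∈ Ioo δ (1 - δ) := by
    have h1 := hu.1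
    have h2 := hu.2
    exact ⟨min u (1 - u) / 2, half_pos (lt_min h1 (by linarith)),
      by linarith [min_le_left u (1 - u)], by linarith [min_le_right u (1 - u)]⟩
  have hsub : ∀ v ∈ Ioo δ (1 - δ), v ∈ Ioo (0 : ℝ) 1 := fun v hv =>
    ⟨hδ.trans hv.1, by linarith [hv.2]⟩
  obtain ⟨v, hv, hvb⟩ := hb' δ hδ
  obtain ⟨w, hw, hwb⟩ := hb δ hδ
  constructor
  · exact hasDerivAt_tsum_of_isPreconnected hv isOpen_Ioo isPreconnected_Ioo
      (fun i y hy => hf i y (hsub y hy)) hvb hδu (hs u hu) hδu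
  · exact hasDerivAt_tsum_of_isPreconnected hw isOpen_Ioo isPreconnected_Ioo
      (fun i y hy => hf' i y (hsub y hy)) hwb hδu
      (Summable.of_norm_bounded hv fun i => hvb i u hδu) hδu

lemma hasSecondDeriv_cos_series {c : ℕ → ℂ} {C : ℝ}
    (hc : ∀ k, ‖c k‖ * ((k : ℝ) + 1) ^ 2 ≤ C * (1 / ((k : ℝ) + 1) ^ 2)) :
    HasSecondDeriv (fun u => ∑' k : ℕ, (cos (2 * π * (k + 1) * u) : ℂ) * c k)
      (fun u => -(4 * π ^ 2) * ∑' k : ℕ, (cos (2 * π * (k + 1) * u) : ℂ) *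
        (((k : ℂ) + 1) ^ 2 * c k)) := by
  have hk : ∀ k : ℕ, (1 : ℝ) ≤ (k : ℝ) + 1 := fun k => by
    linarith [(Nat.cast_nonneg k : (0 : ℝ) ≤ k)]
  have hnk : ∀ k : ℕ, ‖(k : ℂ) + 1‖ = (k : ℝ) + 1 := fun k => by
    rw [show ((k : ℂ) + 1) = ((k + 1 : ℝ) : ℂ) by push_cast; ring, Complex.norm_real,
      Real.norm_of_nonneg (by positivity)]
  have h1 : HasSecondDeriv (fun u => ∑' k : ℕ, (cos (2 * π * (k + 1) * u) : ℂ) * c k)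
      (fun u => ∑' k : ℕ, ((-cos (2 * π * (k + 1) * u) * (2 * π * (k + 1)) ^ 2 : ℝ) : ℂ) * c k) := by
    refine hasSecondDeriv_tsum (f' := fun (k : ℕ) (u : ℝ) =>
      ((-sin (2 * π * (k + 1) * u) * (2 * π * (k + 1)) : ℝ) : ℂ) * c k) ?_ ?_ ?_ ?_ ?_
    · intro k u _
      apply HasDerivAt.mul_const
      apply HasDerivAt.ofReal_comp
      simpa using ((hasDerivAt_id u).const_mul (2 * π * ((k : ℝ) + 1))).cos
    · intro k u _
      apply HasDerivAt.mul_const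
      apply HasDerivAt.ofReal_comp
      refine ((((hasDerivAt_id u).const_mul (2 * π * ((k : ℝ) + 1))).sin.neg).mul_const
        (2 * π * ((k : ℝ) + 1))).congr_deriv ?_
      simp only [id_eq, mul_one]
      ring
    · intro u _
      refine Summable.of_norm_bounded (summable_one_div_succ_sq.mul_left C) fun k => ?_
      rw [norm_mul, Complex.norm_real, Real.norm_eq_abs]
      refine (mul_le_of_le_one_left (norm_nonneg _) (Real.abs_cos_le_one _)).trans
        (le_trans ?_ (hc k))
      exact le_mul_of_one_le_right (norm_nonneg _) (one_le_pow₀ (hk k))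
    · intro δ _
      refine ⟨fun k => 2 * π * (C * (1 / ((k : ℝ) + 1) ^ 2)),
        (summable_one_div_succ_sq.mul_left C).mul_left _, fun k u _ => ?_⟩
      rw [norm_mul, Complex.norm_real, Real.norm_eq_abs, abs_mul, abs_neg,
        abs_of_pos (by positivity : (0 : ℝ) < 2 * π * (k + 1))]
      calc _ ≤ 1 * (2 * π * ((k : ℝ) + 1)) * ‖c k‖ := by
            gcongr
            exact Real.abs_sin_le_one _
        _ = 2 * π * (‖c k‖ * ((k : ℝ) + 1)) := by ring
        _ ≤ 2 * π * (‖c k‖ * ((k : ℝ) + 1) ^ 2) := by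
            gcongr
            nlinarith [hk k]
        _ ≤ _ := mul_le_mul_of_nonneg_left (hc k) (by positivity)
    · intro δ _
      refine ⟨fun k => (2 * π) ^ 2 * (C * (1 / ((k : ℝ) + 1) ^ 2)),
        (summable_one_div_succ_sq.mul_left C).mul_left _, fun k u _ => ?_⟩
      rw [norm_mul, Complex.norm_real, Real.norm_eq_abs, abs_mul, abs_neg,
        abs_of_pos (by positivity : (0 : ℝ) < (2 * π * (k + 1)) ^ 2)]
      calc _ ≤ 1 * (2 * π * ((k : ℝ) + 1)) ^ 2 * ‖c k‖ := by
            gcongr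
            exact Real.abs_cos_le_one _
        _ = (2 * π) ^ 2 * (‖c k‖ * ((k : ℝ) + 1) ^ 2) := by ring
        _ ≤ _ := mul_le_mul_of_nonneg_left (hc k) (by positivity)
  refine h1.congr (fun _ _ => rfl) fun u _ => ?_
  rw [← tsum_mul_left]
  refine tsum_congr fun k => ?_
  push_cast
  ring

lemma hasSecondDeriv_planckCos (H : ℕ) {A : ℝ} (hA : 0 < A) (m : ℤ) :
    HasSecondDeriv (planckCos H A m) (fun u => -(4 * π ^ 2) * planckCos H A (m - 1) u) := by
  obtain ⟨C, hC⟩ := exists_planckSum_node_bound H hA (-(2 * (m - 1) + 1))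
  have he : ∀ k : ℕ, ((k : ℂ) + 1) ^ 2 *
      (((k : ℂ) + 1) ^ (-(2 * m + 1)) * planckSum H (node H A k)) =
      ((k : ℂ) + 1) ^ (-(2 * (m - 1) + 1)) * planckSum H (node H A k) := by
    intro k
    have hk : (k : ℂ) + 1 ≠ 0 := by exact_mod_cast (by omega : k + 1 ≠ 0)
    rw [← mul_assoc, ← zpow_natCast, ← zpow_add₀ hk]
    congr 2
    push_cast
    ring
  have := hasSecondDeriv_cos_series (c := fun k => ((k : ℂ) + 1) ^ (-(2 * m + 1)) *
    planckSum H (node H A k)) (C := C) (fun k => by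
      refine le_trans (le_of_eq ?_) (hC k)
      rw [← he, norm_mul (((k : ℂ) + 1) ^ 2), norm_pow,
        show ((k : ℂ) + 1) = ((k + 1 : ℝ) : ℂ) by push_cast; ring, Complex.norm_real,
        Real.norm_of_nonneg (by positivity)]
      ring)
  refine this.congr (fun _ _ => rfl) fun u _ => ?_
  simp_rw [he]
  rfl

lemma hasSecondDeriv_cosZeta {s : ℕ} (hs : 4 ≤ s) :
    HasSecondDeriv (fun u => HurwitzZeta.cosZeta (u : UnitAddCircle) s)
      (fun u => -(4 * π ^ 2) * HurwitzZeta.cosZeta (u : UnitAddCircle) (s - 2 : ℕ)) := by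
  have hn : ∀ k : ℕ, ‖(k : ℂ) + 1‖ = (k : ℝ) + 1 := fun k => by
    rw [show ((k : ℂ) + 1) = ((k + 1 : ℝ) : ℂ) by push_cast; ring, Complex.norm_real,
      Real.norm_of_nonneg (by positivity)]
  have := hasSecondDeriv_cos_series (c := fun k => 1 / ((k : ℂ) + 1) ^ s) (C := 1) (fun k => by
      have hk : (1 : ℝ) ≤ (k : ℝ) + 1 := by linarith [(Nat.cast_nonneg k : (0 : ℝ) ≤ k)]
      rw [norm_div, norm_one, norm_pow, hn, one_mul, div_mul_eq_mul_div, one_mul,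
        div_le_div_iff₀ (by positivity) (by positivity), one_mul, ← pow_add]
      exact pow_le_pow_right₀ hk (by omega))
  refine this.congr (fun u _ => ?_) fun u _ => ?_
  · rw [← (hasSum_cosZeta u (by omega : 2 ≤ s)).tsum_eq]
    refine tsum_congr fun k => ?_
    ring
  · rw [← (hasSum_cosZeta u (by omega : 2 ≤ s - 2)).tsum_eq]
    congr 1
    refine tsum_congr fun k => ?_
    have hk : (k : ℂ) + 1 ≠ 0 := by exact_mod_cast (by omega : k + 1 ≠ 0)
    obtain ⟨d, rfl⟩ : ∃ d, s = d + 2 := ⟨s - 2, by omega⟩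
    rw [Nat.add_sub_cancel, pow_add]
    field_simp

lemma HasSecondDeriv.const (c : ℂ) : HasSecondDeriv (fun _ => c) (fun _ => 0) :=
  ⟨fun _ => 0, fun u _ => ⟨hasDerivAt_const u c, hasDerivAt_const u 0⟩⟩

lemma cosZeta_two {u : ℝ} (hu : u ∈ Icc (0 : ℝ) 1) :
    HurwitzZeta.cosZeta (u : UnitAddCircle) 2 = π ^ 2 * ((u : ℂ) ^ 2 - u + 1 / 6) := by
  have h := HurwitzZeta.cosZeta_two_mul_nat one_ne_zero hu
  have hb : ((Polynomial.bernoulli 2).map (algebraMap ℚ ℂ)).eval (u : ℂ) = u ^ 2 - u + 1 / 6 := by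
    simp [Polynomial.bernoulli, Finset.sum_range_succ, Polynomial.eval_monomial]
    ring
  simp only [Nat.cast_one, mul_one] at h
  rw [h, hb]
  rw [Nat.factorial_two]
  push_cast
  ring

lemma hasSecondDeriv_cosZeta_two :
    HasSecondDeriv (fun u => HurwitzZeta.cosZeta (u : UnitAddCircle) 2) (fun _ => 2 * π ^ 2) := by
  refine HasSecondDeriv.congr (f := fun u : ℝ => (π ^ 2 * ((u : ℂ) ^ 2 - u + 1 / 6)))
    (g := fun _ => 2 * π ^ 2) ?_ (fun u hu => cosZeta_two (Ioo_subset_Icc_self hu)) fun _ _ => rfl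
  have hid : ∀ u : ℝ, HasDerivAt (fun x : ℝ => (x : ℂ)) 1 u := fun u =>
    (hasDerivAt_id u).ofReal_comp
  refine ⟨fun u => π ^ 2 * (2 * (u : ℂ) - 1), fun u _ => ⟨?_, ?_⟩⟩
  · refine (((((hid u).pow 2).sub (hid u)).add_const (1 / 6 : ℂ)).const_mul
      ((π : ℂ) ^ 2)).congr_deriv ?_
    simp
  · refine ((((hid u).const_mul (2 : ℂ)).sub_const (1 : ℂ)).const_mul
      ((π : ℂ) ^ 2)).congr_deriv ?_
    ring

lemma hasSecondDeriv_cosZeta_even (j : ℕ) :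
    HasSecondDeriv (fun u => HurwitzZeta.cosZeta (u : UnitAddCircle) (2 * (j + 1 : ℕ)))
      (fun u => -(4 * π ^ 2) * HurwitzZeta.cosZeta (u : UnitAddCircle) (2 * j)) := by
  rcases Nat.eq_zero_or_pos j with rfl | hj
  · refine hasSecondDeriv_cosZeta_two.congr (fun u _ => by simp) fun u _ => ?_
    rw [Nat.cast_zero, mul_zero, HurwitzZeta.cosZeta_apply_zero]
    ring
  · refine (hasSecondDeriv_cosZeta (s := 2 * (j + 1)) (by omega)).congr
      (fun u _ => by push_cast; rfl) fun u _ => ?_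
    rw [show 2 * (j + 1) - 2 = 2 * j by omega]
    push_cast
    rfl

lemma hasSecondDeriv_residualSum (H : ℕ) {A : ℝ} (hA : 0 < A) (m : ℤ) (K : ℕ) :
    HasSecondDeriv (residualSum H A m (K + 1)) (fun u => A ^ 2 * residualSum H A (m - 1) K u) := by
  have hA' : (A : ℂ) ≠ 0 := by exact_mod_cast hA.ne'
  have hpi : (π : ℂ) ≠ 0 := by exact_mod_cast Real.pi_ne_zero
  unfold residualSum
  simp_rw [Finset.sum_range_succ', Finset.mul_sum]
  refine ((HasSecondDeriv.sum (s := Finset.range K) fun j _ => (hasSecondDeriv_cosZeta_even j).const_mul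
    (4 * (-1) ^ (j + 1 + 1) * (A : ℂ) ^ (2 * ((j + 1 : ℕ) : ℤ) - 1) / (2 * π) ^ (2 * (j + 1)) *
    riemannZeta (2 * (2 * H + 1) * (m - (j + 1 : ℕ)) + (2 * H + 1) + 1))).add
    (HasSecondDeriv.const (4 * (-1) ^ (0 + 1) * (A : ℂ) ^ (2 * ((0 : ℕ) : ℤ) - 1) /
      (2 * π) ^ (2 * 0) *
    riemannZeta (2 * (2 * H + 1) * (m - (0 : ℕ)) + (2 * H + 1) + 1) * (-1 / 2)))).congr ?_ ?_
  · intro u _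
    congr 1
    simp only [CharP.cast_eq_zero, mul_zero]
    rw [HurwitzZeta.cosZeta_apply_zero]
  · intro u _
    rw [add_zero]
    refine Finset.sum_congr rfl fun j _ => ?_
    have hz : (A : ℂ) ^ (2 * ((j + 1 : ℕ) : ℤ) - 1) = A ^ (2 * (j : ℤ) - 1) * A ^ 2 := by
      rw [← zpow_natCast (A : ℂ) 2, ← zpow_add₀ hA']
      congr 1
      push_cast
      ring
    have hm : (2 * (2 * H + 1) * (m - (j + 1 : ℕ)) + (2 * H + 1) + 1 : ℂ) =
        2 * (2 * H + 1) * ((m - 1 : ℤ) - j) + (2 * H + 1) + 1 := by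
      push_cast
      ring
    rw [hz, hm, show 2 * (j + 1) = 2 * j + 2 by ring, pow_add (2 * π : ℂ) _ 2]
    field_simp
    ring

lemma summable_zpow_mul_exp_neg (H : ℕ) (e : ℤ) {c : ℝ} (hc : 0 < c) :
    Summable fun n : ℕ => ((n : ℝ) + 1) ^ e * rexp (-(c * ((n : ℝ) + 1) ^ (2 * H + 1))) := by
  have h := (summable_nat_add_iff 1).mpr (Real.summable_pow_mul_exp_neg_nat_mul e.natAbs hc)
  refine Summable.of_nonneg_of_le (fun n => by positivity) (fun n => ?_) h
  have hk : (1 : ℝ) ≤ (n : ℝ) + 1 := by linarith [(Nat.cast_nonneg n : (0 : ℝ) ≤ n)]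
  push_cast
  refine mul_le_mul ?_ ?_ (by positivity) (by positivity)
  · rw [← zpow_natCast]
    exact zpow_le_zpow_right₀ hk Int.le_natAbs
  · rw [Real.exp_le_exp, neg_mul, neg_le_neg_iff]
    exact mul_le_mul_of_nonneg_left (le_self_pow₀ hk (by omega)) hc.le

/-- The derivative of `symKer x`, up to the factor `x`. -/
noncomputable def symKer' (x u : ℝ) : ℝ :=
  (-rexp (-(u * x)) + rexp (-((1 - u) * x))) / (1 - rexp (-x))

lemma hasDerivAt_symKer (x u : ℝ) : HasDerivAt (symKer x) (x * symKer' x u) u := by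
  have h1 : HasDerivAt (fun u => rexp (-(u * x))) (rexp (-(u * x)) * (-(1 * x))) u :=
    ((hasDerivAt_id u).mul_const x).neg.exp
  have h2 : HasDerivAt (fun u => rexp (-((1 - u) * x))) (rexp (-((1 - u) * x)) * (-(-1 * x))) u :=
    (((hasDerivAt_id u).const_sub 1).mul_const x).neg.exp
  refine ((h1.add h2).div_const (1 - rexp (-x))).congr_deriv ?_
  rw [symKer']
  ring

lemma hasDerivAt_symKer' (x u : ℝ) : HasDerivAt (symKer' x) (x * symKer x u) u := by
  have h1 : HasDerivAt (fun u => rexp (-(u * x))) (rexp (-(u * x)) * (-(1 * x))) u :=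
    ((hasDerivAt_id u).mul_const x).neg.exp
  have h2 : HasDerivAt (fun u => rexp (-((1 - u) * x))) (rexp (-((1 - u) * x)) * (-(-1 * x))) u :=
    (((hasDerivAt_id u).const_sub 1).mul_const x).neg.exp
  refine ((h1.neg.add h2).div_const (1 - rexp (-x))).congr_deriv ?_
  rw [symKer]
  ring

lemma abs_symKer_le {A x u δ : ℝ} (hA : 0 < A) (hx : A ≤ x) (hu : u ∈ Icc δ (1 - δ)) :
    |symKer x u| ≤ 2 / (1 - rexp (-A)) * rexp (-(δ * x)) ∧
      |symKer' x u| ≤ 2 / (1 - rexp (-A)) * rexp (-(δ * x)) := by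
  have hx0 : 0 < x := hA.trans_le hx
  have h1 := one_sub_exp_neg_pos hA
  have h2 := one_sub_exp_neg_pos hx0
  have h3 : 1 - rexp (-A) ≤ 1 - rexp (-x) := by
    have : rexp (-x) ≤ rexp (-A) := by rw [Real.exp_le_exp]; linarith
    linarith
  have h4 : rexp (-(u * x)) ≤ rexp (-(δ * x)) := by
    rw [Real.exp_le_exp, neg_le_neg_iff]
    exact mul_le_mul_of_nonneg_right hu.1 hx0.le
  have h5 : rexp (-((1 - u) * x)) ≤ rexp (-(δ * x)) := by
    rw [Real.exp_le_exp, neg_le_neg_iff]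
    exact mul_le_mul_of_nonneg_right (by linarith [hu.2]) hx0.le
  have h6 := Real.exp_pos (-(u * x))
  have h7 := Real.exp_pos (-((1 - u) * x))
  have key : ∀ y : ℝ, |y| ≤ 2 * rexp (-(δ * x)) →
      |y / (1 - rexp (-x))| ≤ 2 / (1 - rexp (-A)) * rexp (-(δ * x)) := by
    intro y hy
    rw [abs_div, abs_of_pos h2, div_mul_eq_mul_div]
    exact div_le_div₀ (by positivity) hy h1 h3
  constructor
  · exact key _ (by rw [abs_le]; constructor <;> linarith)
  · exact key _ (by rw [abs_le]; constructor <;> linarith)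

lemma hasSecondDeriv_kerSum (H : ℕ) {A : ℝ} (hA : 0 < A) (m : ℤ) :
    HasSecondDeriv (fun u => (kerSum H A m u : ℂ)) (fun u => A ^ 2 * (kerSum H A (m - 1) u : ℂ)) := by
  have hn : ∀ n : ℕ, (0 : ℝ) < (n : ℝ) + 1 := fun n => by positivity
  have hx : ∀ n : ℕ, A ≤ A * ((n : ℝ) + 1) ^ (2 * H + 1) := fun n =>
    le_mul_of_one_le_right hA.le
      (one_le_pow₀ (by linarith [(Nat.cast_nonneg n : (0 : ℝ) ≤ n)]))
  have hbound : ∀ (e : ℤ) (c : ℝ) (δ : ℝ), 0 < δ → Summable fun n : ℕ => c * ((n : ℝ) + 1) ^ e *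
      (2 / (1 - rexp (-A)) * rexp (-(δ * (A * ((n : ℝ) + 1) ^ (2 * H + 1))))) := by
    intro e c δ hδ
    refine ((summable_zpow_mul_exp_neg H e (mul_pos hδ hA)).mul_left
      (c * (2 / (1 - rexp (-A))))).congr fun n => ?_
    rw [mul_assoc δ]
    ring
  set E : ℤ := -(2 * (2 * H + 1) * m + 1) with hE
  have hz : ∀ (n : ℕ) (d : ℕ), ((n : ℝ) + 1) ^ (E + ((2 * H + 1 : ℕ) : ℤ) * d) =
      ((n : ℝ) + 1) ^ E * (((n : ℝ) + 1) ^ (2 * H + 1)) ^ d := by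
    intro n d
    rw [zpow_add₀ (hn n).ne', zpow_mul, zpow_natCast, zpow_natCast]
  refine (hasSecondDeriv_tsum
    (f := fun (n : ℕ) (u : ℝ) => ((((n : ℝ) + 1) ^ E *
      symKer (A * ((n : ℝ) + 1) ^ (2 * H + 1)) u : ℝ) : ℂ))
    (f' := fun (n : ℕ) (u : ℝ) => ((((n : ℝ) + 1) ^ E *
      (A * ((n : ℝ) + 1) ^ (2 * H + 1) *
        symKer' (A * ((n : ℝ) + 1) ^ (2 * H + 1)) u) : ℝ) : ℂ))
    (g := fun (n : ℕ) (u : ℝ) => ((((n : ℝ) + 1) ^ E *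
      (A * ((n : ℝ) + 1) ^ (2 * H + 1) * (A * ((n : ℝ) + 1) ^ (2 * H + 1) *
        symKer (A * ((n : ℝ) + 1) ^ (2 * H + 1)) u)) : ℝ) : ℂ)) ?_ ?_ ?_ ?_ ?_).congr ?_ ?_
  · intro n u _
    exact ((hasDerivAt_symKer _ u).const_mul _).ofReal_comp
  · intro n u _
    exact (((hasDerivAt_symKer' _ u).const_mul _).const_mul _).ofReal_comp
  · intro u hu
    obtain ⟨δ, hδ, h1⟩ : ∃ δ > 0, u ∈ Icc δ (1 - δ) :=
      ⟨min u (1 - u), lt_min hu.1 (by linarith [hu.2]), min_le_left _ _,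
        by linarith [min_le_right u (1 - u)]⟩
    refine Summable.of_norm_bounded (hbound E 1 δ hδ) fun n => ?_
    rw [Complex.norm_real, Real.norm_eq_abs, abs_mul, abs_of_pos (zpow_pos (hn n) E), one_mul]
    exact mul_le_mul_of_nonneg_left (abs_symKer_le hA (hx n) h1).1 (zpow_pos (hn n) E).le
  · intro δ hδ
    refine ⟨_, hbound (E + ((2 * H + 1 : ℕ) : ℤ) * (1 : ℕ)) A δ hδ, fun n u hu => ?_⟩
    rw [Complex.norm_real, Real.norm_eq_abs, hz, pow_one]
    rw [show ((n : ℝ) + 1) ^ E * (A * ((n : ℝ) + 1) ^ (2 * H + 1) *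
      symKer' (A * ((n : ℝ) + 1) ^ (2 * H + 1)) u) =
      A * (((n : ℝ) + 1) ^ E * ((n : ℝ) + 1) ^ (2 * H + 1)) *
        symKer' (A * ((n : ℝ) + 1) ^ (2 * H + 1)) u by ring,
      abs_mul, abs_of_pos (a := A * _) (by positivity)]
    exact mul_le_mul_of_nonneg_left (abs_symKer_le hA (hx n) (Ioo_subset_Icc_self hu)).2
      (by positivity)
  · intro δ hδ
    refine ⟨_, hbound (E + ((2 * H + 1 : ℕ) : ℤ) * (2 : ℕ)) (A ^ 2) δ hδ, fun n u hu => ?_⟩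
    rw [Complex.norm_real, Real.norm_eq_abs, hz]
    rw [show ((n : ℝ) + 1) ^ E * (A * ((n : ℝ) + 1) ^ (2 * H + 1) *
      (A * ((n : ℝ) + 1) ^ (2 * H + 1) * symKer (A * ((n : ℝ) + 1) ^ (2 * H + 1)) u)) =
      A ^ 2 * (((n : ℝ) + 1) ^ E * (((n : ℝ) + 1) ^ (2 * H + 1)) ^ 2) *
        symKer (A * ((n : ℝ) + 1) ^ (2 * H + 1)) u by ring,
      abs_mul, abs_of_pos (a := A ^ 2 * _) (by positivity)]
    exact mul_le_mul_of_nonneg_left (abs_symKer_le hA (hx n) (Ioo_subset_Icc_self hu)).1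
      (by positivity)
  · intro u _
    rw [kerSum, Complex.ofReal_tsum]
  · intro u _
    rw [kerSum, Complex.ofReal_tsum, ← tsum_mul_left]
    refine tsum_congr fun n => ?_
    rw [show -(2 * (2 * H + 1) * (m - 1) + 1) = E + ((2 * H + 1 : ℕ) : ℤ) * (2 : ℕ) by
      push_cast; ring, hz]
    push_cast
    ring

lemma hasSum_pow_mul_cos_div {r : ℝ} (hr : r ∈ Ico (0 : ℝ) 1) (θ : ℝ) :
    HasSum (fun k : ℕ => r ^ (k + 1) * cos ((k + 1) * θ) / (k + 1))
      (-(1 / 2) * Real.log (1 - 2 * r * cos θ + r ^ 2)) := by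
  set z : ℂ := r * Complex.exp (θ * Complex.I) with hz
  have hnorm : ‖z‖ < 1 := by
    rw [hz, norm_mul, Complex.norm_exp_ofReal_mul_I, mul_one, Complex.norm_real,
      Real.norm_of_nonneg hr.1]
    exact hr.2
  have h := Complex.hasSum_re (Complex.hasSum_taylorSeries_neg_log hnorm)
  rw [← hasSum_nat_add_iff' 1] at h
  have hre : ∀ k : ℕ, (z ^ (k + 1) / ((k + 1 : ℕ) : ℂ)).re =
      r ^ (k + 1) * cos ((k + 1) * θ) / (k + 1) := by
    intro k
    have : z ^ (k + 1) / ((k + 1 : ℕ) : ℂ) =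
        ((r ^ (k + 1) / (k + 1) : ℝ) : ℂ) * Complex.exp ((((k + 1) * θ : ℝ) : ℂ) * Complex.I) := by
      rw [hz, mul_pow, ← Complex.exp_nat_mul]
      push_cast
      rw [← mul_assoc]
      ring
    rw [this, Complex.re_ofReal_mul, Complex.exp_ofReal_mul_I_re]
    ring
  simp only [hre] at h
  have hns : ‖1 - z‖ ^ 2 = 1 - 2 * r * cos θ + r ^ 2 := by
    rw [← Complex.normSq_eq_norm_sq, Complex.normSq_apply, hz]
    simp only [Complex.sub_re, Complex.one_re, Complex.re_ofReal_mul, Complex.exp_ofReal_mul_I_re,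
      Complex.sub_im, Complex.one_im, Complex.im_ofReal_mul, Complex.exp_ofReal_mul_I_im]
    nlinarith [Real.sin_sq_add_cos_sq θ]
  have hval : (-Complex.log (1 - z)).re - ∑ i ∈ Finset.range 1, (z ^ i / (i : ℂ)).re =
      -(1 / 2) * Real.log (1 - 2 * r * cos θ + r ^ 2) := by
    rw [← hns, Real.log_pow, Complex.neg_re, Complex.log_re]
    simp
  rwa [hval] at h

/-- The Clausen-type function `∑ sin(2πku)/k²`. -/
noncomputable def clausenSum (u : ℝ) : ℝ := ∑' k : ℕ, sin (2 * π * (k + 1) * u) / ((k : ℝ) + 1) ^ 2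

lemma hasDerivAt_abel_clausenSum {r : ℝ} (hr : r ∈ Ico (0 : ℝ) 1) (u : ℝ) :
    HasDerivAt (fun u => ∑' k : ℕ, r ^ (k + 1) * (sin (2 * π * (k + 1) * u) / ((k : ℝ) + 1) ^ 2))
      (-π * Real.log (1 - 2 * r * cos (2 * π * u) + r ^ 2)) u := by
  have hs : Summable fun k : ℕ => 2 * π * r ^ (k + 1) :=
    ((summable_nat_add_iff 1).mpr (summable_geometric_of_lt_one hr.1 hr.2)).mul_left _
  have hk : ∀ k : ℕ, (1 : ℝ) ≤ (k : ℝ) + 1 := fun k => by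
    linarith [(Nat.cast_nonneg k : (0 : ℝ) ≤ k)]
  have h := hasDerivAt_tsum (g := fun (k : ℕ) (u : ℝ) =>
      r ^ (k + 1) * (sin (2 * π * (k + 1) * u) / ((k : ℝ) + 1) ^ 2))
    (g' := fun (k : ℕ) (u : ℝ) => 2 * π * (r ^ (k + 1) * cos ((k + 1) * (2 * π * u)) / (k + 1)))
    (u := fun k => 2 * π * r ^ (k + 1)) hs (fun k y => ?_) (fun k y => ?_) (y₀ := 0) ?_ u
  · refine h.congr_deriv ?_
    rw [((hasSum_pow_mul_cos_div hr (2 * π * u)).mul_left (2 * π)).tsum_eq]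
    ring
  · refine ((((hasDerivAt_id y).const_mul (2 * π * ((k : ℝ) + 1))).sin.div_const
      (((k : ℝ) + 1) ^ 2)).const_mul (r ^ (k + 1))).congr_deriv ?_
    have := hk k
    rw [show ((k : ℝ) + 1) * (2 * π * y) = 2 * π * (k + 1) * id y by rw [id]; ring]
    field_simp
  · rw [Real.norm_eq_abs, abs_mul, abs_of_pos (by positivity : 0 < 2 * π), abs_div, abs_mul,
      abs_of_nonneg (pow_nonneg hr.1 _), abs_of_nonneg (a := (k : ℝ) + 1) (by positivity)]
    have h1 := Real.abs_cos_le_one ((k + 1) * (2 * π * y))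
    have h2 := pow_nonneg hr.1 (k + 1)
    gcongr
    rw [div_le_iff₀ (by positivity)]
    nlinarith [hk k, mul_le_mul_of_nonneg_left h1 h2, mul_le_mul_of_nonneg_left (hk k) h2]
  · simp [summable_zero]

lemma hasDerivAt_clausenSum {u : ℝ} (hu : u ∈ Ioo (0 : ℝ) 1) :
    HasDerivAt clausenSum (-(2 * π) * Real.log (2 * sin (π * u))) u := by
  have hcos : ∀ v : ℝ, 1 - cos (2 * π * v) = 2 * sin (π * v) ^ 2 := fun v => by
    rw [show 2 * π * v = 2 * (π * v) by ring, Real.cos_two_mul, Real.cos_sq']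
    ring
  have hsin : ∀ v ∈ Ioo (0 : ℝ) 1, 0 < sin (π * v) := fun v hv =>
    Real.sin_pos_of_pos_of_lt_pi (by have := hv.1; positivity) (by nlinarith [hv.2, Real.pi_pos])
  obtain ⟨κ, hκ, s, hs, hus, hsκ⟩ : ∃ κ > 0, ∃ s : Set ℝ, IsOpen s ∧ u ∈ s ∧
      ∀ v ∈ s, κ < 1 - cos (2 * π * v) := by
    refine ⟨(1 - cos (2 * π * u)) / 2, ?_, {v | (1 - cos (2 * π * u)) / 2 < 1 - cos (2 * π * v)},
      isOpen_lt (by fun_prop) (by fun_prop), ?_, fun v hv => hv⟩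
    · rw [hcos]; have := hsin u hu; positivity
    · have := hsin u hu
      rw [mem_ofPred_eq]
      have : 0 < 1 - cos (2 * π * u) := by rw [hcos]; positivity
      linarith
  have hunif : TendstoUniformlyOn
      (fun (r : ℝ) (v : ℝ) => -π * Real.log (1 - 2 * r * cos (2 * π * v) + r ^ 2))
      (fun v => -π * Real.log (2 - 2 * cos (2 * π * v))) (𝓝[<] 1) s := by
    rw [Metric.tendstoUniformlyOn_iff]
    intro ε hε
    have hlim : Tendsto (fun r : ℝ => π * (4 * (1 - r) / κ)) (𝓝[<] 1) (𝓝 0) := by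
      have : Tendsto (fun r : ℝ => π * (4 * (1 - r) / κ)) (𝓝 1) (𝓝 (π * (4 * (1 - 1) / κ))) :=
        Continuous.tendsto (by fun_prop) 1
      simp only [sub_self, mul_zero, zero_div] at this
      exact this.mono_left nhdsWithin_le_nhds
    have hmem : ∀ᶠ r : ℝ in 𝓝[<] 1, r ∈ Ioo (1 / 2 : ℝ) 1 :=
      Ioo_mem_nhdsLT (by norm_num)
    filter_upwards [hlim.eventually (gt_mem_nhds hε), hmem] with r h1 hr v hv
    have hc := hsκ v hv
    set c := cos (2 * π * v) with hcdef
    have hc1 : -1 ≤ c := Real.neg_one_le_cos _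
    have hc2 : c ≤ 1 := Real.cos_le_one _
    have ha : κ < 1 - 2 * r * c + r ^ 2 := by nlinarith [hr.1, hr.2, sq_nonneg (1 - r)]
    have hb : κ < 2 - 2 * c := by linarith
    have hdist : |(1 - 2 * r * c + r ^ 2) - (2 - 2 * c)| ≤ 4 * (1 - r) := by
      rw [abs_le]; constructor <;> nlinarith [hr.1, hr.2]
    have hlog : ∀ a b : ℝ, κ < a → κ < b → |a - b| ≤ 4 * (1 - r) →
        Real.log a - Real.log b ≤ 4 * (1 - r) / κ := by
      intro a b ha hb hab
      have hb0 : 0 < b := hκ.trans hb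
      rw [← Real.log_div (hκ.trans ha).ne' hb0.ne']
      refine (Real.log_le_sub_one_of_pos (div_pos (hκ.trans ha) hb0)).trans ?_
      rw [show a / b - 1 = (a - b) / b by field_simp]
      exact div_le_div₀ (by linarith [hr.2]) ((le_abs_self _).trans hab) hκ hb.le
    have h2 := hlog _ _ ha hb hdist
    have h3 := hlog _ _ hb ha (by rwa [abs_sub_comm])
    rw [Real.dist_eq, ← mul_sub, abs_mul, abs_neg, abs_of_pos Real.pi_pos]
    refine lt_of_le_of_lt ?_ h1
    gcongr
    rw [abs_le]
    constructor <;> linarith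
  have hev : ∀ᶠ r : ℝ in 𝓝[<] 1, r ∈ Ico (0 : ℝ) 1 := by
    filter_upwards [Ioo_mem_nhdsLT (by norm_num : (0 : ℝ) < 1)] with r hr using ⟨hr.1.le, hr.2⟩
  have hpt : ∀ v ∈ s, Tendsto (fun r : ℝ => ∑' k : ℕ, r ^ (k + 1) *
      (sin (2 * π * (k + 1) * v) / ((k : ℝ) + 1) ^ 2)) (𝓝[<] 1) (𝓝 (clausenSum v)) := by
    intro v _
    refine tendsto_tsum_of_dominated_convergence summable_one_div_succ_sq (fun k => ?_) ?_
    · have : Tendsto (fun r : ℝ => r ^ (k + 1) * (sin (2 * π * (k + 1) * v) / ((k : ℝ) + 1) ^ 2))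
          (𝓝 1) (𝓝 (1 ^ (k + 1) * (sin (2 * π * (k + 1) * v) / ((k : ℝ) + 1) ^ 2))) :=
        Continuous.tendsto (by fun_prop) 1
      rw [one_pow, one_mul] at this
      exact this.mono_left nhdsWithin_le_nhds
    · filter_upwards [hev] with r hr k
      rw [norm_mul, norm_div, norm_pow, norm_pow, Real.norm_eq_abs, Real.norm_eq_abs,
        Real.norm_eq_abs, abs_of_nonneg hr.1, abs_of_nonneg (by positivity : (0 : ℝ) ≤ (k : ℝ) + 1)]
      refine mul_le_of_le_one_left (by positivity) (pow_le_one₀ hr.1 hr.2.le) |>.trans ?_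
      gcongr
      exact Real.abs_sin_le_one _
  have := hasDerivAt_of_tendstoUniformlyOn hs hunif
    (hev.mono fun r hr v _ => hasDerivAt_abel_clausenSum hr v) hpt hus
  refine this.congr_deriv ?_
  rw [show 2 - 2 * cos (2 * π * u) = (2 * sin (π * u)) ^ 2 by linear_combination 2 * hcos u,
    Real.log_pow]
  push_cast
  ring

lemma hasSecondDeriv_cosZeta_three :
    HasSecondDeriv (fun u => HurwitzZeta.cosZeta (u : UnitAddCircle) 3)
      (fun u => 4 * π ^ 2 * (Real.log (2 * sin (π * u)) : ℂ)) := by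
  refine HasSecondDeriv.congr (f := fun u => ((∑' k : ℕ, cos (2 * π * (k + 1) * u) /
    ((k : ℝ) + 1) ^ 3 : ℝ) : ℂ)) ?_ (fun u _ => ?_) fun u _ => rfl
  · refine ⟨fun u => ((-(2 * π) * clausenSum u : ℝ) : ℂ), fun u hu => ⟨?_, ?_⟩⟩
    · apply HasDerivAt.ofReal_comp
      have h := hasDerivAt_tsum (g := fun (k : ℕ) (u : ℝ) =>
          cos (2 * π * (k + 1) * u) / ((k : ℝ) + 1) ^ 3)
        (g' := fun (k : ℕ) (u : ℝ) => -(2 * π) * (sin (2 * π * (k + 1) * u) / ((k : ℝ) + 1) ^ 2))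
        (summable_one_div_succ_sq.mul_left (2 * π)) (fun k y => ?_) (fun k y => ?_) (y₀ := 0) ?_ u
      · refine h.congr_deriv ?_
        rw [tsum_mul_left, clausenSum]
      · refine (((hasDerivAt_id y).const_mul (2 * π * ((k : ℝ) + 1))).cos.div_const
          (((k : ℝ) + 1) ^ 3)).congr_deriv ?_
        have : (k : ℝ) + 1 ≠ 0 := by positivity
        simp only [id_eq]
        field_simp
      · rw [norm_mul, norm_div, norm_pow, norm_neg, Real.norm_eq_abs, Real.norm_eq_abs,
          Real.norm_eq_abs, abs_of_pos (by positivity : (0 : ℝ) < (k : ℝ) + 1),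
          abs_of_pos (by positivity : (0 : ℝ) < 2 * π)]
        gcongr
        exact Real.abs_sin_le_one _
      · have := (summable_nat_add_iff 1).mpr (Real.summable_one_div_nat_pow.mpr
          (by norm_num : 1 < 3))
        simpa using this
    · refine ((hasDerivAt_clausenSum hu).const_mul (-(2 * π))).ofReal_comp.congr_deriv ?_
      push_cast
      ring
  · have := hasSum_cosZeta u (by norm_num : 2 ≤ 3)
    rw [Complex.ofReal_tsum]
    push_cast at this ⊢
    exact this.tsum_eq.symm

/-- The sum `∑_{l ∈ ℤ} |l + u|^e` over the integers, for `0 < u < 1`. -/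
noncomputable def latticeSum (e : ℤ) (u : ℝ) : ℝ :=
  ∑' n : ℕ, (((n : ℝ) + u) ^ e + ((n : ℝ) + 1 - u) ^ e)

lemma zpow_nat_add_le {e : ℤ} (he : e ≤ -2) {δ x : ℝ} (hδ : 0 < δ) (n : ℕ)
    (hx : δ * ((n : ℝ) + 1) ≤ x) : x ^ e ≤ δ ^ e * (1 / ((n : ℝ) + 1) ^ 2) := by
  have hk : (1 : ℝ) ≤ (n : ℝ) + 1 := by linarith [(Nat.cast_nonneg n : (0 : ℝ) ≤ n)]
  obtain ⟨d, rfl⟩ : ∃ d : ℕ, e = -((d : ℤ) + 2) := ⟨(-e - 2).toNat, by omega⟩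
  have hd : ∀ y : ℝ, y ^ (-((d : ℤ) + 2)) = (y ^ (d + 2))⁻¹ := fun y => by
    rw [zpow_neg]; norm_cast
  rw [hd, hd]
  calc (x ^ (d + 2))⁻¹ ≤ ((δ * ((n : ℝ) + 1)) ^ (d + 2))⁻¹ := by gcongr
    _ = (δ ^ (d + 2))⁻¹ * (1 / ((n : ℝ) + 1) ^ (d + 2)) := by rw [mul_pow]; field_simp
    _ ≤ _ := by
      gcongr
      omega

lemma lattice_term_bounds {e : ℤ} (he : e ≤ -2) {δ u : ℝ} (hδ : 0 < δ) (hu : u ∈ Icc δ (1 - δ))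
    (n : ℕ) : (0 ≤ ((n : ℝ) + u) ^ e ∧ ((n : ℝ) + u) ^ e ≤ δ ^ e * (1 / ((n : ℝ) + 1) ^ 2)) ∧
      (0 ≤ ((n : ℝ) + 1 - u) ^ e ∧ ((n : ℝ) + 1 - u) ^ e ≤ δ ^ e * (1 / ((n : ℝ) + 1) ^ 2)) := by
  have hn : (0 : ℝ) ≤ n := Nat.cast_nonneg n
  have h1 := hu.1
  have h2 := hu.2
  have hb : δ * ((n : ℝ) + 1) ≤ n + δ := by nlinarith
  have hp : 0 < δ * ((n : ℝ) + 1) := by positivity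
  refine ⟨⟨zpow_nonneg (by linarith) _, zpow_nat_add_le he hδ n (by linarith)⟩,
    zpow_nonneg (by linarith) _, zpow_nat_add_le he hδ n (by linarith)⟩

lemma exists_mem_Icc_of_mem_Ioo {u : ℝ} (hu : u ∈ Ioo (0 : ℝ) 1) : ∃ δ > 0, u ∈ Icc δ (1 - δ) :=
  ⟨min u (1 - u), lt_min hu.1 (by linarith [hu.2]), min_le_left _ _,
    by linarith [min_le_right u (1 - u)]⟩

lemma summable_lattice_left {e : ℤ} (he : e ≤ -2) {u : ℝ} (hu : u ∈ Ioo (0 : ℝ) 1) :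
    Summable fun n : ℕ => ((n : ℝ) + u) ^ e := by
  obtain ⟨δ, hδ, h⟩ := exists_mem_Icc_of_mem_Ioo hu
  exact Summable.of_nonneg_of_le (fun n => (lattice_term_bounds he hδ h n).1.1)
    (fun n => (lattice_term_bounds he hδ h n).1.2) (summable_one_div_succ_sq.mul_left _)

lemma summable_lattice_right {e : ℤ} (he : e ≤ -2) {u : ℝ} (hu : u ∈ Ioo (0 : ℝ) 1) :
    Summable fun n : ℕ => ((n : ℝ) + 1 - u) ^ e := by
  obtain ⟨δ, hδ, h⟩ := exists_mem_Icc_of_mem_Ioo hu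
  exact Summable.of_nonneg_of_le (fun n => (lattice_term_bounds he hδ h n).2.1)
    (fun n => (lattice_term_bounds he hδ h n).2.2) (summable_one_div_succ_sq.mul_left _)

lemma hasSecondDeriv_latticeSum {e : ℤ} (he : e ≤ -2) :
    HasSecondDeriv (fun u => (latticeSum e u : ℂ))
      (fun u => e * (e - 1) * (latticeSum (e - 2) u : ℂ)) := by
  have hpos : ∀ (n : ℕ), ∀ u ∈ Ioo (0 : ℝ) 1, (n : ℝ) + u ≠ 0 ∧ (n : ℝ) + 1 - u ≠ 0 := by
    intro n u hu
    have hn : (0 : ℝ) ≤ n := Nat.cast_nonneg n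
    have h1 := hu.1
    have h2 := hu.2
    exact ⟨by linarith, by linarith⟩
  have hd : ∀ (a : ℤ) (n : ℕ), ∀ u ∈ Ioo (0 : ℝ) 1,
      HasDerivAt (fun u => ((n : ℝ) + u) ^ a) (a * ((n : ℝ) + u) ^ (a - 1)) u ∧
      HasDerivAt (fun u => ((n : ℝ) + 1 - u) ^ a) (-(a * ((n : ℝ) + 1 - u) ^ (a - 1))) u := by
    intro a n u hu
    exact ⟨(hasDerivAt_zpow a _ (Or.inl (hpos n u hu).1)).comp_const_add (n : ℝ) u,
      (hasDerivAt_zpow a _ (Or.inl (hpos n u hu).2)).comp_const_sub ((n : ℝ) + 1) u⟩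
  refine (hasSecondDeriv_tsum
    (f := fun (n : ℕ) (u : ℝ) => ((((n : ℝ) + u) ^ e + ((n : ℝ) + 1 - u) ^ e : ℝ) : ℂ))
    (f' := fun (n : ℕ) (u : ℝ) => ((e * ((n : ℝ) + u) ^ (e - 1) +
      -(e * ((n : ℝ) + 1 - u) ^ (e - 1)) : ℝ) : ℂ))
    (g := fun (n : ℕ) (u : ℝ) => ((e * ((e - 1 : ℤ) * ((n : ℝ) + u) ^ (e - 1 - 1)) +
      -(e * -((e - 1 : ℤ) * ((n : ℝ) + 1 - u) ^ (e - 1 - 1))) : ℝ) : ℂ)) ?_ ?_ ?_ ?_ ?_).congr ?_ ?_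
  · intro n u hu
    exact ((hd e n u hu).1.add (hd e n u hu).2).ofReal_comp
  · intro n u hu
    exact (((hd (e - 1) n u hu).1.const_mul (e : ℝ)).add
      ((hd (e - 1) n u hu).2.const_mul (e : ℝ)).neg).ofReal_comp
  · intro u hu
    exact Complex.ofRealCLM.summable ((summable_lattice_left he hu).add (summable_lattice_right he hu))
  · intro δ hδ
    refine ⟨fun n => |(e : ℝ)| * (δ ^ (e - 1) * (1 / ((n : ℝ) + 1) ^ 2)) +
      |(e : ℝ)| * (δ ^ (e - 1) * (1 / ((n : ℝ) + 1) ^ 2)),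
      (((summable_one_div_succ_sq.mul_left _).mul_left _).add
        ((summable_one_div_succ_sq.mul_left _).mul_left _)), fun n u hu => ?_⟩
    obtain ⟨⟨h1, h2⟩, h3, h4⟩ := lattice_term_bounds (by omega : e - 1 ≤ -2) hδ
      (Ioo_subset_Icc_self hu) n
    rw [Complex.norm_real]
    refine (norm_add_le _ _).trans ?_
    rw [norm_neg, norm_mul, norm_mul, Real.norm_of_nonneg h1, Real.norm_of_nonneg h3,
      Real.norm_eq_abs]
    exact add_le_add (mul_le_mul_of_nonneg_left h2 (abs_nonneg _))
      (mul_le_mul_of_nonneg_left h4 (abs_nonneg _))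
  · intro δ hδ
    refine ⟨fun n => |(e : ℝ)| * (|((e - 1 : ℤ) : ℝ)| * (δ ^ (e - 1 - 1) * (1 / ((n : ℝ) + 1) ^ 2))) +
      |(e : ℝ)| * (|((e - 1 : ℤ) : ℝ)| * (δ ^ (e - 1 - 1) * (1 / ((n : ℝ) + 1) ^ 2))),
      ((((summable_one_div_succ_sq.mul_left _).mul_left _).mul_left _).add
        (((summable_one_div_succ_sq.mul_left _).mul_left _).mul_left _)), fun n u hu => ?_⟩
    obtain ⟨⟨h1, h2⟩, h3, h4⟩ := lattice_term_bounds (by omega : e - 1 - 1 ≤ -2) hδ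
      (Ioo_subset_Icc_self hu) n
    rw [Complex.norm_real]
    refine (norm_add_le _ _).trans ?_
    rw [norm_neg, norm_mul, norm_mul, norm_mul, norm_neg, norm_mul, Real.norm_of_nonneg h1,
      Real.norm_of_nonneg h3, Real.norm_eq_abs, Real.norm_eq_abs]
    exact add_le_add
      (mul_le_mul_of_nonneg_left (mul_le_mul_of_nonneg_left h2 (abs_nonneg _)) (abs_nonneg _))
      (mul_le_mul_of_nonneg_left (mul_le_mul_of_nonneg_left h4 (abs_nonneg _)) (abs_nonneg _))
  · intro u _
    rw [latticeSum, Complex.ofReal_tsum]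
  · intro u _
    rw [latticeSum, Complex.ofReal_tsum, ← tsum_mul_left]
    refine tsum_congr fun n => ?_
    rw [show e - 1 - 1 = e - 2 by ring]
    push_cast
    ring

lemma hasSecondDeriv_log_sin :
    HasSecondDeriv (fun u => -(Real.log (2 * sin (π * u)) : ℂ)) (fun u => latticeSum (-2) u) := by
  have hsin : ∀ v ∈ Ioo (0 : ℝ) 1, 0 < sin (π * v) := fun v hv =>
    Real.sin_pos_of_pos_of_lt_pi (by have := hv.1; positivity) (by nlinarith [hv.2, Real.pi_pos])
  refine ⟨fun u => ((-(π * (cos (π * u) / sin (π * u))) : ℝ) : ℂ), fun u hu => ⟨?_, ?_⟩⟩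
  · have h1 : HasDerivAt (fun u => sin (π * u)) (cos (π * u) * (π * 1)) u :=
      ((hasDerivAt_id u).const_mul π).sin
    have h2 := ((h1.const_mul 2).log (by have := hsin u hu; positivity)).neg.ofReal_comp
    refine (h2.congr_deriv ?_).congr_of_eventuallyEq (Eventually.of_forall fun v =>
      (Complex.ofReal_neg _).symm)
    congr 1
    have := (hsin u hu).ne'
    field_simp
  · have hmem : ∀ v ∈ Ioo (0 : ℝ) 1, (v : ℂ) ∈ Complex.integerComplement := by
      rintro v hv ⟨l, hl⟩
      have hl' : (l : ℝ) = v := by exact_mod_cast hl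
      have h1 : (0 : ℝ) < l := by rw [hl']; exact hv.1
      have h2 : (l : ℝ) < 1 := by rw [hl']; exact hv.2
      have h3 : 0 < l := by exact_mod_cast h1
      have h4 : l < 1 := by exact_mod_cast h2
      omega
    have hterm : ∀ (v : ℝ) (n : ℕ), 1 / ((v : ℂ) - (n + 1)) + 1 / ((v : ℂ) + (n + 1)) =
        (((n + 1 + v) ^ (-1 : ℤ) - (n + 1 - v) ^ (-1 : ℤ) : ℝ) : ℂ) := by
      intro v n
      push_cast
      rw [zpow_neg_one, zpow_neg_one, one_div, one_div, ← neg_sub ((n : ℂ) + 1) v, inv_neg,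
        add_comm (v : ℂ)]
      ring
    have hcot : ∀ v ∈ Ioo (0 : ℝ) 1, -(π * (cos (π * v) / sin (π * v))) =
        -v ^ (-1 : ℤ) - ∑' n : ℕ, (((n : ℝ) + 1 + v) ^ (-1 : ℤ) - ((n : ℝ) + 1 - v) ^ (-1 : ℤ)) := by
      intro v hv
      apply Complex.ofReal_injective
      have h := cot_series_rep' (hmem v hv)
      simp_rw [hterm, ← Complex.ofReal_tsum] at h
      rw [Complex.ofReal_sub, ← h, Complex.cot]
      push_cast
      rw [zpow_neg_one]
      ring
    obtain ⟨δ, hδ, hδu⟩ : ∃ δ > 0, u ∈ Ioo δ (1 - δ) := by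
      have h1 := hu.1
      have h2 := hu.2
      exact ⟨min u (1 - u) / 2, half_pos (lt_min h1 (by linarith)),
        by linarith [min_le_left u (1 - u)], by linarith [min_le_right u (1 - u)]⟩
    have hsub : ∀ v ∈ Ioo δ (1 - δ), v ∈ Ioo (0 : ℝ) 1 := fun v hv =>
      ⟨hδ.trans hv.1, by linarith [hv.2]⟩
    have hpos : ∀ (n : ℕ), ∀ v ∈ Ioo δ (1 - δ),
        δ * ((n : ℝ) + 1) ≤ n + 1 + v ∧ δ * ((n : ℝ) + 1) ≤ n + 1 - v := by
      intro n v hv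
      have hn : (0 : ℝ) ≤ n := Nat.cast_nonneg n
      have h1 := hv.1
      have h2 := hv.2
      constructor <;> nlinarith
    have hpos' : ∀ n : ℕ, 0 < δ * ((n : ℝ) + 1) := fun n => by positivity
    have hsum := hasDerivAt_tsum_of_isPreconnected
      (g := fun (n : ℕ) (v : ℝ) => ((n : ℝ) + 1 + v) ^ (-1 : ℤ) - ((n : ℝ) + 1 - v) ^ (-1 : ℤ))
      (g' := fun (n : ℕ) (v : ℝ) => -(((n : ℝ) + 1 + v) ^ (-2 : ℤ) + ((n : ℝ) + 1 - v) ^ (-2 : ℤ)))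
      (u := fun n : ℕ => δ ^ (-2 : ℤ) * (1 / ((n : ℝ) + 1) ^ 2) +
        δ ^ (-2 : ℤ) * (1 / ((n : ℝ) + 1) ^ 2))
      ((summable_one_div_succ_sq.mul_left _).add (summable_one_div_succ_sq.mul_left _))
      isOpen_Ioo isPreconnected_Ioo (fun n v hv => ?_) (fun n v hv => ?_) hδu ?_ hδu
    · have hfin := ((hasDerivAt_zpow (-1) u (Or.inl hu.1.ne')).neg.sub hsum).ofReal_comp
      refine (hfin.congr_deriv ?_).congr_of_eventuallyEq ?_
      · congr 1
        have hs1 := summable_lattice_left (le_refl (-2)) hu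
        have hs2 := summable_lattice_right (le_refl (-2)) hu
        have hs3 := (summable_nat_add_iff 1).mpr hs1
        push_cast at hs3
        rw [latticeSum, hs1.tsum_add hs2, hs1.tsum_eq_zero_add, tsum_neg, hs3.tsum_add hs2]
        norm_num
        ring
      · filter_upwards [isOpen_Ioo.mem_nhds hu] with v hv
        exact congrArg _ (hcot v hv)
    · have h1 := (hasDerivAt_zpow (-1) ((n : ℝ) + 1 + v)
        (Or.inl ((hpos' n).trans_le (hpos n v hv).1).ne')).comp_const_add ((n : ℝ) + 1) v
      have h2 := (hasDerivAt_zpow (-1) ((n : ℝ) + 1 - v)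
        (Or.inl ((hpos' n).trans_le (hpos n v hv).2).ne')).comp_const_sub ((n : ℝ) + 1) v
      refine (h1.sub h2).congr_deriv ?_
      norm_num
      ring
    · rw [norm_neg]
      refine (norm_add_le _ _).trans ?_
      rw [Real.norm_of_nonneg (zpow_nonneg ((hpos' n).le.trans (hpos n v hv).1) _),
        Real.norm_of_nonneg (zpow_nonneg ((hpos' n).le.trans (hpos n v hv).2) _)]
      exact add_le_add (zpow_nat_add_le le_rfl hδ n (hpos n v hv).1)
        (zpow_nat_add_le le_rfl hδ n (hpos n v hv).2)
    · have h := summable_cotTerm (hmem u hu)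
      simp only [cotTerm, hterm] at h
      exact Complex.summable_ofReal.mp h

lemma Gamma_mul_cos (M : ℕ) :
    Complex.Gamma (2 * (M + 1 : ℕ)) * Complex.cos (π * (2 * (M + 1 : ℕ)) / 2) =
      (2 * M + 1).factorial * (-1) ^ (M + 1) := by
  congr 1
  · rw [show (2 * ((M + 1 : ℕ) : ℂ)) = ((2 * M + 1 : ℕ) : ℂ) + 1 by push_cast; ring,
      Complex.Gamma_nat_eq_factorial]
  · rw [show (π * (2 * ((M + 1 : ℕ) : ℂ)) / 2) = ((M + 1 : ℕ) : ℂ) * π by ring]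
    exact_mod_cast congrArg (fun x : ℝ => (x : ℂ)) (Real.cos_nat_mul_pi (M + 1))

lemma cosZeta_one_sub_even (a : UnitAddCircle) (M : ℕ) :
    HurwitzZeta.cosZeta a (1 - 2 * (M + 1 : ℕ)) =
      2 * (2 * π) ^ (-(2 * (M + 1 : ℕ) : ℤ)) * (2 * M + 1).factorial * (-1) ^ (M + 1) *
        HurwitzZeta.hurwitzZetaEven a (2 * (M + 1 : ℕ)) := by
  rw [HurwitzZeta.cosZeta_one_sub, mul_assoc (2 * _) (Complex.Gamma _), Gamma_mul_cos,
    ← Complex.cpow_intCast]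
  · push_cast
    ring_nf
  · intro n h
    have h1 : ((2 * (M + 1) : ℤ) : ℂ) = ((1 - n : ℤ) : ℂ) := by push_cast; push_cast at h; exact h
    have h2 : (2 * (M + 1) : ℤ) = 1 - n := by exact_mod_cast h1
    omega

lemma hurwitzZetaEven_eq_latticeSum {u : ℝ} (hu : u ∈ Ioo (0 : ℝ) 1) (M : ℕ) :
    HurwitzZeta.hurwitzZetaEven (u : UnitAddCircle) (2 * (M + 1 : ℕ)) =
      1 / 2 * (latticeSum (-(2 * (M + 1 : ℕ))) u : ℂ) := by
  have h := HurwitzZeta.hasSum_nat_hurwitzZetaEven_of_mem_Icc (Ioo_subset_Icc_self hu)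
    (s := 2 * (M + 1 : ℕ)) (by
      have : (0 : ℝ) ≤ M := Nat.cast_nonneg M
      simp
      linarith)
  rw [← h.tsum_eq, latticeSum, Complex.ofReal_tsum, ← tsum_mul_left]
  refine tsum_congr fun n => ?_
  rw [show (2 * ((M + 1 : ℕ) : ℂ)) = ((2 * (M + 1) : ℕ) : ℂ) by push_cast; ring,
    Complex.cpow_natCast, Complex.cpow_natCast,
    show (-(2 * ((M + 1 : ℕ) : ℤ))) = -((2 * (M + 1) : ℕ) : ℤ) by push_cast; ring,
    zpow_neg, zpow_neg, zpow_natCast, zpow_natCast]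
  push_cast
  rw [one_div, one_div]
  ring

lemma oddCosZeta_neg {u : ℝ} (hu : u ∈ Ioo (0 : ℝ) 1) (M : ℕ) :
    oddCosZeta (-(M + 1 : ℕ)) u = (2 * π) ^ (-(2 * (M + 1 : ℕ) : ℤ)) * (2 * M + 1).factorial *
      (-1) ^ (M + 1) * (latticeSum (-(2 * (M + 1 : ℕ))) u : ℂ) := by
  rw [oddCosZeta, if_neg (by omega), show (2 * ((-(M + 1 : ℕ) : ℤ) : ℂ) + 1) = 1 - 2 * (M + 1 : ℕ) by
    push_cast; ring, cosZeta_one_sub_even, hurwitzZetaEven_eq_latticeSum hu]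
  ring

lemma hasSecondDeriv_oddCosZeta (m : ℤ) :
    HasSecondDeriv (oddCosZeta m) (fun u => -(4 * π ^ 2) * oddCosZeta (m - 1) u) := by
  have hpi : (π : ℂ) ≠ 0 := by exact_mod_cast Real.pi_ne_zero
  rcases lt_trichotomy m 0 with hm | rfl | hm
  · obtain ⟨M, rfl⟩ : ∃ M : ℕ, m = -(M + 1 : ℕ) := ⟨(-m - 1).toNat, by omega⟩
    refine ((hasSecondDeriv_latticeSum (e := -(2 * (M + 1 : ℕ))) (by push_cast; omega)).const_mul
      ((2 * π) ^ (-(2 * (M + 1 : ℕ) : ℤ)) * (2 * M + 1).factorial * (-1) ^ (M + 1))).congr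
      (fun u hu => oddCosZeta_neg hu M) fun u hu => ?_
    rw [show (-(M + 1 : ℕ) - 1 : ℤ) = -((M + 1) + 1 : ℕ) by push_cast; ring, oddCosZeta_neg hu,
      show (-(2 * ((M + 1) + 1 : ℕ) : ℤ)) = -(2 * (M + 1 : ℕ)) - 2 by push_cast; ring,
      show (2 * (M + 1) + 1) = (2 * M + 1) + 1 + 1 by ring, Nat.factorial_succ, Nat.factorial_succ,
      zpow_sub₀ (by simp)]
    push_cast
    field_simp
    norm_num
    ring
  · refine hasSecondDeriv_log_sin.congr (fun u _ => by rw [oddCosZeta, if_pos rfl]) fun u hu => ?_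
    rw [show (0 - 1 : ℤ) = -(0 + 1 : ℕ) by norm_num, oddCosZeta_neg hu]
    norm_num
    field_simp
    norm_num
  · rcases (by omega : m = 1 ∨ 2 ≤ m) with rfl | hm2
    · refine hasSecondDeriv_cosZeta_three.congr (fun u _ => ?_) fun u _ => ?_
      · rw [oddCosZeta, if_neg one_ne_zero]
        norm_num
      · rw [oddCosZeta, if_pos (by norm_num)]
        ring
    · lift m to ℕ using hm.le
      refine (hasSecondDeriv_cosZeta (s := 2 * m + 1) (by omega)).congr (fun u _ => ?_) fun u _ => ?_
      · rw [oddCosZeta, if_neg (by omega)]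
        push_cast
        rfl
      · rw [oddCosZeta, if_neg (by omega), show 2 * m + 1 - 2 = 2 * (m - 1) + 1 by omega]
        push_cast [show 1 ≤ m by omega]
        rfl

lemma CoreIdentity.descend {H : ℕ} {A : ℝ} (hA : 0 < A) {m : ℤ} {K : ℕ}
    (h : ∀ u ∈ Ioo (0 : ℝ) 1, CoreIdentity H A m (K + 1) u) {u : ℝ} (hu : u ∈ Ioo (0 : ℝ) 1) :
    CoreIdentity H A (m - 1) K u := by
  have hA' : (A : ℂ) ≠ 0 := by exact_mod_cast hA.ne'
  have hpi : (π : ℂ) ≠ 0 := by exact_mod_cast Real.pi_ne_zero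
  have h1 := (((hasSecondDeriv_oddCosZeta m).const_mul (1 / 2)).add
    ((hasSecondDeriv_planckCos H hA m).const_mul ((-1) ^ H))).const_mul
      (2 * (-1) ^ m / (2 * H + 1) * (A / (2 * π)) ^ (2 * m)) |>.add
        (hasSecondDeriv_residualSum H hA m K)
  have h2 := (hasSecondDeriv_kerSum H hA m).unique
    (h1.congr (fun v hv => h v hv) fun _ _ => rfl) hu
  have h3 : (A : ℂ) ^ 2 ≠ 0 := pow_ne_zero 2 hA'
  rw [CoreIdentity]
  apply mul_left_cancel₀ h3
  rw [h2, show 2 * m = 2 * (m - 1) + 2 by ring, zpow_add₀ (div_ne_zero hA' (by simp)),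
    zpow_sub_one₀ (by norm_num : (-1 : ℂ) ≠ 0)]
  field_simp
  norm_num
  ring

/-- The transformation formula for every integer `m`. -/
theorem coreIdentity (H : ℕ) {A : ℝ} (hA : 0 < A) (m : ℤ) (K : ℕ) (hK : m + 2 ≤ K) {u : ℝ}
    (hu : u ∈ Ioo (0 : ℝ) 1) : CoreIdentity H A m K u := by
  rcases le_or_gt 1 m with hm | hm
  · lift m to ℕ using by omega
    exact coreIdentity_of_pos hA (by omega) (by omega) (Ioo_subset_Icc_self hu)
  · have key : ∀ d : ℕ, ∀ K : ℕ, 1 - (d : ℤ) + 2 ≤ K → ∀ u ∈ Ioo (0 : ℝ) 1,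
        CoreIdentity H A (1 - d) K u := by
      intro d
      induction d with
      | zero =>
        intro K hK u hu
        have := coreIdentity_of_pos (H := H) hA (m := 1) le_rfl (by omega : 1 + 2 ≤ K)
          (Ioo_subset_Icc_self hu)
        simpa using this
      | succ d ih =>
        intro K hK u hu
        have := CoreIdentity.descend hA (fun v hv => ih (K + 1) (by push_cast at hK ⊢; omega) v hv) hu
        rwa [show (1 - ((d + 1 : ℕ) : ℤ)) = 1 - d - 1 by push_cast; ring]
    obtain ⟨d, rfl⟩ : ∃ d : ℕ, m = 1 - d := ⟨(1 - m).toNat, by omega⟩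
    exact key d K hK u hu

/-- An Abelian theorem for Mellin transforms at `0`. -/
lemma tendsto_mul_mellin {G : ℝ → ℂ} {B : ℝ} {L : ℂ} (hG : ContinuousOn G (Ioi 0))
    (hB : ∀ t > 0, ‖G t‖ ≤ B * rexp (-t)) (hL : Tendsto G (𝓝[>] 0) (𝓝 L)) :
    Tendsto (fun s : ℝ => (s : ℂ) * mellin G s) (𝓝[>] 0) (𝓝 L) := by
  have hB0 : 0 ≤ B := by
    have := (norm_nonneg _).trans (hB 1 one_pos)
    exact nonneg_of_mul_nonneg_left this (Real.exp_pos _)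
  have hrepr : ∀ s : ℝ, 0 < s → (s : ℂ) * mellin G s = ∫ y in Ioi (0 : ℝ), G (y ^ s⁻¹) := by
    intro s hs
    rw [← MeasureTheory.integral_comp_rpow_Ioi (fun y => G (y ^ s⁻¹)) hs.ne', mellin,
      ← MeasureTheory.integral_const_mul]
    refine MeasureTheory.setIntegral_congr_fun measurableSet_Ioi fun x hx => ?_
    have hx0 : (0 : ℝ) < x := hx
    rw [← Real.rpow_mul hx0.le, mul_inv_cancel₀ hs.ne', Real.rpow_one, abs_of_pos hs,
      Complex.real_smul, Complex.ofReal_mul, Complex.ofReal_cpow hx0.le, smul_eq_mul]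
    push_cast
    ring
  have hlimit : L = ∫ y in Ioi (0 : ℝ), (Iio (1 : ℝ)).indicator (fun _ => L) y := by
    rw [MeasureTheory.setIntegral_indicator measurableSet_Iio, Ioi_inter_Iio,
      MeasureTheory.setIntegral_const]
    simp
  rw [hlimit]
  have hev : ∀ᶠ s : ℝ in 𝓝[>] 0, s ∈ Ioo (0 : ℝ) 1 := Ioo_mem_nhdsGT one_pos
  refine Tendsto.congr' (f₁ := fun s : ℝ => ∫ y in Ioi (0 : ℝ), G (y ^ s⁻¹)) ?_ ?_
  · filter_upwards [hev] with s hs using (hrepr s hs.1).symm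
  refine MeasureTheory.tendsto_integral_filter_of_dominated_convergence
    (fun y => B * rexp 1 * rexp (-y)) ?_ ?_ ?_ ?_
  · filter_upwards [hev] with s hs
    refine ContinuousOn.aestronglyMeasurable (hG.comp ?_ fun y hy => ?_) measurableSet_Ioi
    · exact continuousOn_id.rpow_const fun y hy => Or.inl (ne_of_gt hy)
    · exact Real.rpow_pos_of_pos hy _
  · filter_upwards [hev] with s hs
    filter_upwards [MeasureTheory.self_mem_ae_restrict measurableSet_Ioi] with y hy
    have hy0 : (0 : ℝ) < y := hy
    have hp := Real.rpow_pos_of_pos hy0 s⁻¹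
    refine (hB _ hp).trans ?_
    rw [mul_assoc, ← Real.exp_add]
    refine mul_le_mul_of_nonneg_left (Real.exp_le_exp.mpr ?_) hB0
    rcases le_total y 1 with h | h
    · linarith
    · have : y ^ (1 : ℝ) ≤ y ^ s⁻¹ :=
        Real.rpow_le_rpow_of_exponent_le h ((one_le_inv₀ hs.1).mpr hs.2.le)
      rw [Real.rpow_one] at this
      linarith
  · exact (integrableOn_exp_neg_Ioi 0).const_mul _
  · have hne : ∀ᵐ y : ℝ ∂MeasureTheory.volume.restrict (Ioi 0), y ≠ 1 :=
      MeasureTheory.ae_restrict_of_ae (MeasureTheory.Measure.ae_ne _ 1)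
    filter_upwards [MeasureTheory.self_mem_ae_restrict measurableSet_Ioi, hne] with y hy hy1
    have hy0 : (0 : ℝ) < y := hy
    rcases lt_or_gt_of_ne hy1 with h | h
    · rw [indicator_of_mem (show y ∈ Iio (1 : ℝ) from h)]
      refine hL.comp (tendsto_nhdsWithin_iff.mpr ⟨?_, Eventually.of_forall fun s =>
        Real.rpow_pos_of_pos hy0 _⟩)
      exact (tendsto_rpow_atTop_of_base_lt_one y (by linarith) h).comp tendsto_inv_nhdsGT_zero
    · rw [indicator_of_notMem (by simpa using h.le)]
      have h1 : Tendsto (fun s : ℝ => y ^ s⁻¹) (𝓝[>] 0) atTop :=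
        (tendsto_rpow_atTop_of_base_gt_one y h).comp tendsto_inv_nhdsGT_zero
      refine squeeze_zero_norm (fun s => hB _ (Real.rpow_pos_of_pos hy0 _)) ?_
      have := (Real.tendsto_exp_neg_atTop_nhds_zero.comp h1).const_mul B
      simpa using this

lemma summable_pow_mul_exp_neg_pow (p : ℕ) {N : ℕ} (hN : N ≠ 0) {t : ℝ} (ht : 0 < t) :
    Summable fun n : ℕ => (n : ℝ) ^ p * rexp (-(n : ℝ) ^ N * t) := by
  refine Summable.of_nonneg_of_le (fun n => by positivity) (fun n => ?_)
    (Real.summable_pow_mul_exp_neg_nat_mul p ht)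
  have h1 : (n : ℝ) ≤ (n : ℝ) ^ N := by exact_mod_cast Nat.le_self_pow hN n
  refine mul_le_mul_of_nonneg_left (Real.exp_le_exp.mpr ?_) (by positivity)
  nlinarith

/-- The alternating series `∑ (-1)ⁿ n^p e^{-n^N t}`. -/
noncomputable def altExpSum (p N : ℕ) (t : ℝ) : ℂ :=
  ∑' n : ℕ, ((-1) ^ n * (n : ℂ) ^ p) * (rexp (-(n : ℝ) ^ N * t) : ℂ)

lemma norm_altExpSum_term (p N n : ℕ) (t : ℝ) :
    ‖((-1) ^ n * (n : ℂ) ^ p) * (rexp (-(n : ℝ) ^ N * t) : ℂ)‖ =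
      (n : ℝ) ^ p * rexp (-(n : ℝ) ^ N * t) := by
  rw [norm_mul, norm_mul, norm_pow, norm_pow, norm_neg, norm_one, one_pow, one_mul,
    Complex.norm_natCast, Complex.norm_real, Real.norm_of_nonneg (Real.exp_pos _).le]

lemma hasSum_altExpSum (p : ℕ) {N : ℕ} (hN : N ≠ 0) {t : ℝ} (ht : 0 < t) :
    HasSum (fun n : ℕ => ((-1) ^ n * (n : ℂ) ^ p) * (rexp (-(n : ℝ) ^ N * t) : ℂ))
      (altExpSum p N t) :=
  (Summable.of_norm_bounded (summable_pow_mul_exp_neg_pow p hN ht)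
    fun n => (norm_altExpSum_term p N n t).le).hasSum

lemma continuousOn_altExpSum (p : ℕ) {N : ℕ} (hN : N ≠ 0) :
    ContinuousOn (altExpSum p N) (Ioi 0) := by
  intro t ht
  have ht0 : (0 : ℝ) < t := ht
  refine ContinuousAt.continuousWithinAt ?_
  refine ContinuousOn.continuousAt (s := Ioi (t / 2)) ?_ (Ioi_mem_nhds (by linarith))
  refine continuousOn_tsum (u := fun n : ℕ => (n : ℝ) ^ p * rexp (-(n : ℝ) ^ N * (t / 2)))
    (fun n => by fun_prop) (summable_pow_mul_exp_neg_pow p hN (by linarith)) fun n x hx => ?_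
  rw [norm_altExpSum_term]
  have : t / 2 < x := hx
  refine mul_le_mul_of_nonneg_left (Real.exp_le_exp.mpr ?_) (by positivity)
  have h0 : (0 : ℝ) ≤ (n : ℝ) ^ N := by positivity
  nlinarith

lemma exists_altExpSum_bound {p : ℕ} (hp : p ≠ 0) {N : ℕ} (hN : N ≠ 0) {L : ℂ}
    (hL : Tendsto (altExpSum p N) (𝓝[>] 0) (𝓝 L)) :
    ∃ B, ∀ t > 0, ‖altExpSum p N t‖ ≤ B * rexp (-t) := by
  obtain ⟨δ, hδ, hsmall⟩ : ∃ δ > 0, ∀ t ∈ Ioo 0 δ, ‖altExpSum p N t‖ ≤ ‖L‖ + 1 := by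
    have h := hL.norm.eventually (gt_mem_nhds (lt_add_one ‖L‖))
    obtain ⟨δ, hδ, h⟩ := mem_nhdsGT_iff_exists_Ioo_subset.mp h
    exact ⟨δ, hδ, fun t ht => (h ht).le⟩
  set S := ∑' n : ℕ, (n : ℝ) ^ p * rexp (-(n : ℝ) ^ N * δ) with hS
  have hS0 : 0 ≤ S := tsum_nonneg fun n => by positivity
  refine ⟨(‖L‖ + 1 + S) * rexp δ, fun t ht => ?_⟩
  have hmid : ‖altExpSum p N t‖ ≤ (‖L‖ + 1 + S) * rexp (δ - t) := by
    rcases lt_or_ge t δ with h | h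
    · refine (hsmall t ⟨ht, h⟩).trans ?_
      have : 1 ≤ rexp (δ - t) := Real.one_le_exp (by linarith)
      nlinarith [norm_nonneg L]
    · have h1 : ‖altExpSum p N t‖ ≤ S * rexp (δ - t) := by
        refine tsum_of_norm_bounded
          ((summable_pow_mul_exp_neg_pow p hN hδ).hasSum.mul_right (rexp (δ - t))) fun n => ?_
        rw [norm_altExpSum_term]
        rcases Nat.eq_zero_or_pos n with rfl | hn
        · simp [hp]
        · rw [mul_assoc, ← Real.exp_add]
          refine mul_le_mul_of_nonneg_left (Real.exp_le_exp.mpr ?_) (by positivity)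
          have : (1 : ℝ) ≤ (n : ℝ) ^ N := one_le_pow₀ (by exact_mod_cast hn)
          nlinarith
      refine h1.trans ?_
      gcongr
      linarith [norm_nonneg L]
  rwa [mul_assoc, ← Real.exp_add, ← sub_eq_add_neg]

lemma cos_two_pi_half_mul (n : ℕ) : cos (2 * π * (1 / 2 : ℝ) * n) = (-1) ^ n := by
  rw [show 2 * π * (1 / 2 : ℝ) * n = n * π by ring, Real.cos_nat_mul_pi]

lemma half_ne_zero_circle : (((1 / 2 : ℝ) : ℝ) : UnitAddCircle) ≠ 0 := by
  intro h
  rw [AddCircle.coe_eq_zero_iff] at h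
  obtain ⟨n, hn⟩ := h
  have : ((2 * n : ℤ) : ℝ) = ((1 : ℤ) : ℝ) := by push_cast; simp at hn; linarith
  have : 2 * n = 1 := by exact_mod_cast this
  omega

lemma mellin_altExpSum_of_large {p : ℕ} (hp : p ≠ 0) {N : ℕ} (hN : N ≠ 0) {s : ℂ}
    (hs : (p : ℝ) + 1 < s.re) :
    mellin (altExpSum p N) s = Complex.Gamma s *
      HurwitzZeta.cosZeta ((1 / 2 : ℝ) : UnitAddCircle) (N * s - p) := by
  have hN1 : (1 : ℝ) ≤ N := by exact_mod_cast Nat.one_le_iff_ne_zero.mpr hN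
  have hp0 : (0 : ℝ) ≤ p := Nat.cast_nonneg p
  have hre : (N * s - p : ℂ).re = N * s.re - p := by simp
  have hlarge : 1 < N * s.re - p := by nlinarith
  have h1 := HurwitzZeta.hasSum_nat_cosZeta (1 / 2) (s := N * s - p) (by rw [hre]; exact hlarge)
  have hterm : ∀ n : ℕ, n ≠ 0 → (((n : ℝ) ^ N : ℝ) : ℂ) ^ s = (n : ℂ) ^ (N * s) := by
    intro n hn
    have hn' : (n : ℂ) ≠ 0 := by exact_mod_cast hn
    rw [Complex.cpow_def_of_ne_zero (by exact_mod_cast pow_ne_zero N (Nat.cast_ne_zero.mpr hn)),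
      Complex.cpow_def_of_ne_zero hn', ← Complex.ofReal_log (by positivity), Real.log_pow,
      ← Complex.natCast_log]
    push_cast
    ring_nf
  have h2 := hasSum_mellin (a := fun n : ℕ => (-1) ^ n * (n : ℂ) ^ p)
    (p := fun n : ℕ => (n : ℝ) ^ N) (F := altExpSum p N) (s := s) (fun n => ?_) (by linarith)
    (fun t ht => hasSum_altExpSum p hN ht) ?_
  · refine h2.unique ?_
    refine (hasSum_congr_fun fun n => ?_).mpr (h1.mul_left (Complex.Gamma s))
    rcases eq_or_ne n 0 with rfl | hn
    · simp [hp, Complex.zero_cpow, show (N * s - p : ℂ) ≠ 0 from fun h => by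
        rw [h] at hre; simp at hre; linarith]
    · have hn' : (n : ℂ) ≠ 0 := by exact_mod_cast hn
      rw [hterm n hn, cos_two_pi_half_mul, Complex.cpow_sub _ _ hn', Complex.cpow_natCast]
      have : (n : ℂ) ^ (N * s) ≠ 0 := by simp [Complex.cpow_eq_zero_iff, hn']
      push_cast
      field_simp
  · rcases eq_or_ne n 0 with rfl | hn
    · left; simp [hp]
    · right; positivity
  · have hsum : Summable fun n : ℕ => 1 / (n : ℝ) ^ (N * s.re - p) :=
      Real.summable_one_div_nat_rpow.mpr hlarge
    refine hsum.congr fun n => ?_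
    rcases eq_or_ne n 0 with rfl | hn
    · simp [hp, Real.zero_rpow (show N * s.re - p ≠ 0 by linarith)]
    · have hn' : (0 : ℝ) < n := by positivity
      rw [norm_mul, norm_pow, norm_pow, norm_neg, norm_one, one_pow, one_mul,
        Complex.norm_natCast, Real.rpow_sub hn', Real.rpow_natCast, Real.rpow_mul hn'.le,
        Real.rpow_natCast]
      field_simp

lemma mellin_altExpSum {p : ℕ} (hp : p ≠ 0) {N : ℕ} (hN : N ≠ 0) {B : ℝ}
    (hB : ∀ t > 0, ‖altExpSum p N t‖ ≤ B * rexp (-t)) {s : ℂ} (hs : 0 < s.re) :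
    mellin (altExpSum p N) s = Complex.Gamma s *
      HurwitzZeta.cosZeta ((1 / 2 : ℝ) : UnitAddCircle) (N * s - p) := by
  have hopen : IsOpen {z : ℂ | 0 < z.re} := isOpen_lt continuous_const Complex.continuous_re
  have hconv : Convex ℝ {z : ℂ | 0 < z.re} := convex_halfSpace_re_gt 0
  have hf : AnalyticOnNhd ℂ (mellin (altExpSum p N)) {z : ℂ | 0 < z.re} := by
    refine DifferentiableOn.analyticOnNhd (fun z hz => ?_) hopen
    refine DifferentiableAt.differentiableWithinAt ?_
    refine mellin_differentiableAt_of_isBigO_rpow_exp (a := 1) (b := 0) one_pos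
      ((continuousOn_altExpSum p hN).locallyIntegrableOn measurableSet_Ioi) ?_ ?_ hz
    · refine Asymptotics.IsBigO.of_bound B ?_
      filter_upwards [eventually_gt_atTop 0] with t ht
      rw [Real.norm_of_nonneg (Real.exp_pos _).le, neg_one_mul]
      exact hB t ht
    · refine Asymptotics.IsBigO.of_bound |B| ?_
      filter_upwards [self_mem_nhdsWithin] with t ht
      have ht0 : 0 < t := ht
      rw [neg_zero, Real.rpow_zero, norm_one, mul_one]
      refine (hB t ht).trans ?_
      have h1 : rexp (-t) ≤ 1 := Real.exp_le_one_iff.mpr (by linarith)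
      have h2 := Real.exp_pos (-t)
      nlinarith [le_abs_self B, abs_nonneg B]
  have hg : AnalyticOnNhd ℂ (fun z => Complex.Gamma z *
      HurwitzZeta.cosZeta ((1 / 2 : ℝ) : UnitAddCircle) (N * z - p)) {z : ℂ | 0 < z.re} := by
    refine DifferentiableOn.analyticOnNhd (fun z hz => ?_) hopen
    refine DifferentiableAt.differentiableWithinAt (DifferentiableAt.mul ?_ ?_)
    · refine Complex.differentiableAt_Gamma z fun n h => ?_
      have h1 : 0 < z.re := hz
      rw [h] at h1
      simp at h1
      linarith [(Nat.cast_nonneg n : (0 : ℝ) ≤ n)]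
    · exact ((HurwitzZeta.differentiable_cosZeta_of_ne_zero half_ne_zero_circle).comp
        (by fun_prop)).differentiableAt
  have hz0 : ((p + 2 : ℕ) : ℂ) ∈ {z : ℂ | 0 < z.re} := by
    rw [Set.mem_ofPred_eq, Complex.natCast_re]; positivity
  refine hf.eqOn_of_preconnected_of_eventuallyEq hg hconv.isPreconnected hz0 ?_ hs
  have : {z : ℂ | (p : ℝ) + 1 < z.re} ∈ 𝓝 ((p + 2 : ℕ) : ℂ) := by
    refine (isOpen_lt continuous_const Complex.continuous_re).mem_nhds ?_
    rw [Set.mem_ofPred_eq, Complex.natCast_re]; push_cast; linarith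
  filter_upwards [this] with z hz
  exact mellin_altExpSum_of_large hp hN hz

/-- Abel summation of `∑ (-1)ⁿ n^p`. -/
lemma tendsto_altExpSum_unique {p : ℕ} (hp : p ≠ 0) {N : ℕ} (hN : N ≠ 0) {L : ℂ}
    (hL : Tendsto (altExpSum p N) (𝓝[>] 0) (𝓝 L)) :
    L = HurwitzZeta.cosZeta ((1 / 2 : ℝ) : UnitAddCircle) (-p) := by
  obtain ⟨B, hB⟩ := exists_altExpSum_bound hp hN hL
  refine tendsto_nhds_unique (tendsto_mul_mellin (continuousOn_altExpSum p hN) hB hL) ?_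
  have hcont : ContinuousAt (fun s : ℝ => Complex.Gamma ((s : ℂ) + 1) *
      HurwitzZeta.cosZeta ((1 / 2 : ℝ) : UnitAddCircle) (N * (s : ℂ) - p)) 0 := by
    refine ContinuousAt.mul ?_ ?_
    · have h : ContinuousAt Complex.Gamma (((0 : ℝ) : ℂ) + 1) := by
        refine (Complex.differentiableAt_Gamma _ fun n h => ?_).continuousAt
        have := congrArg Complex.re h
        simp at this
        linarith [(Nat.cast_nonneg n : (0 : ℝ) ≤ n)]
      exact ContinuousAt.comp (f := fun s : ℝ => (s : ℂ) + 1) h (by fun_prop)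
    · exact ((HurwitzZeta.differentiable_cosZeta_of_ne_zero half_ne_zero_circle).continuous.comp
        (by fun_prop)).continuousAt
  have h := hcont.tendsto.mono_left (nhdsWithin_le_nhds (s := Ioi 0))
  simp only [Complex.ofReal_zero, zero_add, Complex.Gamma_one, one_mul, mul_zero, zero_sub] at h
  refine h.congr' ?_
  filter_upwards [self_mem_nhdsWithin] with s hs
  have hs0 : (0 : ℝ) < s := hs
  rw [mellin_altExpSum hp hN hB (by simpa using hs0), Complex.Gamma_add_one _ (by exact_mod_cast hs0.ne')]
  ring

lemma hurwitzZetaEven_half_natCast {e : ℕ} (he : 1 < e) :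
    HurwitzZeta.hurwitzZetaEven ((1 / 2 : ℝ) : UnitAddCircle) e =
      (2 ^ e - 1) * riemannZeta e := by
  have hre : 1 < (e : ℂ).re := by
    rw [Complex.natCast_re]
    exact_mod_cast he
  have h := HurwitzZeta.hasSum_nat_hurwitzZetaEven_of_mem_Icc (a := 1 / 2)
    ⟨by norm_num, by norm_num⟩ hre
  have hz := zeta_nat_eq_tsum_of_gt_one he
  have hsum : Summable fun n : ℕ => 1 / (n : ℂ) ^ e := by
    refine (Complex.summable_ofReal.mpr (Real.summable_one_div_nat_pow.mpr he)).congr fun n => ?_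
    push_cast
    rfl
  have hev : Summable fun n : ℕ => 1 / ((2 * n : ℕ) : ℂ) ^ e :=
    hsum.comp_injective (i := fun n : ℕ => 2 * n) fun a b h => by simpa using h
  have hodd : Summable fun n : ℕ => 1 / ((2 * n + 1 : ℕ) : ℂ) ^ e :=
    hsum.comp_injective (i := fun n : ℕ => 2 * n + 1) fun a b h => by simpa using h
  have h1 : ∑' n : ℕ, 1 / ((2 * n : ℕ) : ℂ) ^ e = 1 / 2 ^ e * riemannZeta e := by
    rw [hz, ← tsum_mul_left]
    refine tsum_congr fun n => ?_
    push_cast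
    rw [mul_pow, one_div_mul_one_div]
  have h2 : HurwitzZeta.hurwitzZetaEven ((1 / 2 : ℝ) : UnitAddCircle) e =
      2 ^ e * ∑' n : ℕ, 1 / ((2 * n + 1 : ℕ) : ℂ) ^ e := by
    rw [← h.tsum_eq, ← tsum_mul_left]
    refine tsum_congr fun n => ?_
    have e1 : ((n : ℂ) + ((1 / 2 : ℝ) : ℂ)) = ((2 * n + 1 : ℕ) : ℂ) / 2 := by push_cast; ring
    have e2 : ((n : ℂ) + 1 - ((1 / 2 : ℝ) : ℂ)) = ((2 * n + 1 : ℕ) : ℂ) / 2 := by push_cast; ring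
    rw [Complex.cpow_natCast, Complex.cpow_natCast, e1, e2, div_pow, one_div_div]
    ring
  have h3 := tsum_even_add_odd (f := fun n : ℕ => 1 / (n : ℂ) ^ e) hev hodd
  rw [← hz, h1] at h3
  rw [h2, eq_sub_of_add_eq' h3, mul_sub, ← mul_assoc, mul_one_div_cancel (pow_ne_zero _ two_ne_zero)]
  ring

lemma cosZeta_half_one_sub_even (M : ℕ) :
    HurwitzZeta.cosZeta ((1 / 2 : ℝ) : UnitAddCircle) (1 - 2 * (M + 1 : ℕ)) =
      (2 ^ (2 * (M + 1)) - 1) * riemannZeta (1 - 2 * (M + 1 : ℕ)) := by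
  rw [← HurwitzZeta.cosZeta_zero, cosZeta_one_sub_even, cosZeta_one_sub_even,
    HurwitzZeta.hurwitzZetaEven_zero,
    show (2 * ((M + 1 : ℕ) : ℂ)) = ((2 * (M + 1) : ℕ) : ℂ) by push_cast; ring,
    hurwitzZetaEven_half_natCast (by omega)]
  ring

/-- The constant term of `∑ n^(2M+1) e^{-n^N t}` as `t → 0⁺` is `ζ(-(2M+1))`. -/
lemma expSum_constant_term {M N k : ℕ} (hN : N ≠ 0) (hk : N * k = 2 * (M + 1)) {c C : ℂ}
    (h : Tendsto (fun t : ℝ => ((∑' n : ℕ, (n : ℝ) ^ (2 * M + 1) * rexp (-(n : ℝ) ^ N * t) : ℝ) : ℂ)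
      - c * (t : ℂ) ^ (-k : ℤ)) (𝓝[>] 0) (𝓝 C)) :
    C = riemannZeta (1 - 2 * (M + 1 : ℕ)) := by
  set f : ℝ → ℂ := fun t : ℝ =>
    ((∑' n : ℕ, (n : ℝ) ^ (2 * M + 1) * rexp (-(n : ℝ) ^ N * t) : ℝ) : ℂ) with hf
  have hscale : Tendsto (fun t : ℝ => (2 : ℝ) ^ N * t) (𝓝[>] 0) (𝓝[>] 0) := by
    refine tendsto_nhdsWithin_iff.mpr ⟨?_, ?_⟩
    · have : ContinuousAt (fun t : ℝ => (2 : ℝ) ^ N * t) 0 := by fun_prop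
      have h := this.tendsto.mono_left (nhdsWithin_le_nhds (s := Ioi 0))
      simpa using h
    · filter_upwards [self_mem_nhdsWithin] with t ht
      have ht0 : (0 : ℝ) < t := ht
      exact mul_pos (by positivity) ht0
  have hcomb := ((h.comp hscale).const_mul ((2 : ℂ) ^ (2 * (M + 1)))).sub h
  have halt : Tendsto (altExpSum (2 * M + 1) N) (𝓝[>] 0)
      (𝓝 ((2 : ℂ) ^ (2 * (M + 1)) * C - C)) := by
    refine hcomb.congr' ?_
    filter_upwards [self_mem_nhdsWithin] with t ht
    have ht0 : (0 : ℝ) < t := ht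
    have hexp : altExpSum (2 * M + 1) N t = 2 ^ (2 * (M + 1)) * f (2 ^ N * t) - f t := by
      have hA := hasSum_altExpSum (2 * M + 1) hN ht0
      have hF : HasSum (fun n : ℕ => (((n : ℝ) ^ (2 * M + 1) * rexp (-(n : ℝ) ^ N * t) : ℝ) : ℂ))
          (f t) := by
        simp only [hf]
        exact Complex.hasSum_ofReal.mpr (summable_pow_mul_exp_neg_pow (2 * M + 1) hN ht0).hasSum
      have hG : HasSum (fun n : ℕ => (((n : ℝ) ^ (2 * M + 1) *
          rexp (-(n : ℝ) ^ N * (2 ^ N * t)) : ℝ) : ℂ)) (f (2 ^ N * t)) := by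
        simp only [hf]
        exact Complex.hasSum_ofReal.mpr
          (summable_pow_mul_exp_neg_pow (2 * M + 1) hN (by positivity)).hasSum
      have hS := hA.add hF
      have hzero : HasSum (fun n : ℕ => (fun i : ℕ => ((-1) ^ i * (i : ℂ) ^ (2 * M + 1)) *
          (rexp (-(i : ℝ) ^ N * t) : ℂ) +
            (((i : ℝ) ^ (2 * M + 1) * rexp (-(i : ℝ) ^ N * t) : ℝ) : ℂ)) (2 * n + 1)) 0 := by
        refine (hasSum_congr_fun fun n => ?_).mpr hasSum_zero
        have : (-1 : ℂ) ^ (2 * n + 1) = -1 := by rw [pow_succ, pow_mul]; simp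
        simp only [this]
        push_cast
        ring
      have heven : HasSum (fun n : ℕ => (fun i : ℕ => ((-1) ^ i * (i : ℂ) ^ (2 * M + 1)) *
          (rexp (-(i : ℝ) ^ N * t) : ℂ) +
            (((i : ℝ) ^ (2 * M + 1) * rexp (-(i : ℝ) ^ N * t) : ℝ) : ℂ)) (2 * n))
          (2 ^ (2 * (M + 1)) * f (2 ^ N * t)) := by
        refine (hasSum_congr_fun fun n => ?_).mpr (hG.mul_left _)
        have h1 : (-1 : ℂ) ^ (2 * n) = 1 := by rw [pow_mul]; simp
        have h2 : -((2 * n : ℕ) : ℝ) ^ N * t = -(n : ℝ) ^ N * (2 ^ N * t) := by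
          push_cast; rw [mul_pow]; ring
        simp only [h1, h2]
        push_cast
        rw [mul_pow]
        ring
      have := hS.unique (heven.even_add_odd hzero)
      rw [add_zero] at this
      exact eq_sub_of_add_eq this
    have hpow : (2 : ℂ) ^ (2 * (M + 1)) * (((2 : ℝ) ^ N * t : ℝ) : ℂ) ^ (-k : ℤ) =
        (t : ℂ) ^ (-k : ℤ) := by
      push_cast
      rw [mul_zpow, ← mul_assoc, ← hk, zpow_neg, zpow_natCast, ← pow_mul,
        mul_inv_cancel₀ (pow_ne_zero _ two_ne_zero), one_mul]
    rw [hexp]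
    simp only [Function.comp_apply, hf]
    rw [mul_sub, mul_left_comm, hpow]
    ring
  have hL := tendsto_altExpSum_unique (by omega) hN halt
  rw [show (-((2 * M + 1 : ℕ) : ℂ)) = 1 - 2 * (M + 1 : ℕ) by push_cast; ring,
    cosZeta_half_one_sub_even, ← sub_one_mul] at hL
  refine mul_left_cancel₀ (sub_ne_zero.mpr ?_) hL
  have : (2 : ℕ) ^ (2 * (M + 1)) ≠ 1 := (Nat.one_lt_two_pow (by omega)).ne'
  exact_mod_cast this

lemma continuous_planckCos (H : ℕ) {A : ℝ} (hA : 0 < A) (m : ℤ) :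
    Continuous (planckCos H A m) := by
  refine continuous_tsum (fun k => by fun_prop)
    (summable_planckSum_node H hA (-(2 * m + 1))).norm fun k u => ?_
  rw [norm_mul, Complex.norm_real, Real.norm_eq_abs]
  exact mul_le_of_le_one_left (norm_nonneg _) (Real.abs_cos_le_one _)

/-- The regular part of `latticeSum e u` at `u = 0`. -/
noncomputable def latticeTail (e : ℤ) (u : ℝ) : ℝ :=
  ∑' n : ℕ, (((n : ℝ) + 1 + u) ^ e + ((n : ℝ) + 1 - u) ^ e)

lemma latticeSum_eq_add_latticeTail {e : ℤ} (he : e ≤ -2) {u : ℝ} (hu : u ∈ Ioo (0 : ℝ) 1) :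
    latticeSum e u = u ^ e + latticeTail e u := by
  have h1 := summable_lattice_left he hu
  have h2 := summable_lattice_right he hu
  have h3 : Summable fun n : ℕ => ((n : ℝ) + 1 + u) ^ e := by
    refine ((summable_nat_add_iff 1).mpr h1).congr fun n => ?_
    push_cast
    rfl
  rw [latticeSum, latticeTail, h1.tsum_add h2, h3.tsum_add h2, h1.tsum_eq_zero_add]
  push_cast
  rw [zero_add, add_assoc]

lemma tendsto_latticeTail {e : ℤ} (he : e ≤ -2) :
    Tendsto (latticeTail e) (𝓝[>] 0) (𝓝 (latticeTail e 0)) := by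
  have hIcc : Icc (-(1 / 2) : ℝ) (1 / 2) ∈ 𝓝 (0 : ℝ) := Icc_mem_nhds (by norm_num) (by norm_num)
  have hb : ∀ (n : ℕ) (u : ℝ), u ∈ Icc (-(1 / 2) : ℝ) (1 / 2) →
      (1 / 2) * ((n : ℝ) + 1) ≤ (n : ℝ) + 1 + u ∧ (1 / 2) * ((n : ℝ) + 1) ≤ (n : ℝ) + 1 - u := by
    intro n u hu
    have hn : (0 : ℝ) ≤ n := Nat.cast_nonneg n
    exact ⟨by linarith [hu.1], by linarith [hu.2]⟩
  have hpos : ∀ n : ℕ, (0 : ℝ) < (1 / 2) * ((n : ℝ) + 1) := fun n => by positivity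
  have hcont : ContinuousOn (latticeTail e) (Icc (-(1 / 2)) (1 / 2)) := by
    refine continuousOn_tsum (u := fun n : ℕ => 2 * ((1 / 2 : ℝ) ^ e * (1 / ((n : ℝ) + 1) ^ 2)))
      (fun n => ?_) ((summable_one_div_succ_sq.mul_left _).mul_left 2) fun n u hu => ?_
    · refine ContinuousOn.add (ContinuousOn.zpow₀ (by fun_prop) _ fun u hu => Or.inl ?_)
        (ContinuousOn.zpow₀ (by fun_prop) _ fun u hu => Or.inl ?_)
      · exact ((hpos n).trans_le (hb n u hu).1).ne'
      · exact ((hpos n).trans_le (hb n u hu).2).ne'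
    · have h1 := zpow_nat_add_le he (by norm_num : (0 : ℝ) < 1 / 2) n (hb n u hu).1
      have h2 := zpow_nat_add_le he (by norm_num : (0 : ℝ) < 1 / 2) n (hb n u hu).2
      have h3 := zpow_pos ((hpos n).trans_le (hb n u hu).1) e
      have h4 := zpow_pos ((hpos n).trans_le (hb n u hu).2) e
      rw [Real.norm_of_nonneg (by linarith)]
      linarith
  exact (hcont.continuousAt hIcc).tendsto.mono_left nhdsWithin_le_nhds

lemma latticeTail_zero (M : ℕ) :
    (latticeTail (-(2 * (M + 1 : ℕ))) 0 : ℂ) = 2 * riemannZeta (2 * (M + 1 : ℕ)) := by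
  have h := hasSum_zeta (s := 2 * (M + 1)) (by omega)
  rw [show (2 * ((M + 1 : ℕ) : ℂ)) = ((2 * (M + 1) : ℕ) : ℂ) by push_cast; ring, ← h.tsum_eq,
    latticeTail, Complex.ofReal_tsum, ← tsum_mul_left]
  refine tsum_congr fun n => ?_
  rw [show (-(2 * ((M + 1 : ℕ) : ℤ))) = -((2 * (M + 1) : ℕ) : ℤ) by push_cast; ring,
    zpow_neg, zpow_neg, zpow_natCast, zpow_natCast]
  push_cast
  rw [add_zero, sub_zero, one_div]
  ring

/-- The weight `1 / (e^x - 1)`. -/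
noncomputable def boseWeight (x : ℝ) : ℝ := rexp (-x) / (1 - rexp (-x))

lemma symKer_eq_boseWeight {x : ℝ} (hx : 0 < x) (u : ℝ) :
    symKer x u = rexp (-(u * x)) + (rexp (-(u * x)) + rexp (u * x)) * boseWeight x := by
  have h := (one_sub_exp_neg_pos hx).ne'
  rw [symKer, boseWeight, show -((1 - u) * x) = u * x + -x by ring, Real.exp_add]
  field_simp
  ring

lemma boseWeight_le {A x : ℝ} (hA : 0 < A) (hx : A ≤ x) :
    0 ≤ boseWeight x ∧ boseWeight x ≤ 1 / (1 - rexp (-A)) * rexp (-x) := by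
  have h1 := one_sub_exp_neg_pos hA
  have h2 : 1 - rexp (-A) ≤ 1 - rexp (-x) := by
    have := Real.exp_le_exp.mpr (neg_le_neg hx)
    linarith
  have h3 := Real.exp_pos (-x)
  refine ⟨div_nonneg h3.le (by linarith), ?_⟩
  rw [boseWeight, one_div, mul_comm, ← div_eq_mul_inv]
  exact div_le_div_of_nonneg_left h3.le h1 h2

lemma le_mul_succ_pow {A : ℝ} (hA : 0 < A) (n k : ℕ) : A ≤ A * ((n : ℝ) + 1) ^ k := by
  have : (1 : ℝ) ≤ ((n : ℝ) + 1) ^ k :=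
    one_le_pow₀ (by linarith [(Nat.cast_nonneg n : (0 : ℝ) ≤ n)])
  nlinarith

/-- The part of `kerSum` that is regular at `u = 0`. -/
noncomputable def boseSum (H : ℕ) (A : ℝ) (e : ℤ) (u : ℝ) : ℝ :=
  ∑' n : ℕ, ((n : ℝ) + 1) ^ e * ((rexp (-(u * (A * ((n : ℝ) + 1) ^ (2 * H + 1)))) +
    rexp (u * (A * ((n : ℝ) + 1) ^ (2 * H + 1)))) * boseWeight (A * ((n : ℝ) + 1) ^ (2 * H + 1)))

lemma boseSum_term_bound (H : ℕ) {A : ℝ} (hA : 0 < A) (e : ℤ) {u : ℝ}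
    (hu : u ∈ Icc (-(1 / 2) : ℝ) (1 / 2)) (n : ℕ) :
    ‖((n : ℝ) + 1) ^ e * ((rexp (-(u * (A * ((n : ℝ) + 1) ^ (2 * H + 1)))) +
      rexp (u * (A * ((n : ℝ) + 1) ^ (2 * H + 1)))) *
        boseWeight (A * ((n : ℝ) + 1) ^ (2 * H + 1)))‖ ≤ 2 / (1 - rexp (-A)) *
      (((n : ℝ) + 1) ^ e * rexp (-(A / 2 * ((n : ℝ) + 1) ^ (2 * H + 1)))) := by
  have hx := le_mul_succ_pow hA n (2 * H + 1)
  rw [show -(A / 2 * ((n : ℝ) + 1) ^ (2 * H + 1)) = -(A * ((n : ℝ) + 1) ^ (2 * H + 1) / 2) by ring]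
  set x := A * ((n : ℝ) + 1) ^ (2 * H + 1)
  have hx0 : 0 < x := hA.trans_le hx
  obtain ⟨h1, h2⟩ := boseWeight_le hA hx
  have h3 := one_sub_exp_neg_pos hA
  have h4 : (0 : ℝ) < ((n : ℝ) + 1) ^ e := by positivity
  have h5 : rexp (-(u * x)) ≤ rexp (x / 2) := Real.exp_le_exp.mpr (by nlinarith [hu.1])
  have h6 : rexp (u * x) ≤ rexp (x / 2) := Real.exp_le_exp.mpr (by nlinarith [hu.2])
  rw [Real.norm_of_nonneg (by positivity), mul_left_comm (2 / _)]
  refine mul_le_mul_of_nonneg_left ?_ h4.le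
  calc (rexp (-(u * x)) + rexp (u * x)) * boseWeight x
      ≤ (2 * rexp (x / 2)) * (1 / (1 - rexp (-A)) * rexp (-x)) :=
        mul_le_mul (by linarith) h2 h1 (by positivity)
    _ = 2 / (1 - rexp (-A)) * (rexp (x / 2) * rexp (-x)) := by ring
    _ = 2 / (1 - rexp (-A)) * rexp (-(x / 2)) := by
        rw [← Real.exp_add]
        ring_nf

lemma summable_boseSum (H : ℕ) {A : ℝ} (hA : 0 < A) (e : ℤ) {u : ℝ}
    (hu : u ∈ Icc (-(1 / 2) : ℝ) (1 / 2)) :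
    Summable fun n : ℕ => ((n : ℝ) + 1) ^ e * ((rexp (-(u * (A * ((n : ℝ) + 1) ^ (2 * H + 1)))) +
      rexp (u * (A * ((n : ℝ) + 1) ^ (2 * H + 1)))) *
        boseWeight (A * ((n : ℝ) + 1) ^ (2 * H + 1))) :=
  Summable.of_norm_bounded ((summable_zpow_mul_exp_neg H e (half_pos hA)).mul_left _)
    (boseSum_term_bound H hA e hu)

lemma tendsto_boseSum (H : ℕ) {A : ℝ} (hA : 0 < A) (e : ℤ) :
    Tendsto (boseSum H A e) (𝓝[>] 0) (𝓝 (boseSum H A e 0)) := by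
  have hIcc : Icc (-(1 / 2) : ℝ) (1 / 2) ∈ 𝓝 (0 : ℝ) := Icc_mem_nhds (by norm_num) (by norm_num)
  have hcont : ContinuousOn (boseSum H A e) (Icc (-(1 / 2)) (1 / 2)) :=
    continuousOn_tsum (fun n => by fun_prop)
      ((summable_zpow_mul_exp_neg H e (half_pos hA)).mul_left _)
      fun n u hu => boseSum_term_bound H hA e hu n
  exact (hcont.continuousAt hIcc).tendsto.mono_left nhdsWithin_le_nhds

lemma kerSum_eq_add_boseSum (H : ℕ) {A : ℝ} (hA : 0 < A) (m : ℤ) {u : ℝ} (hu : 0 < u)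
    (hu' : u ≤ 1 / 2) :
    kerSum H A m u = ∑' n : ℕ, ((n : ℝ) + 1) ^ (-(2 * (2 * H + 1) * m + 1)) *
        rexp (-(u * A * ((n : ℝ) + 1) ^ (2 * H + 1))) +
      boseSum H A (-(2 * (2 * H + 1) * m + 1)) u := by
  rw [kerSum, boseSum, ← (summable_zpow_mul_exp_neg H _ (by positivity)).tsum_add
    (summable_boseSum H hA _ ⟨by linarith, hu'⟩)]
  refine tsum_congr fun n => ?_
  rw [symKer_eq_boseWeight (by positivity), mul_assoc u A]
  ring

lemma cosZeta_apply_zero_eq (u v : ℝ) :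
    HurwitzZeta.cosZeta (u : UnitAddCircle) 0 = HurwitzZeta.cosZeta (v : UnitAddCircle) 0 := by
  rw [HurwitzZeta.cosZeta_apply_zero, HurwitzZeta.cosZeta_apply_zero]

lemma residualSum_one_eq (H : ℕ) (A : ℝ) (m : ℤ) (u v : ℝ) :
    residualSum H A m 1 u = residualSum H A m 1 v := by
  simp only [residualSum, Finset.sum_range_one, Nat.cast_zero, mul_zero, cosZeta_apply_zero_eq u v]

/-- The transformation formula at `u = 0`, regularized by a zeta value. -/
lemma boseSum_zero_add_zeta_of_neg (H : ℕ) {A : ℝ} (hA : 0 < A) (M : ℕ) :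
    (boseSum H A (-(2 * (2 * H + 1) * (-(M + 1 : ℕ) : ℤ) + 1)) 0 : ℂ) +
        riemannZeta (2 * (2 * H + 1) * (-(M + 1 : ℕ) : ℤ) + 1) =
      2 * (-1) ^ (-(M + 1 : ℕ) : ℤ) / (2 * H + 1) * (A / (2 * π)) ^ (2 * (-(M + 1 : ℕ) : ℤ)) *
        (1 / 2 * oddCosZeta (-(M + 1 : ℕ)) 0 + (-1) ^ H * planckCos H A (-(M + 1 : ℕ)) 0) +
        residualSum H A (-(M + 1 : ℕ)) 1 0 := by
  set m : ℤ := -(M + 1 : ℕ) with hm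
  set e : ℤ := -(2 * (2 * H + 1) * m + 1) with he
  set P : ℕ := (2 * H + 1) * (M + 1) - 1 with hP
  have hP1 : P + 1 = (2 * H + 1) * (M + 1) := Nat.sub_add_cancel (Nat.mul_pos (by omega) (by omega))
  have heP : e = ((2 * P + 1 : ℕ) : ℤ) := by
    have : (P : ℤ) + 1 = (2 * H + 1) * (M + 1) := by exact_mod_cast hP1
    rw [he, hm]
    push_cast
    linarith
  set D : ℂ := (2 * π) ^ (-(2 * (M + 1 : ℕ) : ℤ)) * (2 * M + 1).factorial * (-1) ^ (M + 1) with hD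
  set E : ℂ := 2 * (-1) ^ m / (2 * H + 1) * (A / (2 * π)) ^ (2 * m) with hE
  have hodd : oddCosZeta m 0 = D * (latticeTail (-(2 * (M + 1 : ℕ))) 0 : ℂ) := by
    rw [latticeTail_zero, oddCosZeta, if_neg (by omega), QuotientAddGroup.mk_zero, hm,
      show (2 * ((-(M + 1 : ℕ) : ℤ) : ℂ) + 1) = 1 - 2 * (M + 1 : ℕ) by push_cast; ring,
      cosZeta_one_sub_even, HurwitzZeta.hurwitzZetaEven_zero]
    ring
  have hlim : Tendsto (fun u : ℝ => E * (1 / 2 * (D * (latticeTail (-(2 * (M + 1 : ℕ))) u : ℂ)) +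
      (-1) ^ H * planckCos H A m u) + residualSum H A m 1 0 - (boseSum H A e u : ℂ)) (𝓝[>] 0)
      (𝓝 (E * (1 / 2 * oddCosZeta m 0 + (-1) ^ H * planckCos H A m 0) + residualSum H A m 1 0 -
        (boseSum H A e 0 : ℂ))) := by
    rw [hodd]
    have h1 := ((Complex.continuous_ofReal.tendsto _).comp
      (tendsto_latticeTail (e := -(2 * (M + 1 : ℕ))) (by push_cast; omega)))
    have h2 := (continuous_planckCos H hA m).continuousAt.tendsto.mono_left
      (nhdsWithin_le_nhds (a := (0 : ℝ)) (s := Ioi 0))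
    have h3 := (Complex.continuous_ofReal.tendsto _).comp (tendsto_boseSum H hA e)
    exact (((((h1.const_mul D).const_mul (1 / 2)).add (h2.const_mul _)).const_mul E).add_const
      _).sub h3
  have hscale : Tendsto (fun t : ℝ => t / A) (𝓝[>] 0) (𝓝[>] 0) := by
    refine tendsto_nhdsWithin_iff.mpr ⟨?_, ?_⟩
    · have : ContinuousAt (fun t : ℝ => t / A) 0 := by fun_prop
      have h := this.tendsto.mono_left (nhdsWithin_le_nhds (s := Ioi 0))
      simpa using h
    · filter_upwards [self_mem_nhdsWithin] with t ht
      exact div_pos ht hA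
  have hkey := expSum_constant_term (M := P) (N := 2 * H + 1) (k := 2 * (M + 1))
    (c := E * (1 / 2 * D) * (A : ℂ) ^ (2 * (M + 1)))
    (by omega) (by rw [hP1]; ring) ((hlim.comp hscale).congr' ?_)
  · rw [show (1 - 2 * ((P + 1 : ℕ) : ℂ)) = 2 * (2 * H + 1) * (m : ℂ) + 1 by
      rw [hP1, hm]; push_cast; ring] at hkey
    rw [← hkey]
    ring
  · have hsmall : Ioo (0 : ℝ) (A / 2) ∈ 𝓝[>] (0 : ℝ) := Ioo_mem_nhdsGT (half_pos hA)
    filter_upwards [hsmall] with t ht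
    have hu : 0 < t / A := div_pos ht.1 hA
    have hu' : t / A ≤ 1 / 2 := by
      rw [div_le_iff₀ hA]
      linarith [ht.2]
    have hu1 : t / A ∈ Ioo (0 : ℝ) 1 := ⟨hu, by linarith⟩
    have hcore := coreIdentity H hA m 1 (by omega) hu1
    rw [CoreIdentity, residualSum_one_eq H A m (t / A) 0, kerSum_eq_add_boseSum H hA m hu hu',
      hm, oddCosZeta_neg hu1, ← hm, ← hD, ← hE, ← he,
      latticeSum_eq_add_latticeTail (by push_cast; omega) hu1] at hcore
    have hsum : ∑' n : ℕ, ((n : ℝ) + 1) ^ e * rexp (-(t / A * A * ((n : ℝ) + 1) ^ (2 * H + 1))) =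
        ∑' n : ℕ, (n : ℝ) ^ (2 * P + 1) * rexp (-(n : ℝ) ^ (2 * H + 1) * t) := by
      rw [(summable_pow_mul_exp_neg_pow (2 * P + 1) (by omega) ht.1).tsum_eq_zero_add]
      simp only [Nat.cast_zero, ne_eq, Nat.succ_ne_zero, not_false_eq_true, zero_pow, zero_mul,
        zero_add]
      refine tsum_congr fun n => ?_
      rw [heP, zpow_natCast, div_mul_cancel₀ _ hA.ne']
      push_cast
      ring_nf
    rw [hsum] at hcore
    have hpow : (((t / A) ^ (-(2 * (M + 1 : ℕ)) : ℤ) : ℝ) : ℂ) =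
        (A : ℂ) ^ (2 * (M + 1)) * (t : ℂ) ^ (-((2 * (M + 1) : ℕ) : ℤ)) := by
      push_cast
      rw [div_zpow, zpow_neg (A : ℂ), div_inv_eq_mul, mul_comm]
      norm_cast
    push_cast at hcore hpow ⊢
    simp only [Function.comp_apply]
    rw [hpow] at hcore
    linear_combination -hcore

/-- The right-hand side of the transformation formula, as a function on the circle. -/
noncomputable def transformed (H : ℕ) (A : ℝ) (m : ℤ) (K : ℕ) (u : ℝ) : ℂ :=
  2 * (-1) ^ m / (2 * H + 1) * (A / (2 * π)) ^ (2 * m) *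
    (1 / 2 * HurwitzZeta.cosZeta (u : UnitAddCircle) (2 * m + 1) + (-1) ^ H * planckCos H A m u) +
      residualSum H A m K u

lemma transformed_one (H : ℕ) (A : ℝ) (m : ℤ) (K : ℕ) :
    transformed H A m K 1 = transformed H A m K 0 := by
  have h1 : ((1 : ℝ) : UnitAddCircle) = ((0 : ℝ) : UnitAddCircle) := by
    rw [AddCircle.coe_period, QuotientAddGroup.mk_zero]
  have h2 : planckCos H A m 1 = planckCos H A m 0 := by
    refine tsum_congr fun k => ?_
    rw [show 2 * π * ((k : ℝ) + 1) * 1 = ((k + 1 : ℕ) : ℝ) * (2 * π) by push_cast; ring,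
      Real.cos_nat_mul_two_pi, mul_zero, Real.cos_zero]
  simp only [transformed, residualSum, h1, h2]

lemma kerSum_eq_transformed (H : ℕ) {A : ℝ} (hA : 0 < A) {m : ℤ} (hm : m ≠ 0) {K : ℕ}
    (hK : m + 2 ≤ K) {u : ℝ} (hu : u ∈ Ioo (0 : ℝ) 1) :
    (kerSum H A m u : ℂ) = transformed H A m K u := by
  have h := coreIdentity H hA m K hK hu
  rwa [CoreIdentity, oddCosZeta, if_neg hm] at h

lemma boseSum_zero_add_zeta (H : ℕ) {A : ℝ} (hA : 0 < A) {m : ℤ} (hm : m ≠ 0) {K : ℕ}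
    (hK : m + 2 ≤ K) :
    (boseSum H A (-(2 * (2 * H + 1) * m + 1)) 0 : ℂ) + riemannZeta (2 * (2 * H + 1) * m + 1) =
      transformed H A m K 0 := by
  rcases lt_or_gt_of_ne hm with h | h
  · obtain ⟨M, rfl⟩ : ∃ M : ℕ, m = -(M + 1 : ℕ) := ⟨(-m - 1).toNat, by omega⟩
    have := boseSum_zero_add_zeta_of_neg H hA M
    rw [oddCosZeta, if_neg hm, residualSum_eq_of_le H A (L := K) (by omega) hK] at this
    exact this
  · obtain ⟨M, rfl⟩ : ∃ M : ℕ, m = M := ⟨m.toNat, by omega⟩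
    have hM : 1 ≤ M := by omega
    have hcore := coreIdentity_of_pos (H := H) hA hM (K := K) (by exact_mod_cast hK)
      (u := 0) (by simp)
    rw [CoreIdentity, oddCosZeta, if_neg hm] at hcore
    refine Eq.trans ?_ hcore
    have he : -(2 * (2 * (H : ℤ) + 1) * (M : ℤ) + 1) = -((2 * (2 * H + 1) * M + 1 : ℕ) : ℤ) := by
      push_cast; ring
    have hz := hasSum_zeta (s := 2 * (2 * H + 1) * M + 1) (by nlinarith)
    have hb : HasSum (fun n : ℕ => ((((n : ℝ) + 1) ^ (-(2 * (2 * H + 1) * (M : ℤ) + 1)) *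
        ((rexp (-(0 * (A * ((n : ℝ) + 1) ^ (2 * H + 1)))) +
          rexp (0 * (A * ((n : ℝ) + 1) ^ (2 * H + 1)))) *
            boseWeight (A * ((n : ℝ) + 1) ^ (2 * H + 1))) : ℝ) : ℂ))
        (boseSum H A (-(2 * (2 * H + 1) * (M : ℤ) + 1)) 0 : ℂ) :=
      Complex.hasSum_ofReal.mpr (summable_boseSum H hA _ (u := 0) (by norm_num)).hasSum
    have hs := (hb.add hz).tsum_eq
    push_cast at hs ⊢
    rw [← hs, kerSum, Complex.ofReal_tsum]
    refine tsum_congr fun n => ?_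
    rw [symKer_eq_boseWeight (by positivity), he, zpow_neg, zpow_natCast]
    push_cast
    simp only [zero_mul, neg_zero, Complex.exp_zero]
    rw [he, zpow_neg, zpow_natCast]
    ring

/-- One half of `kerSum`. -/
noncomputable def halfKerSum (H : ℕ) (A : ℝ) (e : ℤ) (u : ℝ) : ℝ :=
  ∑' n : ℕ, ((n : ℝ) + 1) ^ e * (rexp (-(u * (A * ((n : ℝ) + 1) ^ (2 * H + 1)))) /
    (1 - rexp (-(A * ((n : ℝ) + 1) ^ (2 * H + 1)))))

lemma summable_halfKerSum (H : ℕ) {A : ℝ} (hA : 0 < A) (e : ℤ) {u : ℝ} (hu : 0 < u) :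
    Summable fun n : ℕ => ((n : ℝ) + 1) ^ e * (rexp (-(u * (A * ((n : ℝ) + 1) ^ (2 * H + 1)))) /
      (1 - rexp (-(A * ((n : ℝ) + 1) ^ (2 * H + 1))))) := by
  have h1 := one_sub_exp_neg_pos hA
  refine Summable.of_nonneg_of_le (fun n => ?_) (fun n => ?_)
    ((summable_zpow_mul_exp_neg H e (mul_pos hu hA)).mul_left (1 / (1 - rexp (-A))))
  · have := one_sub_exp_neg_pos (hA.trans_le (le_mul_succ_pow hA n (2 * H + 1)))
    positivity
  · have hx := le_mul_succ_pow hA n (2 * H + 1)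
    rw [mul_assoc u A]
    set x := A * ((n : ℝ) + 1) ^ (2 * H + 1)
    have h2 : 1 - rexp (-A) ≤ 1 - rexp (-x) := by
      have := Real.exp_le_exp.mpr (neg_le_neg hx)
      linarith
    rw [mul_left_comm (1 / _)]
    refine mul_le_mul_of_nonneg_left ?_ (by positivity)
    rw [one_div, mul_comm (_⁻¹), ← div_eq_mul_inv]
    exact div_le_div_of_nonneg_left (Real.exp_pos _).le h1 h2

lemma kerSum_eq_halfKerSum_add (H : ℕ) {A : ℝ} (hA : 0 < A) (m : ℤ) {u : ℝ}
    (hu : u ∈ Ioo (0 : ℝ) 1) :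
    kerSum H A m u = halfKerSum H A (-(2 * (2 * H + 1) * m + 1)) u +
      halfKerSum H A (-(2 * (2 * H + 1) * m + 1)) (1 - u) := by
  rw [kerSum, halfKerSum, halfKerSum, ← (summable_halfKerSum H hA _ hu.1).tsum_add
    (summable_halfKerSum H hA _ (by linarith [hu.2]))]
  refine tsum_congr fun n => ?_
  rw [symKer, add_div, mul_add]

lemma boseSum_zero (H : ℕ) (A : ℝ) (e : ℤ) : boseSum H A e 0 = 2 * halfKerSum H A e 1 := by
  rw [boseSum, halfKerSum, ← tsum_mul_left]
  refine tsum_congr fun n => ?_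
  rw [boseWeight]
  simp only [zero_mul, neg_zero, Real.exp_zero, one_mul]
  ring

lemma DirichletCharacter.Even.sum_reflect {q : ℕ} [NeZero q] (hq : 1 < q)
    {χ : DirichletCharacter ℂ q} (hev : χ.Even) (S : ℝ → ℂ) :
    ∑ r ∈ Finset.Icc 1 q, χ (r : ZMod q) * S (1 - r / q) =
      ∑ r ∈ Finset.Icc 1 q, χ (r : ZMod q) * S (r / q) := by
  have hq0 : (q : ℝ) ≠ 0 := Nat.cast_ne_zero.mpr (NeZero.ne q)
  have : Fact (1 < q) := ⟨hq⟩
  have hzero : χ ((q : ℕ) : ZMod q) = 0 := by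
    rw [ZMod.natCast_self]
    exact χ.map_nonunit not_isUnit_zero
  have hsplit : ∀ f : ℕ → ℂ, f q = 0 →
      ∑ r ∈ Finset.Icc 1 q, f r = ∑ r ∈ Finset.Ico 1 q, f r := by
    intro f hf
    rw [← Finset.Ico_insert_right (by omega : 1 ≤ q), Finset.sum_insert (by simp), hf, zero_add]
  rw [hsplit _ (by rw [hzero, zero_mul]), hsplit _ (by rw [hzero, zero_mul])]
  refine Finset.sum_nbij' (fun r => q - r) (fun r => q - r) ?_ ?_ ?_ ?_ ?_
  · intro r hr; rw [Finset.mem_Ico] at *; omega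
  · intro r hr; rw [Finset.mem_Ico] at *; omega
  · intro r hr; rw [Finset.mem_Ico] at hr; omega
  · intro r hr; rw [Finset.mem_Ico] at hr; omega
  · intro r hr
    rw [Finset.mem_Ico] at hr
    rw [Nat.cast_sub hr.2.le, ZMod.natCast_self, zero_sub, hev.eval_neg, Nat.cast_sub hr.2.le,
      sub_div, div_self hq0]

lemma sum_mul_halfKerSum_sub_zeta (H : ℕ) {A : ℝ} (hA : 0 < A) {m : ℤ} (hm : m ≠ 0) {K : ℕ}
    (hK : m + 2 ≤ K) {q : ℕ} [NeZero q] {χ : DirichletCharacter ℂ q} (hev : χ.Even) :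
    ∑ r ∈ Finset.Icc 1 q, χ (r : ZMod q) *
        (halfKerSum H A (-(2 * (2 * H + 1) * m + 1)) (r / q) : ℂ) -
        riemannZeta (2 * (2 * H + 1) * m + 1) * DirichletCharacter.LFunction χ 0 =
      1 / 2 * ∑ r ∈ Finset.Icc 1 q, χ (r : ZMod q) * transformed H A m K (r / q) := by
  rcases (Nat.one_le_iff_ne_zero.mpr (NeZero.ne q)).eq_or_lt with rfl | hq
  · have hχ : χ ((1 : ℕ) : ZMod 1) = 1 := by rw [Nat.cast_one, map_one]
    rw [Finset.Icc_self, Finset.sum_singleton, Finset.sum_singleton, hχ,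
      DirichletCharacter.LFunction_modOne_eq, riemannZeta_zero, Nat.cast_one, div_one,
      transformed_one, ← boseSum_zero_add_zeta H hA hm hK, boseSum_zero]
    push_cast
    ring
  · have hL : DirichletCharacter.LFunction χ 0 = 0 := by
      have : Fact (1 < q) := ⟨hq⟩
      rw [DirichletCharacter.LFunction, ZMod.LFunction_apply_zero_of_even hev.to_fun,
        χ.map_nonunit not_isUnit_zero]
      simp
    have h1 : ∑ r ∈ Finset.Icc 1 q, χ (r : ZMod q) * transformed H A m K (r / q) =
        ∑ r ∈ Finset.Icc 1 q, χ (r : ZMod q) *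
          (halfKerSum H A (-(2 * (2 * H + 1) * m + 1)) (r / q) : ℂ) +
        ∑ r ∈ Finset.Icc 1 q, χ (r : ZMod q) *
          (halfKerSum H A (-(2 * (2 * H + 1) * m + 1)) (1 - r / q) : ℂ) := by
      rw [← Finset.sum_add_distrib]
      refine Finset.sum_congr rfl fun r hr => ?_
      rw [Finset.mem_Icc] at hr
      rcases hr.2.eq_or_lt with rfl | hlt
      · have : Fact (1 < r) := ⟨hq⟩
        rw [ZMod.natCast_self, χ.map_nonunit not_isUnit_zero]
        simp
      · have hu : (r / q : ℝ) ∈ Ioo (0 : ℝ) 1 := by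
          have hr0 : (0 : ℝ) < r := by exact_mod_cast hr.1
          have hq0 : (r : ℝ) < q := by exact_mod_cast hlt
          exact ⟨by positivity, (div_lt_one (by linarith)).mpr hq0⟩
        rw [← kerSum_eq_transformed H hA hm hK hu, kerSum_eq_halfKerSum_add H hA m hu]
        push_cast
        ring
    rw [h1, hev.sum_reflect hq (fun u => (halfKerSum H A (-(2 * (2 * H + 1) * m + 1)) u : ℂ)), hL]
    ring

lemma sum_Icc_natCast_eq_sum_zmod {q : ℕ} [NeZero q] (f : ZMod q → ℂ) :
    ∑ r ∈ Finset.Icc 1 q, f (r : ZMod q) = ∑ j : ZMod q, f j := by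
  have h1 : ∑ r ∈ Finset.Icc 1 q, f (r : ZMod q) = ∑ r ∈ Finset.range q, f (r : ZMod q) := by
    have h2 := Finset.sum_range_succ (fun r : ℕ => f (r : ZMod q)) q
    rw [Finset.sum_range_succ', ZMod.natCast_self, Nat.cast_zero, add_left_inj] at h2
    rw [← h2, Finset.range_eq_Ico, Finset.sum_Ico_add' (fun r : ℕ => f (r : ZMod q)) 0 q 1]
    rfl
  rw [h1]
  refine Finset.sum_nbij' (fun r => (r : ZMod q)) (fun j => j.val) ?_ ?_ ?_ ?_ ?_
  · intro r _; exact Finset.mem_univ _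
  · intro j _; exact Finset.mem_range.mpr j.val_lt
  · intro r hr; exact ZMod.val_cast_of_lt (Finset.mem_range.mp hr)
  · intro j _; exact ZMod.natCast_zmod_val j
  · intro r _; rfl

lemma gaussSum'_eq_gaussSum {q : ℕ} [NeZero q] (χ : DirichletCharacter ℂ q) :
    gaussSum' χ = gaussSum χ ZMod.stdAddChar := by
  rw [gaussSum', gaussSum, ← sum_Icc_natCast_eq_sum_zmod]
  refine Finset.sum_congr rfl fun r _ => ?_
  rw [ZMod.stdAddChar_apply, ZMod.toCircle_natCast]

lemma conjChar_eq_inv {q : ℕ} (χ : DirichletCharacter ℂ q) [NeZero q] : conjChar χ = χ⁻¹ := by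
  rw [← MulChar.star_eq_inv]
  rfl

lemma DirichletCharacter.Even.inv {q : ℕ} [NeZero q] {χ : DirichletCharacter ℂ q} (hev : χ.Even) :
    (χ⁻¹).Even := by
  have h : χ (-1) = 1 := hev
  rw [DirichletCharacter.Even, ← MulChar.star_apply', h, star_one]

lemma dft_eq_gaussSum_mul {q : ℕ} [NeZero q] {χ : DirichletCharacter ℂ q} (hprim : χ.IsPrimitive)
    (hev : χ.Even) (k : ZMod q) : ZMod.dft χ k = gaussSum χ ZMod.stdAddChar * χ⁻¹ k := by
  rw [hprim.fourierTransform_eq_inv_mul_gaussSum, hev.inv.eval_neg, mul_comm]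

lemma gaussSum'_mul_gaussSum'_conjChar {q : ℕ} [NeZero q] {χ : DirichletCharacter ℂ q}
    (hprim : χ.IsPrimitive) (hev : χ.Even) : gaussSum' χ * gaussSum' (conjChar χ) = q := by
  have hinv : (χ⁻¹).IsPrimitive := by
    rw [DirichletCharacter.isPrimitive_def, DirichletCharacter.conductor_inv]
    exact hprim
  have h1 := congrFun (ZMod.dft_dft (fun j => χ j)) 1
  have h2 : ZMod.dft (fun j => χ j) = gaussSum χ ZMod.stdAddChar • fun j => χ⁻¹ j :=
    funext fun k => dft_eq_gaussSum_mul hprim hev k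
  have h3 : ZMod.dft (fun j => χ⁻¹ j) 1 = gaussSum χ⁻¹ ZMod.stdAddChar * (χ⁻¹)⁻¹ 1 :=
    dft_eq_gaussSum_mul hinv hev.inv 1
  rw [h2, map_smul, Pi.smul_apply, h3, hev.eval_neg] at h1
  simpa [gaussSum'_eq_gaussSum, conjChar_eq_inv] using h1

lemma sum_mul_cosZeta {q : ℕ} [NeZero q] {χ : DirichletCharacter ℂ q} (hprim : χ.IsPrimitive)
    (hev : χ.Even) {s : ℂ} (hs : s ≠ 1) :
    ∑ r ∈ Finset.Icc 1 q, χ (r : ZMod q) *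
        HurwitzZeta.cosZeta ((r / q : ℝ) : UnitAddCircle) s =
      gaussSum' χ * DirichletCharacter.LFunction (conjChar χ) s := by
  have h1 := ZMod.LFunction_dft (fun j => χ j) (s := s) (Or.inr hs)
  have h2 : ZMod.dft (fun j => χ j) = fun j => gaussSum χ ZMod.stdAddChar * χ⁻¹ j :=
    funext fun k => dft_eq_gaussSum_mul hprim hev k
  have h3 : ∑ j : ZMod q, χ j * HurwitzZeta.sinZeta (ZMod.toAddCircle j) s = 0 := by
    rw [← self_eq_neg, ← Finset.sum_neg_distrib]
    refine Fintype.sum_equiv (.neg _) _ _ fun i => ?_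
    rw [Equiv.neg_apply, hev.eval_neg, map_neg, HurwitzZeta.sinZeta_neg]
    ring
  have h4 : ZMod.LFunction (fun j => gaussSum χ ZMod.stdAddChar * χ⁻¹ j) s =
      gaussSum χ ZMod.stdAddChar * DirichletCharacter.LFunction χ⁻¹ s := by
    simp only [DirichletCharacter.LFunction, ZMod.LFunction, Finset.mul_sum]
    refine Finset.sum_congr rfl fun j _ => ?_
    ring
  have h5 : ∑ j : ZMod q, χ j * HurwitzZeta.expZeta (ZMod.toAddCircle (-j)) s =
      ∑ j : ZMod q, χ j * HurwitzZeta.cosZeta (ZMod.toAddCircle j) s -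
        Complex.I * ∑ j : ZMod q, χ j * HurwitzZeta.sinZeta (ZMod.toAddCircle j) s := by
    rw [Finset.mul_sum, ← Finset.sum_sub_distrib]
    refine Finset.sum_congr rfl fun j _ => ?_
    rw [HurwitzZeta.expZeta, map_neg, HurwitzZeta.sinZeta_neg, HurwitzZeta.cosZeta_neg]
    ring
  rw [h2, h4, h5, h3, mul_zero, sub_zero] at h1
  rw [gaussSum'_eq_gaussSum, conjChar_eq_inv, h1, ← sum_Icc_natCast_eq_sum_zmod]
  refine Finset.sum_congr rfl fun r _ => ?_
  rw [ZMod.toAddCircle_natCast]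

lemma sum_mul_cos {q : ℕ} [NeZero q] {χ : DirichletCharacter ℂ q} (hprim : χ.IsPrimitive)
    (hev : χ.Even) (k : ℕ) :
    ∑ r ∈ Finset.Icc 1 q, χ (r : ZMod q) * (cos (2 * π * k * (r / q)) : ℂ) =
      gaussSum' χ * conjChar χ (k : ZMod q) := by
  have h1 := gaussSum_mulShift_of_isPrimitive ZMod.stdAddChar hprim (k : ZMod q)
  have h2 := gaussSum_mulShift_of_isPrimitive ZMod.stdAddChar hprim (-(k : ZMod q))
  rw [hev.inv.eval_neg] at h2
  rw [gaussSum, ← sum_Icc_natCast_eq_sum_zmod] at h1 h2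
  rw [gaussSum'_eq_gaussSum, conjChar_eq_inv, mul_comm (gaussSum χ _),
    ← add_halves (χ⁻¹ _ * _)]
  nth_rw 1 [← h1]
  rw [← h2, Finset.sum_div, Finset.sum_div, ← Finset.sum_add_distrib]
  refine Finset.sum_congr rfl fun r _ => ?_
  have e1 : ((k : ZMod q) * (r : ZMod q)) = ((k * r : ℕ) : ZMod q) := by push_cast; rfl
  have e2 : (-(k : ZMod q) * (r : ZMod q)) = ((-(k * r : ℕ) : ℤ) : ZMod q) := by push_cast; ring
  rw [AddChar.mulShift_apply, AddChar.mulShift_apply, e1, e2, ZMod.stdAddChar_apply,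
    ZMod.stdAddChar_apply, ZMod.toCircle_natCast, ZMod.toCircle_intCast, Complex.ofReal_cos,
    Complex.cos]
  push_cast
  rw [show 2 * (π : ℂ) * k * (r / q) * Complex.I = 2 * π * Complex.I * (k * r) / q by ring,
    show -(2 * (π : ℂ) * k * (r / q)) * Complex.I = 2 * π * Complex.I * -(k * r) / q by ring]
  ring

lemma hurwitzZetaEven_one_sub_even (a : UnitAddCircle) (M : ℕ) :
    HurwitzZeta.hurwitzZetaEven a (1 - 2 * (M + 1 : ℕ)) =
      2 * (2 * π) ^ (-(2 * (M + 1 : ℕ) : ℤ)) * (2 * M + 1).factorial * (-1) ^ (M + 1) *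
        HurwitzZeta.cosZeta a (2 * (M + 1 : ℕ)) := by
  rw [HurwitzZeta.hurwitzZetaEven_one_sub, mul_assoc (2 * _) (Complex.Gamma _), Gamma_mul_cos,
    ← Complex.cpow_intCast]
  · push_cast
    ring_nf
  · intro n h
    have h1 : ((2 * (M + 1) : ℤ) : ℂ) = ((-n : ℤ) : ℂ) := by push_cast; push_cast at h; exact h
    have h2 : (2 * (M + 1) : ℤ) = -n := by exact_mod_cast h1
    omega
  · right
    intro h
    have h1 : 2 * (M + 1) = 1 := by exact_mod_cast h
    omega

lemma LFunction_one_sub_even {q : ℕ} [NeZero q] {χ : DirichletCharacter ℂ q} (hev : χ.Even)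
    (M : ℕ) :
    DirichletCharacter.LFunction χ (1 - 2 * (M + 1 : ℕ)) = (q : ℂ) ^ (2 * M + 1) *
      (2 * (2 * π) ^ (-(2 * (M + 1 : ℕ) : ℤ)) * (2 * M + 1).factorial * (-1) ^ (M + 1)) *
        ∑ r ∈ Finset.Icc 1 q, χ (r : ZMod q) *
          HurwitzZeta.cosZeta ((r / q : ℝ) : UnitAddCircle) (2 * (M + 1 : ℕ)) := by
  rw [DirichletCharacter.LFunction, ZMod.LFunction_def_even hev.to_fun,
    ← sum_Icc_natCast_eq_sum_zmod, mul_assoc, Finset.mul_sum _ _ (_ * _)]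
  congr 1
  · rw [show (-(1 - 2 * ((M + 1 : ℕ) : ℂ))) = ((2 * M + 1 : ℕ) : ℂ) by push_cast; ring,
      Complex.cpow_natCast]
  · refine Finset.sum_congr rfl fun r _ => ?_
    rw [ZMod.toAddCircle_natCast, hurwitzZetaEven_one_sub_even]
    ring

lemma summable_planck_node_rot (H : ℕ) {A : ℝ} (hA : 0 < A) (e : ℤ) {j : ℤ}
    (hj : j ∈ Finset.Icc (-(H : ℤ)) H) :
    Summable fun k : ℕ =>
      ((k : ℂ) + 1) ^ e * (Complex.exp (2 * π * node H A k * rot H j) - 1)⁻¹ := by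
  set c := (rot H j).re
  have hc : 0 < c := re_rot_pos hj
  set P := e.natAbs + 2
  refine Summable.of_norm_bounded (summable_one_div_succ_sq.mul_left
    (((2 * H + 1) * P).factorial / ((2 * π * c) ^ ((2 * H + 1) * P)) * (A / (2 * π)) ^ P))
    fun k => ?_
  have hk : (1 : ℝ) ≤ (k : ℝ) + 1 := by linarith [(Nat.cast_nonneg k : (0 : ℝ) ≤ k)]
  have hre : (2 * π * node H A k * rot H j : ℂ).re = 2 * π * c * node H A k := by
    rw [show (2 * π * node H A k : ℂ) = ((2 * π * node H A k : ℝ) : ℂ) by push_cast; ring,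
      Complex.re_ofReal_mul]
    ring
  have hb := node_pos H hA k
  have h1 := norm_inv_exp_sub_one_le (z := 2 * π * node H A k * rot H j)
    (by rw [hre]; positivity) (p := (2 * H + 1) * P) (by positivity)
  rw [hre, mul_pow, pow_mul (node H A k), node_pow H hA] at h1
  have h2 : ‖((k : ℂ) + 1) ^ e‖ ≤ ((k : ℝ) + 1) ^ e.natAbs := by
    rw [norm_zpow, show ((k : ℂ) + 1) = ((k + 1 : ℝ) : ℂ) by push_cast; ring, Complex.norm_real,
      Real.norm_of_nonneg (by positivity), ← zpow_natCast]
    exact zpow_le_zpow_right₀ hk (Int.le_natAbs)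
  rw [norm_mul]
  refine (mul_le_mul h2 h1 (norm_nonneg _) (by positivity)).trans_eq ?_
  rw [div_pow _ A, mul_pow _ ((k : ℝ) + 1), div_pow, show ((k : ℝ) + 1) ^ P =
    ((k : ℝ) + 1) ^ e.natAbs * ((k : ℝ) + 1) ^ 2 from pow_add _ _ _]
  field_simp

lemma sum_mul_planckCos {q : ℕ} [NeZero q] {χ : DirichletCharacter ℂ q} (hprim : χ.IsPrimitive)
    (hev : χ.Even) (H : ℕ) {A : ℝ} (hA : 0 < A) (m : ℤ) :
    ∑ r ∈ Finset.Icc 1 q, χ (r : ZMod q) * planckCos H A m (r / q) =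
      gaussSum' χ * ∑ j ∈ Finset.Icc (-(H : ℤ)) H, (-1 : ℂ) ^ j *
        ∑' n : ℕ, conjChar χ ((n + 1 : ℕ) : ZMod q) / (((n : ℂ) + 1) ^ (2 * m + 1) *
          (Complex.exp (2 * π * node H A n * rot H j) - 1)) := by
  have h1 := hasSum_sum (s := Finset.Icc 1 q) fun (r : ℕ) _ =>
    (hasSum_planckCos H hA m (r / q)).mul_left (χ (r : ZMod q))
  have hS : ∀ j ∈ Finset.Icc (-(H : ℤ)) H, Summable fun n : ℕ =>
      conjChar χ ((n + 1 : ℕ) : ZMod q) / (((n : ℂ) + 1) ^ (2 * m + 1) *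
        (Complex.exp (2 * π * node H A n * rot H j) - 1)) := by
    intro j hj
    refine Summable.of_norm_bounded (summable_planck_node_rot H hA (-(2 * m + 1)) hj).norm
      fun n => ?_
    rw [norm_div, norm_mul, norm_mul, norm_inv, zpow_neg, norm_inv, ← mul_inv, div_eq_mul_inv]
    exact mul_le_of_le_one_left (by positivity) (DirichletCharacter.norm_le_one _ _)
  have h2 := hasSum_sum fun j hj => (hS j hj).hasSum.mul_left ((-1 : ℂ) ^ j)
  refine h1.unique ((hasSum_congr_fun fun n => ?_).mpr (h2.mul_left (gaussSum' χ)))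
  have h3 := sum_mul_cos hprim hev (n + 1)
  push_cast at h3
  simp only [← mul_assoc]
  rw [← Finset.sum_mul, ← Finset.sum_mul]
  push_cast
  rw [h3, planckSum, Finset.mul_sum, Finset.mul_sum]
  refine Finset.sum_congr rfl fun j _ => ?_
  rw [zpow_neg]
  simp only [div_eq_mul_inv, mul_inv]
  ring

lemma two_pi_mul_node (H : ℕ) {α β : ℝ} (hα : 0 < α) (hβ : 0 < β)
    (hαβ : α * β ^ (2 * H + 1) = π ^ (2 * H + 1 + 1)) (k : ℕ) :
    2 * π * node H (2 ^ (2 * H + 1) * α) k =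
      (2 * ((k : ℝ) + 1)) ^ ((1 : ℝ) / (2 * H + 1 : ℕ)) * β := by
  have hA : 0 < 2 ^ (2 * H + 1) * α := by positivity
  have hn := node_pos H hA k
  refine (pow_left_inj₀ (by positivity) (by positivity) (by omega : 2 * H + 1 ≠ 0)).mp ?_
  rw [mul_pow, mul_pow, mul_pow _ β, node_pow H hA, one_div,
    Real.rpow_inv_natCast_pow (by positivity) (by omega)]
  have : β ^ (2 * H + 1) = π ^ (2 * H + 1 + 1) / α := by rw [← hαβ]; field_simp
  rw [this]
  field_simp
  ring

lemma tsum_eq_mul_halfKerSum (H : ℕ) (α : ℝ) (m : ℤ) (c : ℂ) (r q : ℕ) :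
    ∑' n : ℕ, c * Complex.exp (-((r : ℂ) / q) * (2 * ((n : ℂ) + 1)) ^ (2 * H + 1) * α) /
        (((n : ℂ) + 1) ^ (2 * ((2 * H + 1 : ℕ) : ℤ) * m + 1) *
          (1 - Complex.exp (-(2 * ((n : ℂ) + 1)) ^ (2 * H + 1) * α))) =
      c * (halfKerSum H (2 ^ (2 * H + 1) * α) (-(2 * (2 * H + 1) * m + 1)) (r / q) : ℂ) := by
  rw [halfKerSum, Complex.ofReal_tsum, ← tsum_mul_left]
  refine tsum_congr fun n => ?_
  rw [zpow_neg]
  push_cast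
  rw [show -((r : ℂ) / q) * (2 * ((n : ℂ) + 1)) ^ (2 * H + 1) * α =
    -((r : ℂ) / q * (2 ^ (2 * H + 1) * α * ((n : ℂ) + 1) ^ (2 * H + 1))) by rw [mul_pow]; ring,
    show -(2 * ((n : ℂ) + 1)) ^ (2 * H + 1) * α =
    -(2 ^ (2 * H + 1) * α * ((n : ℂ) + 1) ^ (2 * H + 1)) by rw [mul_pow]; ring]
  simp only [div_eq_mul_inv, mul_inv]
  ring

lemma riemannZeta_two_mul_int (a : ℤ) :
    riemannZeta (2 * a) =
      (-1) ^ (a + 1) * 2 ^ (2 * a - 1) * π ^ (2 * a) * ((bernOverFact (2 * a) : ℚ) : ℂ) := by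
  rcases lt_or_ge a 0 with h | h
  · obtain ⟨n, rfl⟩ : ∃ n : ℕ, a = -(n + 1 : ℕ) := ⟨(-a - 1).toNat, by omega⟩
    rw [bernOverFact, if_neg (by omega)]
    have := riemannZeta_neg_two_mul_nat_add_one n
    push_cast
    rw [show (2 * -((n : ℂ) + 1)) = -2 * (n + 1) by ring, this]
    simp
  · obtain ⟨n, rfl⟩ : ∃ n : ℕ, a = n := ⟨a.toNat, by omega⟩
    have hb : bernOverFact (2 * (n : ℤ)) = bernoulli (2 * n) / (2 * n).factorial := by
      rw [bernOverFact, if_pos (by omega), show (2 * (n : ℤ)).toNat = 2 * n by omega]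
    rw [hb]
    push_cast
    rw [riemannZeta_two_mul_nat',
      show ((n : ℤ) + 1) = ((n + 1 : ℕ) : ℤ) by push_cast; rfl, zpow_natCast,
      show (π : ℂ) ^ (2 * (n : ℤ)) = (π : ℂ) ^ (2 * n) by norm_cast]
    ring

lemma alpha_zpow_mul_pi_zpow (H : ℕ) {α β : ℝ} (hα : 0 < α) (hβ : 0 < β)
    (hαβ : α * β ^ (2 * H + 1) = π ^ (2 * H + 1 + 1)) (m j : ℤ) :
    α ^ (2 * j - 1) * π ^ (2 * ((2 * H + 1) * (m - j) + H + 1)) =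
      α ^ ((2 * ((2 * H + 1 : ℕ) : ℝ) * m) / ((2 * H + 1 : ℕ) + 1)) *
        (α ^ ((2 * (j : ℝ)) / ((2 * H + 1 : ℕ) + 1)) *
          β ^ (((2 * H + 1 : ℕ) : ℝ) + 2 * ((2 * H + 1 : ℕ) : ℝ) ^ 2 * ((m : ℝ) - j) /
            ((2 * H + 1 : ℕ) + 1))) := by
  have hlog := congrArg Real.log hαβ
  rw [Real.log_mul hα.ne' (by positivity), Real.log_pow, Real.log_pow] at hlog
  rw [← Real.rpow_intCast, ← Real.rpow_intCast]
  simp only [Real.rpow_def_of_pos hα, Real.rpow_def_of_pos hβ, Real.rpow_def_of_pos Real.pi_pos,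
    ← Real.exp_add]
  congr 1
  push_cast at hlog ⊢
  have h0 : (2 * (H : ℝ) + 1 + 1) ≠ 0 := by positivity
  have h1 : Real.log π = (Real.log α + (2 * H + 1) * Real.log β) / (2 * H + 1 + 1) := by
    rw [hlog]; field_simp
  rw [h1]
  field_simp
  ring

lemma alpha_div_pi_zpow (H : ℕ) {α β : ℝ} (hα : 0 < α) (hβ : 0 < β)
    (hαβ : α * β ^ (2 * H + 1) = π ^ (2 * H + 1 + 1)) (m : ℤ) :
    (2 ^ (2 * H + 1) * α / (2 * π)) ^ (2 * m) =
      2 ^ (2 * m * (((2 * H + 1 : ℕ) : ℤ) - 1)) *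
      (α ^ ((2 * ((2 * H + 1 : ℕ) : ℝ) * m) / ((2 * H + 1 : ℕ) + 1)) *
        β ^ (-(2 * ((2 * H + 1 : ℕ) : ℝ) * m) / ((2 * H + 1 : ℕ) + 1))) := by
  have hlog := congrArg Real.log hαβ
  rw [Real.log_mul hα.ne' (by positivity), Real.log_pow, Real.log_pow] at hlog
  rw [show (2 : ℝ) ^ (2 * H + 1) * α / (2 * π) = 2 ^ (2 * H) * (α / π) by rw [pow_succ]; field_simp,
    mul_zpow, ← zpow_natCast, ← zpow_mul]
  congr 1
  · congr 1
    push_cast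
    ring
  rw [← Real.rpow_intCast, Real.div_rpow hα.le Real.pi_pos.le]
  simp only [Real.rpow_def_of_pos hα, Real.rpow_def_of_pos hβ, Real.rpow_def_of_pos Real.pi_pos,
    ← Real.exp_add, ← Real.exp_sub]
  congr 1
  push_cast at hlog ⊢
  have h1 : Real.log π = (Real.log α + (2 * H + 1) * Real.log β) / (2 * H + 1 + 1) := by
    rw [hlog]; field_simp
  rw [h1]
  field_simp
  ring

lemma zpow_mul_riemannZeta (H : ℕ) {α β : ℝ} (hα : 0 < α) (hβ : 0 < β)
    (hαβ : α * β ^ (2 * H + 1) = π ^ (2 * H + 1 + 1)) (m j : ℤ) :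
    ((2 ^ (2 * H + 1) * α : ℝ) : ℂ) ^ (2 * j - 1) *
        riemannZeta (2 * (2 * H + 1) * (m - j) + (2 * H + 1) + 1) =
      (-1) ^ (m + j + H) * 2 ^ (2 * ((2 * H + 1 : ℕ) : ℤ) * m) *
        ((bernOverFact (2 * ((2 * H + 1 : ℕ) : ℤ) * (m - j) + (2 * H + 1 : ℕ) + 1) : ℚ) : ℂ) *
        ((α ^ ((2 * ((2 * H + 1 : ℕ) : ℝ) * m) / ((2 * H + 1 : ℕ) + 1)) : ℝ) *
          ((α ^ ((2 * (j : ℝ)) / ((2 * H + 1 : ℕ) + 1)) : ℝ) *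
            (β ^ (((2 * H + 1 : ℕ) : ℝ) + 2 * ((2 * H + 1 : ℕ) : ℝ) ^ 2 * ((m : ℝ) - j) /
            ((2 * H + 1 : ℕ) + 1)) : ℝ) : ℂ)) := by
  have hp := congrArg ((↑) : ℝ → ℂ) (alpha_zpow_mul_pi_zpow H hα hβ hαβ m j)
  rw [Complex.ofReal_mul (_ ^ _ : ℝ), Complex.ofReal_mul (_ ^ _ : ℝ),
    Complex.ofReal_mul (_ ^ _ : ℝ)] at hp
  rw [← hp]
  set a : ℤ := (2 * H + 1) * (m - j) + H + 1 with ha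
  have hz := riemannZeta_two_mul_int a
  rw [show 2 * ((2 * H + 1 : ℕ) : ℤ) * (m - j) + (2 * H + 1 : ℕ) + 1 = 2 * a by
    rw [ha]; push_cast; ring,
    show (2 * (2 * (H : ℂ) + 1) * (m - j) + (2 * H + 1) + 1) = 2 * (a : ℂ) by
    rw [ha]; push_cast; ring, hz]
  have hs : (-1 : ℂ) ^ (a + 1) = (-1) ^ (m + j + H) := by
    rw [show a + 1 = (m + j + H) + 2 * (H * (m - j) + 1 - j) by rw [ha]; ring,
      zpow_add₀ (by norm_num), zpow_mul (-1 : ℂ) 2]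
    norm_num
  have h2 : (2 : ℂ) ^ (2 * ((2 * H + 1 : ℕ) : ℤ) * m) =
      2 ^ ((2 * H + 1 : ℕ) * (2 * j - 1) : ℤ) * 2 ^ (2 * a - 1) := by
    rw [← zpow_add₀ two_ne_zero]
    congr 1
    rw [ha]; push_cast; ring
  rw [hs, h2]
  push_cast
  rw [mul_zpow, ← zpow_natCast, ← zpow_mul]
  push_cast
  ring

lemma sum_char_eq {q : ℕ} [NeZero q] {χ : DirichletCharacter ℂ q} (hprim : χ.IsPrimitive)
    (hev : χ.Even) :
    ∑ r ∈ Finset.Icc 1 q, χ (r : ZMod q) = if q = 1 then 1 else 0 := by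
  split_ifs with h
  · subst h
    rw [Finset.Icc_self, Finset.sum_singleton, Nat.cast_one, map_one]
  · have h1 := sum_mul_cos hprim hev 0
    have : Nontrivial (ZMod q) := ZMod.nontrivial_iff.mpr h
    simpa [MulChar.map_zero] using h1

/-- The contribution of the index `j` to the polynomial part of the transformation formula. -/
noncomputable def bernTerm {q : ℕ} [NeZero q] (χ : DirichletCharacter ℂ q) (N : ℕ) (α β : ℝ) (m j : ℤ) : ℂ :=
  ((-1 : ℂ) ^ (j + 1) / (q : ℂ) ^ (2 * j - 1)) *
    (DirichletCharacter.LFunction χ (1 - 2 * (j : ℂ)) / (Nat.factorial (2 * j - 1).toNat : ℂ)) *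
    ((bernOverFact (2 * (N : ℤ) * (m - j) + N + 1) : ℚ) : ℂ) *
    ((α ^ ((2 * (j : ℝ)) / (N + 1)) : ℝ) : ℂ) *
    ((β ^ ((N : ℝ) + 2 * (N : ℝ) ^ 2 * ((m : ℝ) - j) / (N + 1)) : ℝ) : ℂ)

lemma residual_term_eq {q : ℕ} [NeZero q] {χ : DirichletCharacter ℂ q} (hev : χ.Even) (H : ℕ)
    {α β : ℝ} (hα : 0 < α) (hβ : 0 < β)
    (hαβ : α * β ^ (2 * H + 1) = π ^ (2 * H + 1 + 1)) (m : ℤ) (M : ℕ) :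
    2 * (-1) ^ (M + 1 + 1) * ((2 ^ (2 * H + 1) * α : ℝ) : ℂ) ^ (2 * ((M + 1 : ℕ) : ℤ) - 1) /
        (2 * π) ^ (2 * (M + 1)) *
        riemannZeta (2 * (2 * H + 1) * (m - (M + 1 : ℕ)) + (2 * H + 1) + 1) *
        ∑ r ∈ Finset.Icc 1 q, χ (r : ZMod q) *
          HurwitzZeta.cosZeta ((r / q : ℝ) : UnitAddCircle) (2 * (M + 1 : ℕ)) =
      (α ^ ((2 * ((2 * H + 1 : ℕ) : ℝ) * m) / ((2 * H + 1 : ℕ) + 1)) : ℝ) *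
        ((-1) ^ (m + H) * 2 ^ (2 * ((2 * H + 1 : ℕ) : ℤ) * m) *
          bernTerm χ (2 * H + 1) α β m (M + 1 : ℕ)) := by
  have hz := zpow_mul_riemannZeta H hα hβ hαβ m (M + 1 : ℕ)
  have hL := LFunction_one_sub_even hev M
  have hq : (q : ℂ) ≠ 0 := by exact_mod_cast NeZero.ne q
  have hf : ((2 * M + 1).factorial : ℂ) ≠ 0 := by exact_mod_cast Nat.factorial_ne_zero _
  have hpi : (π : ℂ) ≠ 0 := by exact_mod_cast Real.pi_ne_zero
  rw [bernTerm, show (2 * ((M + 1 : ℕ) : ℤ) - 1).toNat = 2 * M + 1 by omega]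
  rw [Int.cast_natCast, Int.cast_natCast] at hz
  rw [Int.cast_natCast, Int.cast_natCast, hL]
  set T := ∑ r ∈ Finset.Icc 1 q, χ (r : ZMod q) *
    HurwitzZeta.cosZeta ((r / q : ℝ) : UnitAddCircle) (2 * (M + 1 : ℕ))
  set Z := riemannZeta (2 * (2 * H + 1) * (m - (M + 1 : ℕ)) + (2 * H + 1) + 1)
  set P := ((2 ^ (2 * H + 1) * α : ℝ) : ℂ) ^ (2 * ((M + 1 : ℕ) : ℤ) - 1)
  rw [show 2 * (-1) ^ (M + 1 + 1) * P / (2 * π) ^ (2 * (M + 1)) * Z * T =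
    2 * (-1) ^ (M + 1 + 1) / (2 * π) ^ (2 * (M + 1)) * T * (P * Z) by ring, hz]
  rw [show (2 * ((M + 1 : ℕ) : ℤ) - 1) = ((2 * M + 1 : ℕ) : ℤ) by push_cast; ring,
    show m + ((M + 1 : ℕ) : ℤ) + H = (m + H) + ((M + 1 : ℕ) : ℤ) by ring,
    show (-(2 * ((M + 1 : ℕ) : ℤ))) = -((2 * (M + 1) : ℕ) : ℤ) by push_cast; ring,
    zpow_add₀ (by norm_num : (-1 : ℂ) ≠ 0) (m + H),
    show ((M + 1 : ℕ) : ℤ) + 1 = ((M + 1 + 1 : ℕ) : ℤ) by push_cast; ring, zpow_neg]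
  simp only [zpow_natCast]
  field_simp

lemma half_sum_mul_residualSum {q : ℕ} [NeZero q] {χ : DirichletCharacter ℂ q}
    (hprim : χ.IsPrimitive) (hev : χ.Even) (H : ℕ) {α β : ℝ} (hα : 0 < α) (hβ : 0 < β)
    (hαβ : α * β ^ (2 * H + 1) = π ^ (2 * H + 1 + 1)) (m : ℤ) (L : ℕ) :
    1 / 2 * ∑ r ∈ Finset.Icc 1 q, χ (r : ZMod q) *
        residualSum H (2 ^ (2 * H + 1) * α) m (L + 1) (r / q) =
      (α ^ ((2 * ((2 * H + 1 : ℕ) : ℝ) * m) / ((2 * H + 1 : ℕ) + 1)) : ℝ) *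
        ((-1) ^ (m + H) * 2 ^ (2 * ((2 * H + 1 : ℕ) : ℤ) * m) *
            ∑ M ∈ Finset.range L, bernTerm χ (2 * H + 1) α β m (M + 1 : ℕ) +
          if q = 1 then (-1) ^ (m + H) * 2 ^ (2 * ((2 * H + 1 : ℕ) : ℤ) * m) *
            ((bernOverFact (2 * ((2 * H + 1 : ℕ) : ℤ) * m + (2 * H + 1 : ℕ) + 1) : ℚ) : ℂ) *
            ((β ^ (((2 * H + 1 : ℕ) : ℝ) + 2 * ((2 * H + 1 : ℕ) : ℝ) ^ 2 * (m : ℝ) /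
              ((2 * H + 1 : ℕ) + 1)) : ℝ) : ℂ) else 0) := by
  have h1 : 1 / 2 * ∑ r ∈ Finset.Icc 1 q, χ (r : ZMod q) *
        residualSum H (2 ^ (2 * H + 1) * α) m (L + 1) (r / q) =
      ∑ j ∈ Finset.range (L + 1), 2 * (-1) ^ (j + 1) *
        ((2 ^ (2 * H + 1) * α : ℝ) : ℂ) ^ (2 * (j : ℤ) - 1) / (2 * π) ^ (2 * j) *
        riemannZeta (2 * (2 * H + 1) * (m - j) + (2 * H + 1) + 1) *
        ∑ r ∈ Finset.Icc 1 q, χ (r : ZMod q) *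
          HurwitzZeta.cosZeta ((r / q : ℝ) : UnitAddCircle) (2 * j) := by
    simp only [residualSum, Finset.mul_sum]
    rw [Finset.sum_comm]
    refine Finset.sum_congr rfl fun j _ => Finset.sum_congr rfl fun r _ => ?_
    ring
  rw [h1, Finset.sum_range_succ', Finset.sum_congr rfl fun M _ =>
    residual_term_eq hev H hα hβ hαβ m M, ← Finset.mul_sum, ← Finset.mul_sum,
    mul_add (Complex.ofReal _)]
  congr 1
  · have hz := zpow_mul_riemannZeta H hα hβ hαβ m 0
    have h2 : ∑ r ∈ Finset.Icc 1 q, χ (r : ZMod q) *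
        HurwitzZeta.cosZeta ((r / q : ℝ) : UnitAddCircle) (2 * (0 : ℕ)) =
        -1 / 2 * if q = 1 then 1 else 0 := by
      rw [← sum_char_eq hprim hev, Finset.mul_sum]
      refine Finset.sum_congr rfl fun r _ => ?_
      rw [Nat.cast_zero, mul_zero, HurwitzZeta.cosZeta_apply_zero, mul_comm]
    rw [h2]
    split_ifs with hq
    · simp only [Int.cast_zero, sub_zero, mul_zero, zero_div, Real.rpow_zero, Complex.ofReal_one,
        one_mul, add_zero] at hz
      simp only [Nat.cast_zero, mul_zero, sub_zero, pow_zero, zero_add, pow_one,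
        div_one, mul_one]
      linear_combination hz
    · simp

lemma sum_Icc_floor_bernTerm {q : ℕ} [NeZero q] (χ : DirichletCharacter ℂ q) (H : ℕ) (α β : ℝ) (m : ℤ)
    {L : ℕ} (hL : m + 1 ≤ L) :
    ∑ j ∈ Finset.Icc (1 : ℤ) ⌊(m : ℝ) + (((2 * H + 1 : ℕ) : ℝ) + 1) / (2 * (2 * H + 1 : ℕ))⌋,
        bernTerm χ (2 * H + 1) α β m j =
      ∑ M ∈ Finset.range L, bernTerm χ (2 * H + 1) α β m (M + 1 : ℕ) := by
  have h1 : ∑ M ∈ Finset.range L, bernTerm χ (2 * H + 1) α β m (M + 1 : ℕ) =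
      ∑ j ∈ Finset.Icc (1 : ℤ) L, bernTerm χ (2 * H + 1) α β m j := by
    refine Finset.sum_nbij' (fun M => ((M + 1 : ℕ) : ℤ)) (fun j => (j - 1).toNat) ?_ ?_ ?_ ?_ ?_
    · intro M hM
      rw [Finset.mem_range] at hM
      rw [Finset.mem_Icc]
      omega
    · intro j hj
      rw [Finset.mem_Icc] at hj
      rw [Finset.mem_range]
      omega
    · intro M _
      simp
    · intro j hj
      rw [Finset.mem_Icc] at hj
      omega
    · intro M _
      rfl
  have hN : (0 : ℝ) < 2 * ((2 * H + 1 : ℕ) : ℝ) := by positivity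
  rw [h1]
  refine Finset.sum_subset (Finset.Icc_subset_Icc_right ?_) fun j _ hj' => ?_
  · refine le_trans (Int.lt_add_one_iff.mp (Int.floor_lt.mpr ?_)) hL
    have : (((2 * H + 1 : ℕ) : ℝ) + 1) / (2 * (2 * H + 1 : ℕ)) < 2 := by
      rw [div_lt_iff₀ hN]
      push_cast
      linarith [(Nat.cast_nonneg H : (0 : ℝ) ≤ H)]
    push_cast at this ⊢
    linarith
  · have hj : ⌊(m : ℝ) + (((2 * H + 1 : ℕ) : ℝ) + 1) / (2 * (2 * H + 1 : ℕ))⌋ < j := by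
      by_contra! h
      rename_i hj0
      exact hj' (Finset.mem_Icc.mpr ⟨(Finset.mem_Icc.mp hj0).1, h⟩)
    rw [Int.floor_lt, ← lt_sub_iff_add_lt', div_lt_iff₀ hN] at hj
    have hneg : 2 * ((2 * H + 1 : ℕ) : ℤ) * (m - j) + (2 * H + 1 : ℕ) + 1 < 0 := by
      have : (2 * ((2 * H + 1 : ℕ) : ℝ) * (m - j) + (2 * H + 1 : ℕ) + 1) < 0 := by linarith
      exact_mod_cast this
    rw [bernTerm, bernOverFact, if_neg (by omega)]
    simp

lemma half_sum_mul_transformed {q : ℕ} [NeZero q] {χ : DirichletCharacter ℂ q}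
    (hprim : χ.IsPrimitive) (hev : χ.Even) (H : ℕ) {A : ℝ} (hA : 0 < A) {m : ℤ} (hm : m ≠ 0)
    (K : ℕ) :
    1 / 2 * ∑ r ∈ Finset.Icc 1 q, χ (r : ZMod q) * transformed H A m K (r / q) =
      (-1) ^ m / (2 * H + 1) * (A / (2 * π)) ^ (2 * m) *
          (q / (2 * gaussSum' (conjChar χ)) *
            DirichletCharacter.LFunction (conjChar χ) (2 * m + 1) +
          (-1) ^ H * gaussSum' χ * ∑ j ∈ Finset.Icc (-(H : ℤ)) H, (-1 : ℂ) ^ j *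
            ∑' n : ℕ, conjChar χ ((n + 1 : ℕ) : ZMod q) / (((n : ℂ) + 1) ^ (2 * m + 1) *
              (Complex.exp (2 * π * node H A n * rot H j) - 1))) +
        1 / 2 * ∑ r ∈ Finset.Icc 1 q, χ (r : ZMod q) * residualSum H A m K (r / q) := by
  have hG := gaussSum'_mul_gaussSum'_conjChar hprim hev
  have hq : (q : ℂ) ≠ 0 := by exact_mod_cast NeZero.ne q
  have hG0 : gaussSum' (conjChar χ) ≠ 0 := right_ne_zero_of_mul (hG.trans_ne hq)
  have h1 : (q : ℂ) / (2 * gaussSum' (conjChar χ)) = 1 / 2 * gaussSum' χ := by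
    rw [← hG]; field_simp
  have h2 := sum_mul_cosZeta hprim hev (s := 2 * m + 1)
    (by rw [Ne, add_eq_right]; simpa using hm)
  have h3 := sum_mul_planckCos hprim hev H hA m
  rw [h1, mul_assoc (1 / 2), ← h2, mul_assoc ((-1) ^ H), ← h3]
  simp only [transformed, Finset.mul_sum, mul_add, Finset.sum_add_distrib]
  refine congrArg₂ _ (congrArg₂ _ ?_ ?_) rfl <;>
  · refine Finset.sum_congr rfl fun r _ => ?_
    ring

end

theorem stmt1 (N : ℕ) (hN : Odd N) (hN1 : 1 ≤ N) (q : ℕ) [NeZero q] (hq : 1 ≤ q)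
    (χ : DirichletCharacter ℂ q) (hprim : χ.IsPrimitive) (hev : χ.Even)
    (α β : ℝ) (hα : 0 < α) (hβ : 0 < β) (hαβ : α * β ^ (N : ℕ) = Real.pi ^ (N + 1))
    (m : ℤ) (hm : m ≠ 0) :
    ((α ^ (-(2 * (N : ℝ) * m) / (N + 1)) : ℝ) : ℂ) *
      ((∑ r ∈ Finset.Icc 1 q, ∑' n : ℕ,
          χ (r : ZMod q) * Complex.exp (-((r : ℂ) / q) * (2 * ((n : ℂ) + 1)) ^ (N : ℕ) * α) /
            (((n : ℂ) + 1) ^ (2 * (N : ℤ) * m + 1) *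
              (1 - Complex.exp (-(2 * ((n : ℂ) + 1)) ^ (N : ℕ) * α))))
        - riemannZeta (2 * (N : ℂ) * m + 1) * DirichletCharacter.LFunction χ 0)
    = ((-1 : ℂ) ^ m * ((β ^ (-(2 * (N : ℝ) * m) / (N + 1)) : ℝ) : ℂ) *
          (2 : ℂ) ^ (2 * m * ((N : ℤ) - 1)) / N) *
        ((q / (2 * gaussSum' (conjChar χ))) *
            DirichletCharacter.LFunction (conjChar χ) (2 * (m : ℂ) + 1)
          + (-1 : ℂ) ^ ((N + 3) / 2 : ℕ) * gaussSum' χ *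
              ∑ j ∈ Finset.Icc (-(((N : ℤ) - 1) / 2)) (((N : ℤ) - 1) / 2), (-1 : ℂ) ^ j *
                ∑' n : ℕ, (starRingEnd ℂ) (χ ((n + 1 : ℕ) : ZMod q)) /
                  (((n : ℂ) + 1) ^ (2 * m + 1) *
                    (Complex.exp ((((2 * ((n : ℝ) + 1)) ^ ((1 : ℝ) / N) : ℝ) : ℂ) * β *
                      Complex.exp (-(Real.pi * Complex.I * j) / N)) - 1)))
      + (-1 : ℂ) ^ (m + (((N + 3) / 2 : ℕ) : ℤ)) * (2 : ℂ) ^ (2 * (N : ℤ) * m) *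
          ∑ j ∈ Finset.Icc (1 : ℤ) ⌊(m : ℝ) + ((N : ℝ) + 1) / (2 * N)⌋,
            ((-1 : ℂ) ^ (j + 1) / (q : ℂ) ^ (2 * j - 1)) *
              (DirichletCharacter.LFunction χ (1 - 2 * (j : ℂ)) /
                (Nat.factorial (2 * j - 1).toNat : ℂ)) *
              ((bernOverFact (2 * (N : ℤ) * (m - j) + N + 1) : ℚ) : ℂ) *
              ((α ^ ((2 * (j : ℝ)) / (N + 1)) : ℝ) : ℂ) *
              ((β ^ ((N : ℝ) + 2 * (N : ℝ) ^ 2 * ((m : ℝ) - j) / (N + 1)) : ℝ) : ℂ)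
      + (if q = 1 then
          (-1 : ℂ) ^ (m + (((N + 3) / 2 : ℕ) : ℤ)) * (2 : ℂ) ^ (2 * (N : ℤ) * m) *
            ((bernOverFact (2 * (N : ℤ) * m + N + 1) : ℚ) : ℂ) *
            ((β ^ ((N : ℝ) + 2 * (N : ℝ) ^ 2 * (m : ℝ) / (N + 1)) : ℝ) : ℂ)
        else 0) := by
  obtain ⟨H, rfl⟩ := hN
  have hA : 0 < 2 ^ (2 * H + 1) * α := by positivity
  have hL : m + 1 ≤ ((m + 1).toNat : ℤ) := Int.self_le_toNat _
  have hc : (2 * (H : ℂ) + 1) = ((2 * H + 1 : ℕ) : ℂ) := by push_cast; rfl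
  have hs : (-1 : ℂ) ^ ((2 * H + 1 + 3) / 2 : ℕ) = (-1) ^ H := by
    rw [show (2 * H + 1 + 3) / 2 = H + 2 by omega, pow_add]
    norm_num
  have hs' : (-1 : ℂ) ^ (m + (((2 * H + 1 + 3) / 2 : ℕ) : ℤ)) = (-1) ^ (m + H) := by
    rw [zpow_add₀ (by norm_num), zpow_add₀ (by norm_num), zpow_natCast, zpow_natCast, hs]
  have hI : (((2 * H + 1 : ℕ) : ℤ) - 1) / 2 = H := by omega
  have hpow : (((2 ^ (2 * H + 1) * α : ℝ) : ℂ) / (2 * Real.pi)) ^ (2 * m) =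
      2 ^ (2 * m * (((2 * H + 1 : ℕ) : ℤ) - 1)) *
      (((α ^ ((2 * ((2 * H + 1 : ℕ) : ℝ) * m) / ((2 * H + 1 : ℕ) + 1)) : ℝ) : ℂ) *
        ((β ^ (-(2 * ((2 * H + 1 : ℕ) : ℝ) * m) / ((2 * H + 1 : ℕ) + 1)) : ℝ) : ℂ)) := by
    have := congrArg ((↑) : ℝ → ℂ) (alpha_div_pi_zpow H hα hβ hαβ m)
    rwa [Complex.ofReal_mul (_ ^ (_ : ℤ)), Complex.ofReal_mul (_ ^ (_ : ℝ)), Complex.ofReal_zpow,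
      Complex.ofReal_div, Complex.ofReal_zpow, Complex.ofReal_mul 2, Complex.ofReal_ofNat] at this
  have hα1 : ((α ^ (-(2 * ((2 * H + 1 : ℕ) : ℝ) * m) / ((2 * H + 1 : ℕ) + 1)) : ℝ) : ℂ) *
      ((α ^ ((2 * ((2 * H + 1 : ℕ) : ℝ) * m) / ((2 * H + 1 : ℕ) + 1)) : ℝ) : ℂ) = 1 := by
    rw [← Complex.ofReal_mul, ← Real.rpow_add hα, neg_div, neg_add_cancel, Real.rpow_zero,
      Complex.ofReal_one]
  have key := sum_mul_halfKerSum_sub_zeta H hA hm (K := (m + 1).toNat + 1)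
    (by push_cast; linarith) hev
  rw [half_sum_mul_transformed hprim hev H hA hm, half_sum_mul_residualSum hprim hev H hα hβ hαβ,
    ← sum_Icc_floor_bernTerm χ H α β m hL] at key
  have hnode : ∀ (n : ℕ) (j : ℤ),
      2 * (Real.pi : ℂ) * node H (2 ^ (2 * H + 1) * α) n * rot H j =
      (((2 * ((n : ℝ) + 1)) ^ ((1 : ℝ) / (2 * H + 1 : ℕ)) : ℝ) : ℂ) * β *
        Complex.exp (-(Real.pi * Complex.I * j) / (2 * H + 1 : ℕ)) := by
    intro n j
    have := congrArg ((↑) : ℝ → ℂ) (two_pi_mul_node H hα hβ hαβ n)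
    rw [Complex.ofReal_mul _ β, Complex.ofReal_mul, Complex.ofReal_mul, Complex.ofReal_ofNat] at this
    rw [this, rot]
  have hconj : ∀ x, conjChar χ x = (starRingEnd ℂ) (χ x) := fun _ => rfl
  simp only [hnode, hconj, bernTerm, hc] at key
  simp only [tsum_eq_mul_halfKerSum, hI, hs, hs']
  rw [key, hpow]
  refine Eq.trans ?_ ((congrArg (· * _) hα1).trans (one_mul _))
  ring
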